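/- arXiv:2601.01853 — 2 statements merged into one kernel-verified Lean document; each statement's English description precedes it below -/
import Mathlib

section
/- Stability of iterates for AdaGrad-Norm: if in addition g is coercive (g(θ) → +∞ as ‖θ‖ → +∞), then sup_{n≥1} ‖θ_n‖ < +∞ almost surely. -/
open MeasureTheory Filter

/-! The Lyapunov function is `u = log (1 + g)`: along the gradient flow it decays at rate
`m = ‖∇ g‖ ^ 2 / (1 + g)`, and its gradient is small enough to tame a noise variance of order
`‖∇ g‖ ^ 2 + 1`.

The stepsize `W' = 1 / √(S (n + 1))` depends on the gradient estimate `ξ` that it multiplies. It is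
compared with the predictable `W = 1 / √(S n)`: since `0 ≤ W' ≤ W`, completing the square gives,
for `c = ⟪∇ u, ξ⟫` and any `κ > 0`, `W * (2 * c - κ⁻¹ * c ^ 2) ≤ 2 * c * W' + κ * (W - W')`. Affine
variance provides a `κ` with `E[c ^ 2 | ℱ] ≤ κ * E[c | ℱ]`, so the conditional mean of the left side
is at least `W * E[c | ℱ] = W * m`, at the price of a telescoping error `κ * (W - W')`.

Multiplying the descent inequality for `u` by the stepsize makes its curvature term telescope as
well, because `‖ξ‖ ^ 2 / S ^ (3 / 2)` does; this yields `∑ E[m (X n) / S n] < ∞`. Without that extra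
stepsize the curvature error is of order `‖ξ‖ ^ 2 / S`, which this sum controls wherever `‖∇ g‖` is
bounded below. The steps are bounded and `‖∇ g‖` is small only on a bounded set, so the remaining
region disappears on replacing `u` by a `C¹` version of `(u - C)⁺` with `C` large. The
Robbins–Siegmund argument then bounds `u (X n)` almost surely. -/

section SmoothFunctions

open scoped Gradient InnerProductSpace NNReal
open Bornology

variable {E : Type*} [NormedAddCommGroup E] [InnerProductSpace ℝ E] [CompleteSpace E]
  {g : E → ℝ} {K : ℝ≥0}

theorem le_add_inner_gradient_add_sq_of_lipschitzWith_gradient (hg : Differentiable ℝ g)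
    (hK : LipschitzWith K (∇ g)) (x v : E) :
    g (x + v) ≤ g x + ⟪∇ g x, v⟫_ℝ + K / 2 * ‖v‖ ^ 2 := by
  let ψ : ℝ → ℝ := fun t => g (x + t • v) - t * ⟪∇ g x, v⟫_ℝ - K / 2 * ‖v‖ ^ 2 * t ^ 2
  let ψ' : ℝ → ℝ := fun t => ⟪∇ g (x + t • v) - ∇ g x, v⟫_ℝ - K * ‖v‖ ^ 2 * t
  have hψ (t : ℝ) : HasDerivAt ψ (ψ' t) t := by
    have hline : HasDerivAt (fun s : ℝ => x + s • v) v t := by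
      simpa using ((hasDerivAt_id t).smul_const v).const_add x
    have hcomp := (hg (x + t • v)).hasFDerivAt.comp_hasDerivAt t hline
    rw [← inner_gradient_left] at hcomp
    refine ((hcomp.sub ((hasDerivAt_id t).mul_const ⟪∇ g x, v⟫_ℝ)).sub
      ((hasDerivAt_pow 2 t).const_mul (K / 2 * ‖v‖ ^ 2))).congr_deriv ?_
    simp only [ψ', inner_sub_left]
    ring
  have hψ'_nonpos {t : ℝ} (ht : 0 ≤ t) : ψ' t ≤ 0 := by
    refine sub_nonpos.2 ?_
    calc ⟪∇ g (x + t • v) - ∇ g x, v⟫_ℝ ≤ ‖∇ g (x + t • v) - ∇ g x‖ * ‖v‖ :=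
          real_inner_le_norm _ _
      _ ≤ K * ‖x + t • v - x‖ * ‖v‖ := by gcongr; exact hK.norm_sub_le _ _
      _ = K * ‖v‖ ^ 2 * t := by
          rw [add_sub_cancel_left, norm_smul, Real.norm_of_nonneg ht]; ring
  have hanti : AntitoneOn ψ (Set.Ici 0) :=
    antitoneOn_of_hasDerivWithinAt_nonpos (convex_Ici 0)
      (fun t _ => (hψ t).continuousAt.continuousWithinAt) (fun t _ => (hψ t).hasDerivWithinAt)
      fun t ht => hψ'_nonpos (interior_subset ht)
  have := hanti Set.self_mem_Ici (Set.mem_Ici.2 zero_le_one) zero_le_one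
  simp only [ψ, one_smul, zero_smul, add_zero] at this
  linarith

theorem sq_norm_gradient_le_of_lipschitzWith_gradient (hg : Differentiable ℝ g)
    (hK : LipschitzWith K (∇ g)) (hg0 : ∀ x, 0 ≤ g x) (x : E) :
    ‖∇ g x‖ ^ 2 ≤ 2 * K * g x := by
  obtain hgrad | hgrad := eq_or_ne (∇ g x) 0
  · have := hg0 x
    rw [hgrad, norm_zero, zero_pow two_ne_zero]
    positivity
  have hquad (t : ℝ) : 0 ≤ K / 2 * ‖∇ g x‖ ^ 2 * (t * t) + ‖∇ g x‖ ^ 2 * t + g x := by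
    have := le_add_inner_gradient_add_sq_of_lipschitzWith_gradient hg hK x (t • ∇ g x)
    rw [inner_smul_right, real_inner_self_eq_norm_sq, norm_smul, mul_pow, Real.norm_eq_abs,
      sq_abs] at this
    linarith [hg0 (x + t • ∇ g x)]
  have hdiscrim := discrim_le_zero hquad
  have hpos : 0 < ‖∇ g x‖ ^ 2 := by positivity
  refine le_of_mul_le_mul_left ?_ hpos
  rw [discrim] at hdiscrim
  linarith

/-- The Lyapunov function `log (1 + g)`; the logarithm compensates for the variance of the
stochastic gradients growing with `‖∇ g‖ ^ 2`. -/
noncomputable def logPotential {X : Type*} (g : X → ℝ) (x : X) : ℝ :=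
  Real.log (1 + g x)

theorem logPotential_nonneg {X : Type*} {g : X → ℝ} (hg0 : ∀ x, 0 ≤ g x) (x : X) :
    0 ≤ logPotential g x :=
  Real.log_nonneg (le_add_of_nonneg_right (hg0 x))

/-- The gradient of `logPotential g`. -/
noncomputable def logPotentialGradient (g : E → ℝ) (x : E) : E :=
  (1 + g x)⁻¹ • ∇ g x

/-- The decay rate `⟪∇ (log (1 + g)), ∇ g⟫` of `logPotential g` along the gradient flow of `g`. -/
noncomputable def logDissipation (g : E → ℝ) (x : E) : ℝ :=
  (1 + g x)⁻¹ * ‖∇ g x‖ ^ 2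

/-- The dissipation of `logPotential g` relative to the affine variance scale `‖∇ g‖ ^ 2 + 1`. -/
noncomputable def relDissipation (g : E → ℝ) (x : E) : ℝ :=
  logDissipation g x / (‖∇ g x‖ ^ 2 + 1)

theorem relDissipation_mul (g : E → ℝ) (x : E) :
    relDissipation g x * (‖∇ g x‖ ^ 2 + 1) = logDissipation g x :=
  div_mul_cancel₀ _ (by positivity)

theorem inner_logPotentialGradient_gradient (g : E → ℝ) (x : E) :
    ⟪logPotentialGradient g x, ∇ g x⟫_ℝ = logDissipation g x := by
  rw [logPotentialGradient, real_inner_smul_left, real_inner_self_eq_norm_sq, logDissipation]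

theorem sq_norm_logPotentialGradient (g : E → ℝ) (x : E) :
    ‖logPotentialGradient g x‖ ^ 2 = (1 + g x)⁻¹ * logDissipation g x := by
  rw [logPotentialGradient, norm_smul, mul_pow, Real.norm_eq_abs, sq_abs, logDissipation]
  ring

theorem logDissipation_nonneg (hg0 : ∀ x, 0 ≤ g x) (x : E) : 0 ≤ logDissipation g x :=
  mul_nonneg (inv_nonneg.2 (add_nonneg zero_le_one (hg0 x))) (sq_nonneg _)

theorem relDissipation_nonneg (hg0 : ∀ x, 0 ≤ g x) (x : E) : 0 ≤ relDissipation g x :=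
  div_nonneg (logDissipation_nonneg hg0 x) (by positivity)

theorem relDissipation_le_logDissipation (hg0 : ∀ x, 0 ≤ g x) (x : E) :
    relDissipation g x ≤ logDissipation g x :=
  div_le_self (logDissipation_nonneg hg0 x) (le_add_of_nonneg_left (sq_nonneg _))

theorem continuous_logPotential {X : Type*} [TopologicalSpace X] {g : X → ℝ} (hg : Continuous g)
    (hg0 : ∀ x, 0 ≤ g x) : Continuous (logPotential g) :=
  (continuous_const.add hg).log fun x => (add_pos_of_pos_of_nonneg one_pos (hg0 x)).ne'

section Continuity

variable (hg : Continuous g) (hgrad : Continuous (∇ g)) (hg0 : ∀ x, 0 ≤ g x)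
include hg hgrad hg0

theorem continuous_logPotentialGradient : Continuous (logPotentialGradient g) :=
  ((continuous_const.add hg).inv₀
    fun x => (add_pos_of_pos_of_nonneg one_pos (hg0 x)).ne').smul hgrad

theorem continuous_logDissipation : Continuous (logDissipation g) :=
  ((continuous_const.add hg).inv₀
    fun x => (add_pos_of_pos_of_nonneg one_pos (hg0 x)).ne').mul (hgrad.norm.pow 2)

theorem continuous_relDissipation : Continuous (relDissipation g) :=
  (continuous_logDissipation hg hgrad hg0).div ((hgrad.norm.pow 2).add continuous_const)
    fun _ => by positivity

end Continuity

section Lipschitz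

variable (hg : Differentiable ℝ g) (hK : LipschitzWith K (∇ g)) (hg0 : ∀ x, 0 ≤ g x)
include hg hK hg0

theorem logDissipation_le (x : E) : logDissipation g x ≤ 2 * K := by
  have hpos : 0 < 1 + g x := add_pos_of_pos_of_nonneg one_pos (hg0 x)
  rw [logDissipation, inv_mul_le_iff₀ hpos]
  have := sq_norm_gradient_le_of_lipschitzWith_gradient hg hK hg0 x
  nlinarith [K.coe_nonneg]

theorem norm_logPotentialGradient_le (x : E) : ‖logPotentialGradient g x‖ ≤ √(2 * K) := by
  refine Real.le_sqrt_of_sq_le ?_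
  rw [sq_norm_logPotentialGradient]
  exact (mul_le_of_le_one_left (logDissipation_nonneg hg0 x)
    (inv_le_one_of_one_le₀ (le_add_of_nonneg_right (hg0 x)))).trans (logDissipation_le hg hK hg0 x)

theorem sq_norm_logPotentialGradient_mul_le (x : E) :
    ‖logPotentialGradient g x‖ ^ 2 * (‖∇ g x‖ ^ 2 + 1) ≤ (2 * K + 1) * logDissipation g x := by
  have hm := logDissipation_nonneg hg0 x
  calc ‖logPotentialGradient g x‖ ^ 2 * (‖∇ g x‖ ^ 2 + 1)
      = (logDissipation g x + (1 + g x)⁻¹) * logDissipation g x := by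
        rw [sq_norm_logPotentialGradient, logDissipation]; ring
    _ ≤ (2 * K + 1) * logDissipation g x := by
        gcongr
        exacts [logDissipation_le hg hK hg0 x,
          inv_le_one_of_one_le₀ (le_add_of_nonneg_right (hg0 x))]

theorem logPotential_add_le' (x v : E) :
    logPotential g (x + v) ≤ logPotential g x + ⟪logPotentialGradient g x, v⟫_ℝ
      + K / 2 * (1 + g x)⁻¹ * ‖v‖ ^ 2 := by
  have hx : 0 < 1 + g x := add_pos_of_pos_of_nonneg one_pos (hg0 x)
  have hxv : 0 < 1 + g (x + v) := add_pos_of_pos_of_nonneg one_pos (hg0 _)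
  have hdescent := le_add_inner_gradient_add_sq_of_lipschitzWith_gradient hg hK x v
  have hlog : logPotential g (x + v) - logPotential g x ≤ (1 + g (x + v)) / (1 + g x) - 1 := by
    rw [logPotential, logPotential, ← Real.log_div hxv.ne' hx.ne']
    exact Real.log_le_sub_one_of_pos (div_pos hxv hx)
  have hinner : ⟪logPotentialGradient g x, v⟫_ℝ = (1 + g x)⁻¹ * ⟪∇ g x, v⟫_ℝ :=
    real_inner_smul_left _ _ _
  have hscaled : (1 + g (x + v)) / (1 + g x) - 1
      ≤ (1 + g x)⁻¹ * (⟪∇ g x, v⟫_ℝ + K / 2 * ‖v‖ ^ 2) := by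
    rw [div_sub_one hx.ne', div_eq_inv_mul]
    gcongr
    linarith
  rw [hinner]
  linarith

theorem logPotential_add_le (x v : E) :
    logPotential g (x + v)
      ≤ logPotential g x + ⟪logPotentialGradient g x, v⟫_ℝ + K / 2 * ‖v‖ ^ 2 := by
  refine (logPotential_add_le' hg hK hg0 x v).trans ?_
  gcongr
  exact mul_le_of_le_one_right (by positivity)
    (inv_le_one_of_one_le₀ (le_add_of_nonneg_right (hg0 x)))

end Lipschitz

theorem exists_logPotential_le_of_isBounded (hg : Differentiable ℝ g)
    (hK : LipschitzWith K (∇ g)) (hg0 : ∀ x, 0 ≤ g x) {s : Set E} (hs : IsBounded s) :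
    ∃ C, ∀ x ∈ s, logPotential g x ≤ C := by
  obtain ⟨R, hR⟩ := hs.exists_norm_le
  refine ⟨g 0 + ‖∇ g 0‖ * R + K / 2 * R ^ 2, fun x hx => ?_⟩
  have hxR := hR x hx
  calc logPotential g x ≤ g x := by
        have := Real.log_le_sub_one_of_pos (add_pos_of_pos_of_nonneg one_pos (hg0 x))
        rwa [add_sub_cancel_left] at this
    _ ≤ g 0 + ⟪∇ g 0, x⟫_ℝ + K / 2 * ‖x‖ ^ 2 := by
        simpa using le_add_inner_gradient_add_sq_of_lipschitzWith_gradient hg hK 0 x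
    _ ≤ g 0 + ‖∇ g 0‖ * R + K / 2 * R ^ 2 := by
        gcongr
        exact (real_inner_le_norm _ _).trans (by gcongr)

theorem exists_logPotential_le_near_small_gradient (hg : Differentiable ℝ g)
    (hK : LipschitzWith K (∇ g)) (hg0 : ∀ x, 0 ≤ g x) {δ : ℝ}
    (hflat : ∀ᶠ x in cobounded E, δ < ‖∇ g x‖) (α : ℝ) :
    ∃ C, ∀ x v, ‖∇ g x‖ ≤ δ → ‖v‖ ≤ α → logPotential g (x + v) ≤ C := by
  have hsmall : IsBounded {x | ‖∇ g x‖ ≤ δ} := by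
    rw [isBounded_def]
    filter_upwards [hflat] with x hx using not_le.2 hx
  obtain ⟨C, hC⟩ := exists_logPotential_le_of_isBounded hg hK hg0
    (hsmall.add (Metric.isBounded_closedBall (x := (0 : E)) (r := α)))
  exact ⟨C, fun x v hx hv => hC _ (Set.add_mem_add hx (by simpa using hv))⟩

/-- The derivative of `softPosPart`. -/
def unitClamp (x : ℝ) : ℝ :=
  max 0 (min x 1)

/-- A `C¹` substitute for the positive part (its Moreau envelope, a one-sided Huber function):
`0` for `x ≤ 0`, `x ^ 2 / 2` for `0 ≤ x ≤ 1` and `x - 1 / 2` for `1 ≤ x`. -/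
noncomputable def softPosPart (x : ℝ) : ℝ :=
  unitClamp x * x - unitClamp x ^ 2 / 2

theorem unitClamp_nonneg (x : ℝ) : 0 ≤ unitClamp x :=
  le_max_left _ _

theorem unitClamp_le_one (x : ℝ) : unitClamp x ≤ 1 :=
  max_le zero_le_one (min_le_right _ _)

theorem continuous_unitClamp : Continuous unitClamp := by
  unfold unitClamp
  fun_prop

theorem continuous_softPosPart : Continuous softPosPart :=
  (continuous_unitClamp.mul continuous_id).sub ((continuous_unitClamp.pow 2).div_const 2)

theorem unitClamp_of_nonpos {x : ℝ} (hx : x ≤ 0) : unitClamp x = 0 :=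
  max_eq_left ((min_le_left _ _).trans hx)

theorem softPosPart_of_nonpos {x : ℝ} (hx : x ≤ 0) : softPosPart x = 0 := by
  simp [softPosPart, unitClamp_of_nonpos hx]

theorem unitClamp_cases (x : ℝ) :
    x ≤ 0 ∧ unitClamp x = 0 ∨ (0 ≤ x ∧ x ≤ 1) ∧ unitClamp x = x ∨ 1 ≤ x ∧ unitClamp x = 1 := by
  grind [unitClamp]

theorem softPosPart_add_le (x h : ℝ) :
    softPosPart (x + h) ≤ softPosPart x + unitClamp x * h + h ^ 2 / 2 := by
  unfold softPosPart
  rcases unitClamp_cases x with ⟨_, hrx⟩ | ⟨⟨_, _⟩, hrx⟩ | ⟨_, hrx⟩ <;>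
    rcases unitClamp_cases (x + h) with ⟨_, hry⟩ | ⟨⟨_, _⟩, hry⟩ | ⟨_, hry⟩ <;>
    rw [hrx, hry] <;> nlinarith

theorem le_softPosPart (x : ℝ) {s : ℝ} (hs0 : 0 ≤ s) (hs1 : s ≤ 1) :
    s * x - s ^ 2 / 2 ≤ softPosPart x := by
  unfold softPosPart
  rcases unitClamp_cases x with ⟨_, hrx⟩ | ⟨⟨_, _⟩, hrx⟩ | ⟨_, hrx⟩ <;>
    rw [hrx] <;> nlinarith [sq_nonneg (s - x)]

theorem softPosPart_nonneg (x : ℝ) : 0 ≤ softPosPart x := by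
  simpa using le_softPosPart x le_rfl zero_le_one

theorem le_softPosPart_add_half (x : ℝ) : x ≤ softPosPart x + 1 / 2 := by
  linarith [le_softPosPart x zero_le_one le_rfl]

theorem softPosPart_mono : Monotone softPosPart := fun x y hxy => by
  have := le_softPosPart y (unitClamp_nonneg x) (unitClamp_le_one x)
  have := mul_le_mul_of_nonneg_left hxy (unitClamp_nonneg x)
  rw [softPosPart]
  linarith

theorem softPosPart_le_abs (x : ℝ) : softPosPart x ≤ |x| := by
  unfold softPosPart
  rcases unitClamp_cases x with ⟨_, hrx⟩ | ⟨⟨_, _⟩, hrx⟩ | ⟨_, hrx⟩ <;>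
    rw [hrx] <;> nlinarith [le_abs_self x, abs_nonneg x]

theorem softPosPart_logPotential_add_le_of_norm_le (hg : Differentiable ℝ g)
    (hK : LipschitzWith K (∇ g)) (hg0 : ∀ x, 0 ≤ g x) (C : ℝ) {α : ℝ} {x v : E} (hv : ‖v‖ ≤ α) :
    softPosPart (logPotential g (x + v) - C) ≤ softPosPart (logPotential g x - C)
      + unitClamp (logPotential g x - C) * ⟪logPotentialGradient g x, v⟫_ℝ
      + (5 / 2 * K + K ^ 2 * α ^ 2 / 4) * (1 + g x)⁻¹ * ‖v‖ ^ 2 := by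
  set u := logPotential g x - C
  set r := unitClamp u
  set p := (1 + g x)⁻¹
  set i := ⟪logPotentialGradient g x, v⟫_ℝ
  have hp0 : 0 ≤ p := inv_nonneg.2 (add_nonneg zero_le_one (hg0 x))
  have hp1 : p ≤ 1 := inv_le_one_of_one_le₀ (le_add_of_nonneg_right (hg0 x))
  have hi : i ^ 2 ≤ 2 * K * p * ‖v‖ ^ 2 := by
    calc i ^ 2 ≤ (‖logPotentialGradient g x‖ * ‖v‖) ^ 2 :=
          sq_le_sq' (neg_le_of_abs_le (abs_real_inner_le_norm _ _)) (real_inner_le_norm _ _)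
      _ = p * logDissipation g x * ‖v‖ ^ 2 := by rw [mul_pow, sq_norm_logPotentialGradient]
      _ ≤ p * (2 * K) * ‖v‖ ^ 2 := by gcongr; exact logDissipation_le hg hK hg0 x
      _ = 2 * K * p * ‖v‖ ^ 2 := by ring
  have hcurv : (K / 2 * p * ‖v‖ ^ 2) ^ 2 ≤ K ^ 2 * α ^ 2 / 4 * p * ‖v‖ ^ 2 := by
    calc (K / 2 * p * ‖v‖ ^ 2) ^ 2 = K ^ 2 * ‖v‖ ^ 2 / 4 * (p * p) * ‖v‖ ^ 2 := by ring
      _ ≤ K ^ 2 * α ^ 2 / 4 * (p * 1) * ‖v‖ ^ 2 := by gcongr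
      _ = K ^ 2 * α ^ 2 / 4 * p * ‖v‖ ^ 2 := by ring
  have hr : r * (K / 2 * p * ‖v‖ ^ 2) ≤ K / 2 * p * ‖v‖ ^ 2 :=
    mul_le_of_le_one_left (by positivity) (unitClamp_le_one u)
  calc softPosPart (logPotential g (x + v) - C)
      ≤ softPosPart (u + (i + K / 2 * p * ‖v‖ ^ 2)) :=
        softPosPart_mono (by linarith [logPotential_add_le' hg hK hg0 x v])
    _ ≤ softPosPart u + r * (i + K / 2 * p * ‖v‖ ^ 2) + (i + K / 2 * p * ‖v‖ ^ 2) ^ 2 / 2 :=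
        softPosPart_add_le _ _
    _ ≤ softPosPart u + r * i + (5 / 2 * K + K ^ 2 * α ^ 2 / 4) * p * ‖v‖ ^ 2 := by
        linarith [add_sq_le (a := i) (b := K / 2 * p * ‖v‖ ^ 2)]

theorem softPosPart_logPotential_add_le (hg : Differentiable ℝ g)
    (hK : LipschitzWith K (∇ g)) (hg0 : ∀ x, 0 ≤ g x) {δ α C : ℝ} (hδ : 0 < δ)
    (hC : ∀ x v, ‖∇ g x‖ ≤ δ → ‖v‖ ≤ α → logPotential g (x + v) ≤ C) {x v : E} (hv : ‖v‖ ≤ α) :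
    softPosPart (logPotential g (x + v) - C) ≤ softPosPart (logPotential g x - C)
      + unitClamp (logPotential g x - C) * ⟪logPotentialGradient g x, v⟫_ℝ
      + (5 / 2 * K + K ^ 2 * α ^ 2 / 4) * (1 + δ⁻¹ ^ 2)
        * relDissipation g x * ‖v‖ ^ 2 := by
  obtain hsmall | hlarge := le_or_gt ‖∇ g x‖ δ
  · have hx : logPotential g x ≤ C := by
      simpa using hC x 0 hsmall (by simpa using (norm_nonneg v).trans hv)
    have hm := relDissipation_nonneg hg0 x
    rw [softPosPart_of_nonpos (sub_nonpos.2 (hC x v hsmall hv)),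
      softPosPart_of_nonpos (sub_nonpos.2 hx), unitClamp_of_nonpos (sub_nonpos.2 hx), zero_mul,
      zero_add, zero_add]
    positivity
  · have hvariance : (1 + g x)⁻¹
        ≤ (1 + δ⁻¹ ^ 2) * relDissipation g x := by
      have hpos : 0 < ‖∇ g x‖ ^ 2 + 1 := by positivity
      have hp : 0 ≤ (1 + g x)⁻¹ := inv_nonneg.2 (add_nonneg zero_le_one (hg0 x))
      have hratio : 1 ≤ δ⁻¹ ^ 2 * ‖∇ g x‖ ^ 2 := by
        rw [← mul_pow]
        exact one_le_pow₀ ((one_le_inv_mul₀ hδ).2 hlarge.le)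
      rw [relDissipation, logDissipation, ← mul_div_assoc, le_div_iff₀ hpos]
      nlinarith
    refine (softPosPart_logPotential_add_le_of_norm_le hg hK hg0 C hv).trans ?_
    rw [mul_assoc (5 / 2 * _ + _) (1 + δ⁻¹ ^ 2)]
    gcongr

theorem exists_softPosPart_logPotential_add_le (hg : Differentiable ℝ g)
    (hK : LipschitzWith K (∇ g)) (hg0 : ∀ x, 0 ≤ g x) {δ : ℝ} (hδ : 0 < δ)
    (hflat : ∀ᶠ x in cobounded E, δ < ‖∇ g x‖) (α : ℝ) :
    ∃ C D, 0 ≤ D ∧ ∀ x v, ‖v‖ ≤ α →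
      softPosPart (logPotential g (x + v) - C) ≤ softPosPart (logPotential g x - C)
        + unitClamp (logPotential g x - C) * ⟪logPotentialGradient g x, v⟫_ℝ
        + D * relDissipation g x * ‖v‖ ^ 2 :=
  have ⟨C, hC⟩ := exists_logPotential_le_near_small_gradient hg hK hg0 hflat α
  ⟨C, _, by positivity, fun _ _ hv => softPosPart_logPotential_add_le hg hK hg0 hδ hC hv⟩

end SmoothFunctions

section ConditionalExpectation

open scoped InnerProductSpace

variable {Ω : Type*} {m m0 : MeasurableSpace Ω} {P : Measure Ω}

theorem condExp_le_condExp_two_mul_sub_sq {c : Ω → ℝ} {κ : ℝ} (hc : Integrable c P)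
    (hc2 : Integrable (fun ω => c ω ^ 2) P) (hκ : 0 < κ)
    (hsq : P[fun ω => c ω ^ 2 | m] ≤ᵐ[P] fun ω => κ * (P[c | m]) ω) :
    P[c | m] ≤ᵐ[P] P[fun ω => 2 * c ω - κ⁻¹ * c ω ^ 2 | m] := by
  filter_upwards [hsq, condExp_sub (hc.const_mul 2) (hc2.const_mul κ⁻¹) m,
    condExp_smul (2 : ℝ) c m (μ := P), condExp_smul κ⁻¹ (fun ω => c ω ^ 2) m (μ := P)]
    with ω hsq hsub hsmul hsmul_sq
  have hbound : κ⁻¹ * (P[fun ω => c ω ^ 2 | m]) ω ≤ (P[c | m]) ω := (inv_mul_le_iff₀ hκ).2 hsq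
  refine le_of_le_of_eq ?_ hsub.symm
  refine le_of_le_of_eq ?_ (congrArg₂ (· - ·) hsmul hsmul_sq).symm
  simp only [Pi.smul_apply, smul_eq_mul]
  linarith

variable {E : Type*} [NormedAddCommGroup E] [InnerProductSpace ℝ E]

theorem memLp_inner_of_bound (hm : m ≤ m0) {H ξ : Ω → E} {B : ℝ}
    (hH : StronglyMeasurable[m] H) (hHB : ∀ ω, ‖H ω‖ ≤ B) (hξ : MemLp ξ 2 P) :
    MemLp (fun ω => ⟪H ω, ξ ω⟫_ℝ) 2 P :=
  (hξ.norm.const_mul B).of_le ((hH.mono hm).aestronglyMeasurable.inner hξ.1) <|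
    .of_forall fun ω => by
      refine (norm_inner_le_norm _ _).trans ((mul_le_mul_of_nonneg_right (hHB ω) ?_).trans ?_)
      exacts [norm_nonneg _, le_abs_self _]

theorem condExp_sq_inner_le (hm : m ≤ m0) {H ξ : Ω → E} {B : ℝ}
    (hH : StronglyMeasurable[m] H) (hHB : ∀ ω, ‖H ω‖ ≤ B) (hξ : MemLp ξ 2 P) :
    P[fun ω => ⟪H ω, ξ ω⟫_ℝ ^ 2 | m] ≤ᵐ[P]
      fun ω => ‖H ω‖ ^ 2 * (P[fun ω => ‖ξ ω‖ ^ 2 | m]) ω := by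
  have hξ2 : Integrable (fun ω => ‖ξ ω‖ ^ 2) P := hξ.norm.integrable_sq
  have hprod : Integrable (fun ω => ‖H ω‖ ^ 2 * ‖ξ ω‖ ^ 2) P := by
    refine hξ2.mul_of_top_right (memLp_top_of_bound
      ((hH.mono hm).norm.pow 2).aestronglyMeasurable (B ^ 2) (.of_forall fun ω => ?_))
    rw [Real.norm_of_nonneg (sq_nonneg _)]
    exact pow_le_pow_left₀ (norm_nonneg _) (hHB ω) 2
  have hcauchy (ω : Ω) : ⟪H ω, ξ ω⟫_ℝ ^ 2 ≤ ‖H ω‖ ^ 2 * ‖ξ ω‖ ^ 2 := by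
    rw [← mul_pow, ← sq_abs]
    exact pow_le_pow_left₀ (abs_nonneg _) (abs_real_inner_le_norm _ _) 2
  exact (condExp_mono (memLp_inner_of_bound hm hH hHB hξ).integrable_sq hprod
    (.of_forall hcauchy)).trans
    (condExp_mul_of_stronglyMeasurable_left (hH.norm.pow 2) hprod hξ2).le

variable [IsFiniteMeasure P]

theorem mul_condExp_le_of_condExp_sq_le (hm : m ≤ m0) {c W W' Z : Ω → ℝ} {B κ : ℝ}
    (hc : MemLp c 2 P) (hW : StronglyMeasurable[m] W) (hWB : ∀ ω, W ω ≤ B)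
    (hW'_nonneg : ∀ ω, 0 ≤ W' ω) (hW'W : ∀ ω, W' ω ≤ W ω) (hZ : Integrable Z P) (hκ : 0 < κ)
    (hsq : P[fun ω => c ω ^ 2 | m] ≤ᵐ[P] fun ω => κ * (P[c | m]) ω)
    (hcZ : ∀ ω, 2 * (c ω * W' ω) + κ * (W ω - W' ω) ≤ Z ω) :
    (fun ω => W ω * (P[c | m]) ω) ≤ᵐ[P] P[Z | m] := by
  have hW_nonneg (ω : Ω) : 0 ≤ W ω := (hW'_nonneg ω).trans (hW'W ω)
  have hW_top : MemLp W ⊤ P :=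
    memLp_top_of_bound (hW.mono hm).aestronglyMeasurable B <| .of_forall fun ω => by
      rw [Real.norm_of_nonneg (hW_nonneg ω)]
      exact hWB ω
  have hc_int : Integrable c P := hc.integrable one_le_two
  have hq : Integrable (fun ω => 2 * c ω - κ⁻¹ * c ω ^ 2) P :=
    (hc_int.const_mul 2).sub (hc.integrable_sq.const_mul κ⁻¹)
  have hWq : Integrable (fun ω => W ω * (2 * c ω - κ⁻¹ * c ω ^ 2)) P := hq.mul_of_top_right hW_top
  have hpointwise (ω : Ω) : W ω * (2 * c ω - κ⁻¹ * c ω ^ 2) ≤ Z ω := by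
    have hgap : 0 ≤ κ⁻¹ * (W ω - W' ω) * (c ω - κ) ^ 2 + κ⁻¹ * W' ω * c ω ^ 2 := by
      have := sub_nonneg.2 (hW'W ω)
      have := hW'_nonneg ω
      positivity
    have hexpand : κ⁻¹ * (W ω - W' ω) * (c ω - κ) ^ 2 + κ⁻¹ * W' ω * c ω ^ 2
        = 2 * (c ω * W' ω) + κ * (W ω - W' ω) - W ω * (2 * c ω - κ⁻¹ * c ω ^ 2) := by
      field_simp
      ring
    linarith [hcZ ω]
  filter_upwards [condExp_le_condExp_two_mul_sub_sq hc_int hc.integrable_sq hκ hsq,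
    condExp_mono (m := m) hWq hZ (.of_forall hpointwise),
    condExp_mul_of_stronglyMeasurable_left hW hWq hq] with ω hle hmono hpull
  calc W ω * (P[c | m]) ω
      ≤ W ω * (P[fun ω => 2 * c ω - κ⁻¹ * c ω ^ 2 | m]) ω :=
        mul_le_mul_of_nonneg_left hle (hW_nonneg ω)
    _ = (P[fun ω => W ω * (2 * c ω - κ⁻¹ * c ω ^ 2) | m]) ω := hpull.symm
    _ ≤ (P[Z | m]) ω := hmono

variable [CompleteSpace E]

theorem condExp_inner_of_stronglyMeasurable_left (hm : m ≤ m0) {H ξ : Ω → E} {B : ℝ}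
    (hH : StronglyMeasurable[m] H) (hHB : ∀ ω, ‖H ω‖ ≤ B) (hξ : MemLp ξ 2 P) :
    P[fun ω => ⟪H ω, ξ ω⟫_ℝ | m] =ᵐ[P] fun ω => ⟪H ω, (P[ξ | m]) ω⟫_ℝ :=
  condExp_bilin_of_stronglyMeasurable_left (innerSL ℝ) hH
    ((memLp_inner_of_bound hm hH hHB hξ).integrable one_le_two) (hξ.integrable one_le_two)

theorem mul_inner_condExp_le (hm : m ≤ m0) {H ξ : Ω → E} {W W' Z : Ω → ℝ} {A B κ : ℝ}
    (hH : StronglyMeasurable[m] H) (hHA : ∀ ω, ‖H ω‖ ≤ A) (hξ : MemLp ξ 2 P)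
    (hW : StronglyMeasurable[m] W) (hWB : ∀ ω, W ω ≤ B) (hW'_nonneg : ∀ ω, 0 ≤ W' ω)
    (hW'W : ∀ ω, W' ω ≤ W ω) (hZ : Integrable Z P) (hκ : 0 < κ)
    (hsq : ∀ᵐ ω ∂P, ‖H ω‖ ^ 2 * (P[fun ω => ‖ξ ω‖ ^ 2 | m]) ω ≤ κ * ⟪H ω, (P[ξ | m]) ω⟫_ℝ)
    (hHZ : ∀ ω, 2 * (⟪H ω, ξ ω⟫_ℝ * W' ω) + κ * (W ω - W' ω) ≤ Z ω) :
    (fun ω => W ω * ⟪H ω, (P[ξ | m]) ω⟫_ℝ) ≤ᵐ[P] P[Z | m] := by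
  have hinner := condExp_inner_of_stronglyMeasurable_left hm hH hHA hξ
  have hdrift := mul_condExp_le_of_condExp_sq_le hm (memLp_inner_of_bound hm hH hHA hξ) hW hWB
    hW'_nonneg hW'W hZ hκ (by
      filter_upwards [condExp_sq_inner_le hm hH hHA hξ, hsq, hinner] with ω hvar hsq hinner
      rw [hinner]
      exact hvar.trans hsq) hHZ
  filter_upwards [hdrift, hinner] with ω hdrift hinner
  rwa [hinner] at hdrift

end ConditionalExpectation

section RobbinsSiegmund

open scoped ENNReal

variable {Ω : Type*} {m0 : MeasurableSpace Ω} {P : Measure Ω}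

theorem ae_summable_of_summable_integral_norm {E : Type*} [NormedAddCommGroup E] [CompleteSpace E]
    {f : ℕ → Ω → E} (hf : ∀ n, Integrable (f n) P) (hsum : Summable fun n => ∫ ω, ‖f n ω‖ ∂P) :
    ∀ᵐ ω ∂P, Summable fun n => f n ω := by
  have hnorm (n : ℕ) : eLpNorm (f n) 1 P = ENNReal.ofReal (∫ ω, ‖f n ω‖ ∂P) := by
    rw [eLpNorm_one_eq_lintegral_enorm, ofReal_integral_norm_eq_lintegral_enorm (hf n)]
  filter_upwards [summable_norm_of_tsum_eLpNorm_ne_top le_rfl (fun n => (hf n).1)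
    (by simpa only [hnorm] using hsum.tsum_ofReal_ne_top)] with ω hω
  exact hω.of_norm

variable [IsFiniteMeasure P] {ℱ : Filtration ℕ m0}

theorem ae_exists_tendsto_of_integral_posPart_le {f : ℕ → Ω → ℝ} (hf : Submartingale f ℱ P)
    {R : ℝ} (hR : ∀ n, ∫ ω, max (f n ω) 0 ∂P ≤ R) :
    ∀ᵐ ω ∂P, ∃ l, Tendsto (fun n => f n ω) atTop (nhds l) := by
  have hmono (n : ℕ) : ∫ ω, f 0 ω ∂P ≤ ∫ ω, f n ω ∂P := by
    simpa using hf.setIntegral_le (Nat.zero_le n) MeasurableSet.univ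
  have habs (n : ℕ) : ∫ ω, ‖f n ω‖ ∂P = 2 * ∫ ω, max (f n ω) 0 ∂P - ∫ ω, f n ω ∂P := by
    rw [← integral_const_mul, ← integral_sub ((hf.integrable n).pos_part.const_mul 2)
      (hf.integrable n)]
    refine integral_congr_ae (.of_forall fun ω => ?_)
    simp only [Real.norm_eq_abs]
    grind
  refine hf.exists_ae_tendsto_of_bdd (R := (2 * R - ∫ ω, f 0 ω ∂P).toNNReal) fun n => ?_
  rw [eLpNorm_one_eq_lintegral_enorm, ← ofReal_integral_norm_eq_lintegral_enorm (hf.integrable n)]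
  exact ENNReal.ofReal_le_ofReal (by linarith [habs n, hmono n, hR n])

variable {f e : ℕ → Ω → ℝ} (hf_adapted : StronglyAdapted ℱ f)
  (hf_int : ∀ n, Integrable (f n) P) (he_int : ∀ n, Integrable (e n) P)
include hf_adapted hf_int he_int

section Adapted

variable (he_adapted : StronglyAdapted ℱ e)
  (hstep : ∀ n, P[f (n + 1) | ℱ n] ≤ᵐ[P] f n + e n)
include he_adapted hstep

theorem submartingale_sum_sub_of_condExp_succ_le_add :
    Submartingale (fun n => ∑ k ∈ Finset.range n, e k - f n) ℱ P := by
  have hsum_int (n : ℕ) : Integrable (∑ k ∈ Finset.range n, e k) P :=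
    integrable_finsetSum' _ fun k _ => he_int k
  have hsum_succ (n : ℕ) : StronglyMeasurable[ℱ n] (∑ k ∈ Finset.range (n + 1), e k) :=
    Finset.stronglyMeasurable_sum _ fun k hk =>
      (he_adapted k).mono (ℱ.mono (Finset.mem_range_succ_iff.1 hk))
  have hsum_adapted (n : ℕ) : StronglyMeasurable[ℱ n] (∑ k ∈ Finset.range n, e k) :=
    Finset.stronglyMeasurable_sum _ fun k hk =>
      (he_adapted k).mono (ℱ.mono (Finset.mem_range.1 hk).le)
  refine submartingale_nat (fun n => (hsum_adapted n).sub (hf_adapted n))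
    (fun n => (hsum_int n).sub (hf_int n)) fun n => ?_
  filter_upwards [hstep n, condExp_sub (hsum_int (n + 1)) (hf_int (n + 1)) (ℱ n)]
    with ω hstep hcond
  rw [condExp_of_stronglyMeasurable (ℱ.le n) (hsum_succ n) (hsum_int (n + 1))] at hcond
  refine le_of_le_of_eq ?_ hcond.symm
  simp only [Pi.sub_apply, Pi.add_apply, Finset.sum_range_succ] at hstep ⊢
  linarith

theorem ae_bddAbove_range_of_condExp_succ_le_add (hf_nonneg : ∀ n, 0 ≤ᵐ[P] f n)
    (he_nonneg : ∀ n, 0 ≤ᵐ[P] e n) (hsum : Summable fun n => ∫ ω, e n ω ∂P) :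
    ∀ᵐ ω ∂P, BddAbove (Set.range fun n => f n ω) := by
  have hsub :=
    submartingale_sum_sub_of_condExp_succ_le_add hf_adapted hf_int he_int he_adapted hstep
  have hposPart (n : ℕ) :
      ∫ ω, max ((∑ k ∈ Finset.range n, e k - f n) ω) 0 ∂P ≤ ∑' k, ∫ ω, e k ω ∂P := by
    calc ∫ ω, max ((∑ k ∈ Finset.range n, e k - f n) ω) 0 ∂P
        ≤ ∫ ω, ∑ k ∈ Finset.range n, e k ω ∂P := by
          refine integral_mono_ae (hsub.integrable n).pos_part
            (integrable_finsetSum _ fun k _ => he_int k) ?_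
          filter_upwards [hf_nonneg n, ae_all_iff.2 he_nonneg] with ω hf he
          refine sup_le ?_ (Finset.sum_nonneg fun k _ => he k)
          rw [Pi.sub_apply, Finset.sum_apply]
          exact sub_le_self _ hf
      _ = ∑ k ∈ Finset.range n, ∫ ω, e k ω ∂P := integral_finsetSum _ fun k _ => he_int k
      _ ≤ ∑' k, ∫ ω, e k ω ∂P :=
          hsum.sum_le_tsum _ fun k _ => integral_nonneg_of_ae (he_nonneg k)
  have hsummable : ∀ᵐ ω ∂P, Summable fun n => e n ω := by
    refine ae_summable_of_summable_integral_norm he_int (hsum.congr fun n => ?_)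
    refine integral_congr_ae ?_
    filter_upwards [he_nonneg n] with ω hω using (Real.norm_of_nonneg hω).symm
  filter_upwards [ae_exists_tendsto_of_integral_posPart_le hsub hposPart, hsummable]
    with ω ⟨l, hl⟩ hsummable
  refine (hsummable.hasSum.tendsto_sum_nat.sub hl).bddAbove_range.mono ?_
  rintro _ ⟨n, rfl⟩
  exact ⟨n, by simp⟩

end Adapted

theorem ae_bddAbove_range_of_condExp_add_sub_nonneg
    (hstep : ∀ n, 0 ≤ᵐ[P] P[f n + e n - f (n + 1) | ℱ n]) (hf_nonneg : ∀ n, 0 ≤ᵐ[P] f n)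
    (he_nonneg : ∀ n, 0 ≤ᵐ[P] e n) (hsum : Summable fun n => ∫ ω, e n ω ∂P) :
    ∀ᵐ ω ∂P, BddAbove (Set.range fun n => f n ω) := by
  refine ae_bddAbove_range_of_condExp_succ_le_add (e := fun n => P[e n | ℱ n]) hf_adapted
    hf_int (fun n => integrable_condExp) (fun n => stronglyMeasurable_condExp) (fun n => ?_)
    hf_nonneg (fun n => condExp_nonneg (he_nonneg n))
    (by simpa only [integral_condExp (ℱ.le _)] using hsum)
  filter_upwards [hstep n, condExp_sub ((hf_int n).add (he_int n)) (hf_int (n + 1)) (ℱ n),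
    condExp_add (hf_int n) (he_int n) (ℱ n)] with ω hstep hsub hadd
  rw [hsub, Pi.sub_apply, hadd, Pi.add_apply,
    condExp_of_stronglyMeasurable (ℱ.le n) (hf_adapted n) (hf_int n)] at hstep
  exact sub_nonneg.1 hstep

end RobbinsSiegmund

section AdaGradNorm

open scoped Gradient InnerProductSpace NNReal
open Bornology

/-- The AdaGrad-Norm stepsize `1 / √(S n)`, without the factor `α`. The step from `X n` to
`X (n + 1)` uses `adaStepsize S (n + 1)`, whereas `adaStepsize S n` is known at time `n`. -/
noncomputable def adaStepsize {Ω : Type*} (S : ℕ → Ω → ℝ) (n : ℕ) (ω : Ω) : ℝ :=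
  (√(S n ω))⁻¹

theorem adaStepsize_nonneg {Ω : Type*} (S : ℕ → Ω → ℝ) (n : ℕ) (ω : Ω) : 0 ≤ adaStepsize S n ω :=
  inv_nonneg.2 (Real.sqrt_nonneg _)

theorem sq_norm_neg_mul_smul {E : Type*} [SeminormedAddCommGroup E] [NormedSpace ℝ E] (a b : ℝ)
    (x : E) : ‖-(a * b) • x‖ ^ 2 = a ^ 2 * (b ^ 2 * ‖x‖ ^ 2) := by
  rw [norm_smul, norm_neg, mul_pow, Real.norm_eq_abs, sq_abs, mul_pow, mul_assoc]

/-- The Lyapunov function of the iteration; the two stepsize terms absorb the curvature and the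
correlation of the stepsize with the gradient estimate. -/
noncomputable def stepLyapunov {E Ω : Type*} (g : E → ℝ) (a b : ℝ) (X : ℕ → Ω → E)
    (S : ℕ → Ω → ℝ) (n : ℕ) (ω : Ω) : ℝ :=
  logPotential g (X n ω) * adaStepsize S n ω + a * adaStepsize S n ω + b * adaStepsize S n ω ^ 2

variable {E : Type*} [NormedAddCommGroup E] [InnerProductSpace ℝ E] [CompleteSpace E]

/-- The error in the drift of `softPosPart (logPotential g (X n) - C)`: the price of replacing the
stepsize by the predictable one, and the curvature term. -/
noncomputable def driftError {Ω : Type*} (g : E → ℝ) (a b : ℝ) (X ξ : ℕ → Ω → E) (S : ℕ → Ω → ℝ)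
    (n : ℕ) (ω : Ω) : ℝ :=
  a * (adaStepsize S n ω - adaStepsize S (n + 1) ω)
    + b * (relDissipation g (X n ω) * adaStepsize S n ω ^ 2 * ‖ξ n ω‖ ^ 2)

variable {Ω : Type*} {m0 : MeasurableSpace Ω}

/-- The iterates `X` of AdaGrad-Norm with stepsize factor `α`, gradient estimates `ξ` and squared
norms accumulated in `S`, indexed from `0`: `ξ n` estimates `∇ g (X n)` and is known at time
`n + 1`. The two constants of the affine variance bound are merged into `σ`. -/
structure IsAdaGradNorm (P : Measure Ω) (ℱ : Filtration ℕ m0) (g : E → ℝ) (α σ : ℝ)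
    (X ξ : ℕ → Ω → E) (S : ℕ → Ω → ℝ) : Prop where
  factor_pos : 0 < α
  variance_pos : 0 < σ
  exists_le_accum_zero : ∃ s, 0 < s ∧ ∀ ω, s ≤ S 0 ω
  stronglyMeasurable_accum_zero : StronglyMeasurable[ℱ 0] (S 0)
  stronglyMeasurable_iterate_zero : StronglyMeasurable[ℱ 0] (X 0)
  stronglyMeasurable_estimate : ∀ n, StronglyMeasurable[ℱ (n + 1)] (ξ n)
  memLp_estimate : ∀ n, MemLp (ξ n) 2 P
  accum_succ : ∀ n ω, S (n + 1) ω = S n ω + ‖ξ n ω‖ ^ 2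
  iterate_succ : ∀ n ω, X (n + 1) ω = X n ω - (α / √(S (n + 1) ω)) • ξ n ω
  condExp_estimate : ∀ n, P[ξ n | ℱ n] =ᵐ[P] fun ω => ∇ g (X n ω)
  condExp_sq_norm_estimate_le : ∀ n, ∀ᵐ ω ∂P,
    (P[fun ω => ‖ξ n ω‖ ^ 2 | ℱ n]) ω ≤ σ * (‖∇ g (X n ω)‖ ^ 2 + 1)

namespace IsAdaGradNorm

variable {P : Measure Ω} {ℱ : Filtration ℕ m0} {g : E → ℝ} {α σ : ℝ} {X ξ : ℕ → Ω → E}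
  {S : ℕ → Ω → ℝ} (h : IsAdaGradNorm P ℱ g α σ X ξ S)
include h

theorem accum_le_succ (n : ℕ) (ω : Ω) : S n ω ≤ S (n + 1) ω := by
  rw [h.accum_succ]
  exact le_add_of_nonneg_right (sq_nonneg _)

theorem exists_le_accum : ∃ s, 0 < s ∧ ∀ n ω, s ≤ S n ω := by
  obtain ⟨s, hs, hle⟩ := h.exists_le_accum_zero
  exact ⟨s, hs, fun n ω => (hle ω).trans
    (monotone_nat_of_le_succ (f := fun n => S n ω) (h.accum_le_succ · ω) n.zero_le)⟩

theorem sqrt_accum_pos (n : ℕ) (ω : Ω) : 0 < √(S n ω) :=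
  have ⟨_, hs, hle⟩ := h.exists_le_accum
  Real.sqrt_pos.2 (hs.trans_le (hle n ω))

theorem stronglyMeasurable_accum (n : ℕ) : StronglyMeasurable[ℱ n] (S n) := by
  induction n with
  | zero => exact h.stronglyMeasurable_accum_zero
  | succ n ih =>
    rw [funext (h.accum_succ n)]
    exact (ih.mono (ℱ.mono n.le_succ)).add ((h.stronglyMeasurable_estimate n).norm.pow 2)

theorem stronglyMeasurable_adaStepsize (n : ℕ) : StronglyMeasurable[ℱ n] (adaStepsize S n) :=
  (h.stronglyMeasurable_accum n).measurable.sqrt.inv.stronglyMeasurable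

theorem exists_adaStepsize_le : ∃ B, ∀ n ω, adaStepsize S n ω ≤ B := by
  obtain ⟨s, hs, hle⟩ := h.exists_le_accum
  exact ⟨(√s)⁻¹, fun n ω => inv_anti₀ (Real.sqrt_pos.2 hs) (Real.sqrt_le_sqrt (hle n ω))⟩

theorem memLp_top_adaStepsize (n : ℕ) : MemLp (adaStepsize S n) ⊤ P := by
  obtain ⟨B, hB⟩ := h.exists_adaStepsize_le
  refine memLp_top_of_bound
    ((h.stronglyMeasurable_adaStepsize n).mono (ℱ.le n)).aestronglyMeasurable B
    (.of_forall fun ω => ?_)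
  rw [Real.norm_of_nonneg (adaStepsize_nonneg S n ω)]
  exact hB n ω

theorem adaStepsize_succ_le (n : ℕ) (ω : Ω) : adaStepsize S (n + 1) ω ≤ adaStepsize S n ω :=
  inv_anti₀ (h.sqrt_accum_pos n ω) (Real.sqrt_le_sqrt (h.accum_le_succ n ω))

theorem sq_adaStepsize_succ_le (n : ℕ) (ω : Ω) :
    adaStepsize S (n + 1) ω ^ 2 ≤ adaStepsize S n ω ^ 2 :=
  pow_le_pow_left₀ (adaStepsize_nonneg S _ ω) (h.adaStepsize_succ_le n ω) 2

theorem adaStepsize_mul_norm_estimate_le_one (n : ℕ) (ω : Ω) :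
    adaStepsize S (n + 1) ω * ‖ξ n ω‖ ≤ 1 := by
  have hS : 0 ≤ S n ω := (Real.sqrt_pos.1 (h.sqrt_accum_pos n ω)).le
  rw [adaStepsize, inv_mul_le_one₀ (h.sqrt_accum_pos _ ω), h.accum_succ]
  exact Real.le_sqrt_of_sq_le (le_add_of_nonneg_left hS)

theorem adaStepsize_pow_three_mul_le (n : ℕ) (ω : Ω) :
    adaStepsize S (n + 1) ω ^ 3 * ‖ξ n ω‖ ^ 2
      ≤ 2 * (adaStepsize S n ω - adaStepsize S (n + 1) ω) := by
  have ha := h.sqrt_accum_pos n ω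
  have hb := h.sqrt_accum_pos (n + 1) ω
  have hab : √(S n ω) ≤ √(S (n + 1) ω) := Real.sqrt_le_sqrt (h.accum_le_succ n ω)
  have hξ : ‖ξ n ω‖ ^ 2 = √(S (n + 1) ω) ^ 2 - √(S n ω) ^ 2 := by
    rw [Real.sq_sqrt (Real.sqrt_pos.1 ha).le, Real.sq_sqrt (Real.sqrt_pos.1 hb).le, h.accum_succ]
    ring
  rw [hξ, adaStepsize, adaStepsize]
  generalize √(S n ω) = a at *
  generalize √(S (n + 1) ω) = b at *
  have hgap : 2 * (a⁻¹ - b⁻¹) - b⁻¹ ^ 3 * (b ^ 2 - a ^ 2)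
      = (b - a) ^ 2 * (2 * b + a) * (a * b ^ 3)⁻¹ := by
    field_simp
    ring
  have : 0 ≤ (b - a) ^ 2 * (2 * b + a) * (a * b ^ 3)⁻¹ := by positivity
  linarith

theorem iterate_succ_eq_add (n : ℕ) (ω : Ω) :
    X (n + 1) ω = X n ω + -(α * adaStepsize S (n + 1) ω) • ξ n ω := by
  rw [h.iterate_succ, neg_smul, ← sub_eq_add_neg, adaStepsize, div_eq_mul_inv]

theorem norm_step_le (n : ℕ) (ω : Ω) : ‖-(α * adaStepsize S (n + 1) ω) • ξ n ω‖ ≤ α := by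
  rw [norm_smul, norm_neg, Real.norm_of_nonneg
    (mul_nonneg h.factor_pos.le (adaStepsize_nonneg S _ ω)), mul_assoc]
  exact mul_le_of_le_one_right h.factor_pos.le (h.adaStepsize_mul_norm_estimate_le_one n ω)

theorem stronglyMeasurable_iterate (n : ℕ) : StronglyMeasurable[ℱ n] (X n) := by
  induction n with
  | zero => exact h.stronglyMeasurable_iterate_zero
  | succ n ih =>
    rw [funext (h.iterate_succ_eq_add n)]
    exact (ih.mono (ℱ.mono n.le_succ)).add
      (((h.stronglyMeasurable_adaStepsize (n + 1)).const_mul α).neg.smul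
        (h.stronglyMeasurable_estimate n))

theorem summable_integral_adaStepsize_sub [IsFiniteMeasure P] :
    Summable fun n => ∫ ω, (adaStepsize S n ω - adaStepsize S (n + 1) ω) ∂P := by
  have hint (n : ℕ) : Integrable (adaStepsize S n) P :=
    (h.memLp_top_adaStepsize n).integrable le_top
  refine summable_of_sum_range_le (c := ∫ ω, adaStepsize S 0 ω ∂P)
    (fun n => integral_nonneg fun ω => sub_nonneg.2 (h.adaStepsize_succ_le n ω)) fun n => ?_
  simp_rw [integral_sub (hint _) (hint _)]
  rw [Finset.sum_range_sub' fun n => ∫ ω, adaStepsize S n ω ∂P]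
  exact sub_le_self _ (integral_nonneg fun ω => adaStepsize_nonneg S n ω)

theorem driftError_nonneg (hg0 : ∀ x, 0 ≤ g x) {a b : ℝ} (ha : 0 ≤ a) (hb : 0 ≤ b) (n : ℕ)
    (ω : Ω) : 0 ≤ driftError g a b X ξ S n ω := by
  have := relDissipation_nonneg hg0 (X n ω)
  have := sub_nonneg.2 (h.adaStepsize_succ_le n ω)
  rw [driftError]
  positivity

variable {K : ℝ≥0} (hg : Differentiable ℝ g) (hK : LipschitzWith K (∇ g)) (hg0 : ∀ x, 0 ≤ g x)
include hg hK hg0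

theorem logPotential_succ_le (n : ℕ) (ω : Ω) :
    logPotential g (X (n + 1) ω) ≤ logPotential g (X n ω)
      - α * (⟪logPotentialGradient g (X n ω), ξ n ω⟫_ℝ * adaStepsize S (n + 1) ω)
      + K / 2 * (α ^ 2 * (adaStepsize S (n + 1) ω ^ 2 * ‖ξ n ω‖ ^ 2)) := by
  rw [h.iterate_succ_eq_add, ← sq_norm_neg_mul_smul]
  refine (logPotential_add_le hg hK hg0 _ _).trans_eq ?_
  rw [real_inner_smul_right]
  ring

theorem le_stepLyapunov_sub_succ (b : ℝ) (n : ℕ) (ω : Ω) :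
    α * (⟪logPotentialGradient g (X n ω), ξ n ω⟫_ℝ * adaStepsize S (n + 1) ω ^ 2)
        + b * (adaStepsize S n ω ^ 2 - adaStepsize S (n + 1) ω ^ 2)
      ≤ stepLyapunov g (K * α ^ 2) b X S n ω - stepLyapunov g (K * α ^ 2) b X S (n + 1) ω := by
  have hdescent := mul_le_mul_of_nonneg_left (h.logPotential_succ_le hg hK hg0 n ω)
    (adaStepsize_nonneg S (n + 1) ω)
  have hpotential := mul_le_mul_of_nonneg_left (h.adaStepsize_succ_le n ω)
    (logPotential_nonneg hg0 (X n ω))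
  have hcurvature := mul_le_mul_of_nonneg_left (h.adaStepsize_pow_three_mul_le n ω)
    (by positivity : 0 ≤ K / 2 * α ^ 2)
  rw [stepLyapunov, stepLyapunov]
  linarith

theorem exists_softPosPart_logPotential_succ_le {δ : ℝ} (hδ : 0 < δ)
    (hflat : ∀ᶠ x in cobounded E, δ < ‖∇ g x‖) :
    ∃ C D, 0 ≤ D ∧ ∀ n ω,
      softPosPart (logPotential g (X (n + 1) ω) - C) ≤ softPosPart (logPotential g (X n ω) - C)
        - α * (unitClamp (logPotential g (X n ω) - C)
          * ⟪logPotentialGradient g (X n ω), ξ n ω⟫_ℝ * adaStepsize S (n + 1) ω)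
        + D * (relDissipation g (X n ω) * adaStepsize S n ω ^ 2 * ‖ξ n ω‖ ^ 2) := by
  obtain ⟨C, D, hD, hstep⟩ := exists_softPosPart_logPotential_add_le hg hK hg0 hδ hflat α
  refine ⟨C, D * α ^ 2, by positivity, fun n ω => ?_⟩
  rw [h.iterate_succ_eq_add]
  refine (hstep _ _ (h.norm_step_le n ω)).trans ?_
  have hrel := relDissipation_nonneg hg0 (X n ω)
  have hmono : D * relDissipation g (X n ω) * ‖-(α * adaStepsize S (n + 1) ω) • ξ n ω‖ ^ 2
      ≤ D * α ^ 2 * (relDissipation g (X n ω) * adaStepsize S n ω ^ 2 * ‖ξ n ω‖ ^ 2) := by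
    calc D * relDissipation g (X n ω) * ‖-(α * adaStepsize S (n + 1) ω) • ξ n ω‖ ^ 2
        = D * α ^ 2 * (relDissipation g (X n ω) * adaStepsize S (n + 1) ω ^ 2 * ‖ξ n ω‖ ^ 2) := by
          rw [sq_norm_neg_mul_smul]; ring
      _ ≤ D * α ^ 2 * (relDissipation g (X n ω) * adaStepsize S n ω ^ 2 * ‖ξ n ω‖ ^ 2) := by
          gcongr
          exacts [adaStepsize_nonneg S _ ω, h.adaStepsize_succ_le n ω]
  rw [real_inner_smul_right]
  linarith

theorem sq_norm_smul_logPotentialGradient_mul_condExp_le (n : ℕ) {a : Ω → ℝ}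
    (ha0 : ∀ ω, 0 ≤ a ω) (ha1 : ∀ ω, a ω ≤ 1) :
    ∀ᵐ ω ∂P, ‖a ω • logPotentialGradient g (X n ω)‖ ^ 2 * (P[fun ω => ‖ξ n ω‖ ^ 2 | ℱ n]) ω
      ≤ σ * (2 * K + 1) * ⟪a ω • logPotentialGradient g (X n ω), (P[ξ n | ℱ n]) ω⟫_ℝ := by
  filter_upwards [h.condExp_estimate n, h.condExp_sq_norm_estimate_le n] with ω hmean hvar
  have hσ := h.variance_pos
  have ha0 := ha0 ω
  rw [hmean, real_inner_smul_left, inner_logPotentialGradient_gradient, norm_smul, mul_pow,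
    Real.norm_eq_abs, sq_abs]
  calc a ω ^ 2 * ‖logPotentialGradient g (X n ω)‖ ^ 2 * (P[fun ω => ‖ξ n ω‖ ^ 2 | ℱ n]) ω
      ≤ a ω ^ 2 * ‖logPotentialGradient g (X n ω)‖ ^ 2 * (σ * (‖∇ g (X n ω)‖ ^ 2 + 1)) := by
        gcongr
    _ = σ * a ω ^ 2
        * (‖logPotentialGradient g (X n ω)‖ ^ 2 * (‖∇ g (X n ω)‖ ^ 2 + 1)) := by ring
    _ ≤ σ * a ω * ((2 * K + 1) * logDissipation g (X n ω)) :=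
        mul_le_mul
          (mul_le_mul_of_nonneg_left (pow_le_of_le_one ha0 (ha1 ω) two_ne_zero) hσ.le)
          (sq_norm_logPotentialGradient_mul_le hg hK hg0 _) (by positivity) (by positivity)
    _ = σ * (2 * K + 1) * (a ω * logDissipation g (X n ω)) := by ring

theorem memLp_top_logDissipation (n : ℕ) : MemLp (fun ω => logDissipation g (X n ω)) ⊤ P := by
  refine memLp_top_of_bound ((continuous_logDissipation hg.continuous hK.continuous
    hg0).comp_stronglyMeasurable ((h.stronglyMeasurable_iterate n).mono
      (ℱ.le n))).aestronglyMeasurable (2 * K) (.of_forall fun ω => ?_)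
  rw [Real.norm_of_nonneg (logDissipation_nonneg hg0 _)]
  exact logDissipation_le hg hK hg0 _

theorem memLp_top_relDissipation (n : ℕ) : MemLp (fun ω => relDissipation g (X n ω)) ⊤ P := by
  refine (h.memLp_top_logDissipation hg hK hg0 n).mono ((continuous_relDissipation hg.continuous
    hK.continuous hg0).comp_stronglyMeasurable ((h.stronglyMeasurable_iterate n).mono
      (ℱ.le n))).aestronglyMeasurable (.of_forall fun ω => ?_)
  rw [Real.norm_of_nonneg (relDissipation_nonneg hg0 _),
    Real.norm_of_nonneg (logDissipation_nonneg hg0 _)]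
  exact relDissipation_le_logDissipation hg0 _

theorem integrable_relDissipation_mul (n : ℕ) :
    Integrable (fun ω => relDissipation g (X n ω) * adaStepsize S n ω ^ 2 * ‖ξ n ω‖ ^ 2) P := by
  have hW := h.memLp_top_adaStepsize n
  refine ((((h.memLp_estimate n).norm.integrable_sq.mul_of_top_right hW).mul_of_top_right
    hW).mul_of_top_right (h.memLp_top_relDissipation hg hK hg0 n)).congr (.of_forall fun ω => ?_)
  simp only [Pi.mul_apply]
  ring

variable [IsFiniteMeasure P]

theorem integrable_logPotential (hX0 : Integrable (fun ω => logPotential g (X 0 ω)) P) (n : ℕ) :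
    Integrable (fun ω => logPotential g (X n ω)) P := by
  induction n with
  | zero => exact hX0
  | succ n ih =>
    refine (ih.add (integrable_const (√(2 * K) * α + K / 2 * α ^ 2))).mono'
      ((continuous_logPotential hg.continuous hg0).comp_stronglyMeasurable
        ((h.stronglyMeasurable_iterate (n + 1)).mono (ℱ.le _))).aestronglyMeasurable
      (.of_forall fun ω => ?_)
    have hstep := h.norm_step_le n ω
    rw [Real.norm_of_nonneg (logPotential_nonneg hg0 _), h.iterate_succ_eq_add]
    refine (logPotential_add_le hg hK hg0 _ _).trans ?_
    rw [Pi.add_apply, add_assoc]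
    gcongr
    exact (real_inner_le_norm _ _).trans
      (mul_le_mul (norm_logPotentialGradient_le hg hK hg0 _) hstep (norm_nonneg _)
        (Real.sqrt_nonneg _))

theorem mul_logDissipation_le_condExp (n : ℕ) {a w w' Z : Ω → ℝ} {B : ℝ}
    (ha : StronglyMeasurable[ℱ n] a) (ha0 : ∀ ω, 0 ≤ a ω) (ha1 : ∀ ω, a ω ≤ 1)
    (hw : StronglyMeasurable[ℱ n] w) (hwB : ∀ ω, w ω ≤ B) (hw'0 : ∀ ω, 0 ≤ w' ω)
    (hw'w : ∀ ω, w' ω ≤ w ω) (hZ : Integrable Z P)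
    (haZ : ∀ ω, α * (a ω * ⟪logPotentialGradient g (X n ω), ξ n ω⟫_ℝ * w' ω)
      + α / 2 * (σ * (2 * K + 1)) * (w ω - w' ω) ≤ Z ω) :
    (fun ω => α / 2 * (w ω * (a ω * logDissipation g (X n ω)))) ≤ᵐ[P] P[Z | ℱ n] := by
  have hσ := h.variance_pos
  have hα := h.factor_pos
  have hH : StronglyMeasurable[ℱ n] fun ω => a ω • logPotentialGradient g (X n ω) :=
    ha.smul ((continuous_logPotentialGradient hg.continuous hK.continuous
      hg0).comp_stronglyMeasurable (h.stronglyMeasurable_iterate n))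
  have hHA (ω : Ω) : ‖a ω • logPotentialGradient g (X n ω)‖ ≤ √(2 * K) := by
    rw [norm_smul, Real.norm_of_nonneg (ha0 ω)]
    exact (mul_le_of_le_one_left (norm_nonneg _) (ha1 ω)).trans
      (norm_logPotentialGradient_le hg hK hg0 _)
  have hHZ (ω : Ω) : 2 * (⟪a ω • logPotentialGradient g (X n ω), ξ n ω⟫_ℝ * w' ω)
      + σ * (2 * K + 1) * (w ω - w' ω) ≤ ((α / 2)⁻¹ • Z) ω := by
    rw [Pi.smul_apply, smul_eq_mul, le_inv_mul_iff₀ (half_pos hα), real_inner_smul_left]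
    linarith [haZ ω]
  filter_upwards [mul_inner_condExp_le (ℱ.le n) hH hHA (h.memLp_estimate n) hw hwB hw'0 hw'w
      (hZ.smul (α / 2)⁻¹) (by positivity)
      (h.sq_norm_smul_logPotentialGradient_mul_condExp_le hg hK hg0 n ha0 ha1) hHZ,
    h.condExp_estimate n, condExp_smul (α / 2)⁻¹ Z (ℱ n) (μ := P)] with ω hdrift hmean hsmul
  rw [hmean, real_inner_smul_left, inner_logPotentialGradient_gradient] at hdrift
  exact (le_inv_mul_iff₀ (half_pos hα)).1 (hdrift.trans_eq hsmul)

theorem integrable_stepLyapunov (hX0 : Integrable (fun ω => logPotential g (X 0 ω)) P) (a b : ℝ)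
    (n : ℕ) : Integrable (stepLyapunov g a b X S n) P := by
  have hW := h.memLp_top_adaStepsize n
  exact (((h.integrable_logPotential hg hK hg0 hX0 n).mul_of_top_left hW).add
    ((hW.integrable le_top).const_mul a)).add
    ((hW.mono_exponent le_top).integrable_sq.const_mul b)

theorem integrable_sq_adaStepsize_mul_logDissipation (n : ℕ) :
    Integrable (fun ω => adaStepsize S n ω ^ 2 * logDissipation g (X n ω)) P :=
  ((h.memLp_top_adaStepsize n).mono_exponent le_top).integrable_sq.mul_of_top_left
    (h.memLp_top_logDissipation hg hK hg0 n)

theorem integral_sq_adaStepsize_mul_logDissipation_le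
    (hX0 : Integrable (fun ω => logPotential g (X 0 ω)) P) (n : ℕ) :
    α / 2 * ∫ ω, adaStepsize S n ω ^ 2 * logDissipation g (X n ω) ∂P
      ≤ ∫ ω, stepLyapunov g (K * α ^ 2) (α / 2 * (σ * (2 * K + 1))) X S n ω ∂P
        - ∫ ω, stepLyapunov g (K * α ^ 2) (α / 2 * (σ * (2 * K + 1))) X S (n + 1) ω ∂P := by
  set Ψ := stepLyapunov g (K * α ^ 2) (α / 2 * (σ * (2 * K + 1))) X S
  have hΨ : ∀ n, Integrable (Ψ n) P := h.integrable_stepLyapunov hg hK hg0 hX0 _ _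
  obtain ⟨B, hB⟩ := h.exists_adaStepsize_le
  have hdrift := h.mul_logDissipation_le_condExp hg hK hg0 n (a := fun _ => 1)
    stronglyMeasurable_const (fun _ => zero_le_one) (fun _ => le_rfl)
    ((h.stronglyMeasurable_adaStepsize n).pow 2)
    (fun ω => pow_le_pow_left₀ (adaStepsize_nonneg S n ω) (hB n ω) 2)
    (fun _ => sq_nonneg _) (h.sq_adaStepsize_succ_le n) ((hΨ n).sub (hΨ (n + 1)))
    (fun ω => by
      simpa only [one_mul, Pi.pow_apply, Pi.sub_apply] using
        h.le_stepLyapunov_sub_succ hg hK hg0 _ n ω)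
  simp only [one_mul] at hdrift
  calc α / 2 * ∫ ω, adaStepsize S n ω ^ 2 * logDissipation g (X n ω) ∂P
      = ∫ ω, α / 2 * (adaStepsize S n ω ^ 2 * logDissipation g (X n ω)) ∂P :=
        (integral_const_mul _ _).symm
    _ ≤ ∫ ω, (P[Ψ n - Ψ (n + 1) | ℱ n]) ω ∂P :=
        integral_mono_ae
          ((h.integrable_sq_adaStepsize_mul_logDissipation hg hK hg0 n).const_mul _)
          integrable_condExp hdrift
    _ = ∫ ω, Ψ n ω ∂P - ∫ ω, Ψ (n + 1) ω ∂P := by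
        rw [integral_condExp (ℱ.le n), integral_sub' (hΨ n) (hΨ (n + 1))]

theorem summable_integral_sq_adaStepsize_mul_logDissipation
    (hX0 : Integrable (fun ω => logPotential g (X 0 ω)) P) :
    Summable fun n => ∫ ω, adaStepsize S n ω ^ 2 * logDissipation g (X n ω) ∂P := by
  have hα := h.factor_pos
  have hσ := h.variance_pos
  set Ψ := stepLyapunov g (K * α ^ 2) (α / 2 * (σ * (2 * K + 1))) X S
  have hΨ_nonneg (n : ℕ) : 0 ≤ ∫ ω, Ψ n ω ∂P := by
    refine integral_nonneg fun ω => ?_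
    have := logPotential_nonneg hg0 (X n ω)
    have := adaStepsize_nonneg S n ω
    simp only [Ψ, stepLyapunov, Pi.zero_apply]
    positivity
  refine (summable_mul_left_iff (half_pos hα).ne').1 <|
    summable_of_sum_range_le (c := ∫ ω, Ψ 0 ω ∂P) (fun n => ?_) fun n => ?_
  · refine mul_nonneg (half_pos hα).le (integral_nonneg fun ω => ?_)
    exact mul_nonneg (sq_nonneg _) (logDissipation_nonneg hg0 _)
  · refine (Finset.sum_le_sum fun k _ =>
      h.integral_sq_adaStepsize_mul_logDissipation_le hg hK hg0 hX0 k).trans ?_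
    rw [Finset.sum_range_sub']
    exact sub_le_self _ (hΨ_nonneg n)

theorem integral_relDissipation_mul_le (n : ℕ) :
    ∫ ω, relDissipation g (X n ω) * adaStepsize S n ω ^ 2 * ‖ξ n ω‖ ^ 2 ∂P
      ≤ σ * ∫ ω, adaStepsize S n ω ^ 2 * logDissipation g (X n ω) ∂P := by
  have hint := h.integrable_relDissipation_mul hg hK hg0 n
  have hmeas : StronglyMeasurable[ℱ n]
      fun ω => relDissipation g (X n ω) * adaStepsize S n ω ^ 2 :=
    ((continuous_relDissipation hg.continuous hK.continuous hg0).comp_stronglyMeasurable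
      (h.stronglyMeasurable_iterate n)).mul ((h.stronglyMeasurable_adaStepsize n).pow 2)
  rw [← integral_const_mul, ← integral_condExp (ℱ.le n)]
  refine integral_mono_ae integrable_condExp
    ((h.integrable_sq_adaStepsize_mul_logDissipation hg hK hg0 n).const_mul σ) ?_
  filter_upwards [condExp_mul_of_stronglyMeasurable_left hmeas hint
    (h.memLp_estimate n).norm.integrable_sq, h.condExp_sq_norm_estimate_le n] with ω hpull hvar
  have hrel := relDissipation_nonneg hg0 (X n ω)
  refine (hpull.trans_le (mul_le_mul_of_nonneg_left hvar (by positivity))).trans_eq ?_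
  rw [← relDissipation_mul]
  ring

theorem integrable_softPosPart_logPotential
    (hX0 : Integrable (fun ω => logPotential g (X 0 ω)) P) (C : ℝ) (n : ℕ) :
    Integrable (fun ω => softPosPart (logPotential g (X n ω) - C)) P := by
  have hu := (h.integrable_logPotential hg hK hg0 hX0 n).sub (integrable_const C)
  refine hu.mono (continuous_softPosPart.comp_aestronglyMeasurable hu.1) (.of_forall fun ω => ?_)
  rw [Real.norm_of_nonneg (softPosPart_nonneg _)]
  exact softPosPart_le_abs _

theorem integrable_driftError (a b : ℝ) (n : ℕ) : Integrable (driftError g a b X ξ S n) P := by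
  have hW (k : ℕ) : Integrable (adaStepsize S k) P := (h.memLp_top_adaStepsize k).integrable le_top
  exact (((hW n).sub (hW (n + 1))).const_mul a).add
    ((h.integrable_relDissipation_mul hg hK hg0 n).const_mul b)

theorem summable_integral_driftError (hX0 : Integrable (fun ω => logPotential g (X 0 ω)) P)
    (a b : ℝ) : Summable fun n => ∫ ω, driftError g a b X ξ S n ω ∂P := by
  have hrel : Summable fun n =>
      ∫ ω, relDissipation g (X n ω) * adaStepsize S n ω ^ 2 * ‖ξ n ω‖ ^ 2 ∂P := by
    refine .of_nonneg_of_le (fun n => integral_nonneg fun ω => ?_)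
      (h.integral_relDissipation_mul_le hg hK hg0)
      ((h.summable_integral_sq_adaStepsize_mul_logDissipation hg hK hg0 hX0).mul_left σ)
    have := relDissipation_nonneg hg0 (X n ω)
    simp only [Pi.zero_apply]
    positivity
  refine ((h.summable_integral_adaStepsize_sub.mul_left a).add (hrel.mul_left b)).congr fun n => ?_
  have hW (k : ℕ) : Integrable (adaStepsize S k) P := (h.memLp_top_adaStepsize k).integrable le_top
  rw [← integral_const_mul, ← integral_const_mul]
  exact (integral_add (((hW n).sub (hW (n + 1))).const_mul a)
    ((h.integrable_relDissipation_mul hg hK hg0 n).const_mul b)).symm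

theorem ae_bddAbove_logPotential (hX0 : Integrable (fun ω => logPotential g (X 0 ω)) P) {δ : ℝ}
    (hδ : 0 < δ) (hflat : ∀ᶠ x in cobounded E, δ < ‖∇ g x‖) :
    ∀ᵐ ω ∂P, BddAbove (Set.range fun n => logPotential g (X n ω)) := by
  have hα := h.factor_pos
  have hσ := h.variance_pos
  obtain ⟨C, D, hD, hstep⟩ := h.exists_softPosPart_logPotential_succ_le hg hK hg0 hδ hflat
  obtain ⟨B, hB⟩ := h.exists_adaStepsize_le
  have hu_meas (n : ℕ) : StronglyMeasurable[ℱ n] fun ω => logPotential g (X n ω) - C :=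
    ((continuous_logPotential hg.continuous hg0).comp_stronglyMeasurable
      (h.stronglyMeasurable_iterate n)).sub stronglyMeasurable_const
  have hf_int := h.integrable_softPosPart_logPotential hg hK hg0 hX0 C
  have he_int := h.integrable_driftError hg hK hg0 (α / 2 * (σ * (2 * K + 1))) D
  have hdrift (n : ℕ) := h.mul_logDissipation_le_condExp hg hK hg0 n
    (continuous_unitClamp.comp_stronglyMeasurable (hu_meas n)) (fun _ => unitClamp_nonneg _)
    (fun _ => unitClamp_le_one _) (h.stronglyMeasurable_adaStepsize n) (hB n)
    (adaStepsize_nonneg S (n + 1)) (h.adaStepsize_succ_le n)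
    (((hf_int n).add (he_int n)).sub (hf_int (n + 1))) fun ω => by
      simp only [Pi.sub_apply, Pi.add_apply, driftError]
      linarith [hstep n ω]
  have hbdd := ae_bddAbove_range_of_condExp_add_sub_nonneg
    (fun n => continuous_softPosPart.comp_stronglyMeasurable (hu_meas n)) hf_int he_int
    (fun n => EventuallyLE.trans (.of_forall fun ω => mul_nonneg (half_pos hα).le
      (mul_nonneg (adaStepsize_nonneg S n ω)
        (mul_nonneg (unitClamp_nonneg _) (logDissipation_nonneg hg0 _)))) (hdrift n))
    (fun n => .of_forall fun ω => softPosPart_nonneg _)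
    (fun n => .of_forall fun ω => h.driftError_nonneg hg0 (by positivity) hD n ω)
    (h.summable_integral_driftError hg hK hg0 hX0 _ _)
  filter_upwards [hbdd] with ω ⟨R, hR⟩
  refine ⟨R + 1 / 2 + C, Set.forall_mem_range.2 fun n => ?_⟩
  linarith [hR (Set.mem_range_self n), le_softPosPart_add_half (logPotential g (X n ω) - C)]

end IsAdaGradNorm

theorem adagrad_norm_iterate_stability_general [IsFiniteMeasure P] {K : ℝ≥0} {δ : ℝ}
    (h : IsAdaGradNorm P ℱ g α σ X ξ S) (hg : Differentiable ℝ g) (hK : LipschitzWith K (∇ g))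
    (hg0 : ∀ x, 0 ≤ g x) (hδ : 0 < δ) (hflat : ∀ᶠ x in cobounded E, δ < ‖∇ g x‖)
    (hcoercive : Tendsto g (cobounded E) atTop)
    (hX0 : Integrable (fun ω => logPotential g (X 0 ω)) P) :
    ∀ᵐ ω ∂P, ∃ C, ∀ n, ‖X n ω‖ ≤ C := by
  filter_upwards [h.ae_bddAbove_logPotential hg hK hg0 hX0 hδ hflat] with ω ⟨R, hR⟩
  have hsublevel : IsBounded {x | g x ≤ Real.exp R} := by
    rw [isBounded_def]
    filter_upwards [hcoercive.eventually_gt_atTop (Real.exp R)] with x hx using not_le.2 hx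
  obtain ⟨C, hC⟩ := hsublevel.exists_norm_le
  refine ⟨C, fun n => hC _ ?_⟩
  have hlog : Real.log (1 + g (X n ω)) ≤ R := hR (Set.mem_range_self n)
  have hexp := (Real.log_le_iff_le_exp (add_pos_of_pos_of_nonneg one_pos (hg0 _))).1 hlog
  exact (le_add_of_nonneg_left zero_le_one).trans hexp

end AdaGradNorm

/-- Corollary 4.3 (Stability of iterates for AdaGrad-Norm): under coercivity of `g`,
`sup_{n≥1} ‖θ_n‖ < +∞` almost surely. -/
theorem adagrad_norm_iterate_stability
    {d : ℕ} {Ω : Type*} {m0 : MeasurableSpace Ω} (P : Measure Ω) [IsProbabilityMeasure P]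
    (ℱ : Filtration ℕ m0)
    (g : EuclideanSpace ℝ (Fin d) → ℝ)
    (L σ₀ σ₁ α₀ S₀ δt : ℝ)
    (hL : 0 < L) (hσ₀ : 0 ≤ σ₀) (hσ₁ : 0 ≤ σ₁) (hα₀ : 0 < α₀) (hS₀ : 0 < S₀)
    (hg_diff : ContDiff ℝ 1 g)
    (hg_nonneg : ∀ x, 0 ≤ g x)
    (hg_smooth : ∀ x y, ‖gradient g x - gradient g y‖ ≤ L * ‖x - y‖)
    (hδt : 0 < δt)
    (hflat : ∀ᶠ x in Bornology.cobounded (EuclideanSpace ℝ (Fin d)),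
      δt < ‖gradient g x‖)
    (hg_coercive : Tendsto g (Bornology.cobounded (EuclideanSpace ℝ (Fin d))) atTop)
    (θ₁ : EuclideanSpace ℝ (Fin d))
    (G θ : ℕ → Ω → EuclideanSpace ℝ (Fin d))
    (S : ℕ → Ω → ℝ)
    (hG_meas : ∀ n, 1 ≤ n → StronglyMeasurable[ℱ n] (G n))
    (hG_int : ∀ n, 1 ≤ n → Integrable (G n) P)
    (hG_sq_int : ∀ n, 1 ≤ n → Integrable (fun ω => ‖G n ω‖ ^ 2) P)
    (hθ_adapted : ∀ n, 1 ≤ n → StronglyMeasurable[ℱ (n - 1)] (θ n))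
    (hθ_init : ∀ ω, θ 1 ω = θ₁)
    (hS_init : ∀ ω, S 0 ω = S₀)
    (hS_rec : ∀ n, 1 ≤ n → ∀ ω, S n ω = S (n - 1) ω + ‖G n ω‖ ^ 2)
    (hθ_rec : ∀ n, 1 ≤ n → ∀ ω,
      θ (n + 1) ω = θ n ω - (α₀ / Real.sqrt (S n ω)) • G n ω)
    (hG_unbiased : ∀ n, 1 ≤ n →
      P[G n | ℱ (n - 1)] =ᵐ[P] fun ω => gradient g (θ n ω))
    (hG_var : ∀ n, 1 ≤ n → ∀ᵐ ω ∂P,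
      (P[fun ω => ‖G n ω‖ ^ 2 | ℱ (n - 1)]) ω ≤ σ₀ * ‖gradient g (θ n ω)‖ ^ 2 + σ₁) :
    ∀ᵐ ω ∂P, ∃ C : ℝ, ∀ n, 1 ≤ n → ‖θ n ω‖ ≤ C := by
  have hgrad : LipschitzWith L.toNNReal (gradient g) :=
    .of_dist_le' fun x y => by simpa only [dist_eq_norm] using hg_smooth x y
  have hada : IsAdaGradNorm P ℱ g α₀ (σ₀ + σ₁ + 1) (fun n => θ (n + 1)) (fun n => G (n + 1)) S :=
    { factor_pos := hα₀
      variance_pos := by positivity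
      exists_le_accum_zero := ⟨S₀, hS₀, fun ω => (hS_init ω).ge⟩
      stronglyMeasurable_accum_zero := funext hS_init ▸ stronglyMeasurable_const
      stronglyMeasurable_iterate_zero := hθ_adapted 1 le_rfl
      stronglyMeasurable_estimate := fun n => hG_meas (n + 1) n.succ_pos
      memLp_estimate := fun n => (memLp_two_iff_integrable_sq_norm
        (hG_int (n + 1) n.succ_pos).1).2 (hG_sq_int (n + 1) n.succ_pos)
      accum_succ := fun n => hS_rec (n + 1) n.succ_pos
      iterate_succ := fun n => hθ_rec (n + 1) n.succ_pos
      condExp_estimate := fun n => hG_unbiased (n + 1) n.succ_pos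
      condExp_sq_norm_estimate_le := fun n => by
        filter_upwards [hG_var (n + 1) n.succ_pos] with ω hω
        refine hω.trans ?_
        nlinarith [sq_nonneg ‖gradient g (θ (n + 1) ω)‖] }
  filter_upwards [adagrad_norm_iterate_stability_general hada (hg_diff.differentiable one_ne_zero)
    hgrad hg_nonneg hδt hflat hg_coercive (by simp [hθ_init])] with ω ⟨C, hC⟩
  exact ⟨C, fun n hn => by simpa only [Nat.sub_add_cancel hn] using hC (n - 1)⟩
end

section
/- Almost sure convergence of AdaGrad-Norm: for any deterministic initial point θ₁ ∈ ℝ^d and any S₀ > 0, almost surely lim_{n→∞} ‖∇g(θ_n)‖ = 0. -/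
open MeasureTheory Filter Topology

/-!
Write `Sₙ` for the accumulator before the `n`-th stochastic gradient is drawn. A Lyapunov function
of the form `g(θₙ)/√Sₙ + c(‖∇g(θₙ)‖)/Sₙ`, whose second term absorbs the correlation between the
stochastic gradient and its own step size, decreases in expectation by a multiple of
`E[‖∇g(θₙ)‖²/Sₙ]`, so these expectations are summable. Where `‖∇g‖ ≥ δ`, the affine variance bound
is itself at most a multiple of `‖∇g‖²`, so there the second-order errors are almost surely summable
and the martingale noise converges.

If `S` stays bounded the theorem follows at once. Otherwise the trajectory is, away from the
critical points, asymptotically a gradient descent whose steps tend to zero, and it keeps returning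
close to the critical points, since away from them `S` would stay bounded. Each passage upwards
through a band of values of `g` free of critical values would increase `g` where the descent
decreases it; by the weak Sard condition such bands separate any two levels, so `g(θₙ)` converges.
An excursion on which `‖∇g‖` climbs from `δ` to `2δ` costs a fixed amount of `g`, so only finitely
many occur.
-/

open scoped Gradient NNReal RealInnerProductSpace

section SmoothFunctions

variable {E : Type*} [NormedAddCommGroup E] [InnerProductSpace ℝ E] {g : E → ℝ}

theorem hasDerivAt_along_line [CompleteSpace E] (hg : Differentiable ℝ g)
    (x v : E) (t : ℝ) :
    HasDerivAt (fun s : ℝ => g (x + s • v)) ⟪∇ g (x + t • v), v⟫ t := by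
  have hline : HasDerivAt (fun s : ℝ => x + s • v) v t := by
    simpa using ((hasDerivAt_id t).smul_const v).const_add x
  rw [inner_gradient_left]
  exact (hg (x + t • v)).hasFDerivAt.comp_hasDerivAt t hline

theorem le_quadratic_of_lipschitzWith_gradient [CompleteSpace E] {L : ℝ≥0}
    (hg : Differentiable ℝ g) (hlip : LipschitzWith L (∇ g)) (x y : E) :
    g y ≤ g x + ⟪∇ g x, y - x⟫ + L / 2 * ‖y - x‖ ^ 2 := by
  let v := y - x
  let gap : ℝ → ℝ := fun t => g (x + t • v) - t * ⟪∇ g x, v⟫ - L / 2 * ‖v‖ ^ 2 * t ^ 2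
  have hderiv (t : ℝ) : HasDerivAt gap
      (⟪∇ g (x + t • v), v⟫ - ⟪∇ g x, v⟫ - L / 2 * ‖v‖ ^ 2 * (2 * t)) t := by
    simpa [gap] using ((hasDerivAt_along_line hg x v t).fun_sub
      ((hasDerivAt_id t).mul_const ⟪∇ g x, v⟫)).fun_sub
      ((hasDerivAt_pow 2 t).const_mul (L / 2 * ‖v‖ ^ 2))
  have hnonpos (t : ℝ) (ht : 0 ≤ t) :
      ⟪∇ g (x + t • v), v⟫ - ⟪∇ g x, v⟫ - L / 2 * ‖v‖ ^ 2 * (2 * t) ≤ 0 := by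
    have hlip_t : ‖∇ g (x + t • v) - ∇ g x‖ ≤ L * (t * ‖v‖) := by
      simpa [norm_smul, abs_of_nonneg ht] using hlip.norm_sub_le (x + t • v) x
    have hinner := real_inner_le_norm (∇ g (x + t • v) - ∇ g x) v
    rw [inner_sub_left] at hinner
    nlinarith [mul_le_mul_of_nonneg_right hlip_t (norm_nonneg v)]
  have hanti : AntitoneOn gap (Set.Ici 0) :=
    antitoneOn_of_deriv_nonpos (convex_Ici 0)
      (fun t _ => (hderiv t).continuousAt.continuousWithinAt)
      (fun t _ => (hderiv t).differentiableAt.differentiableWithinAt)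
      fun t ht => (hderiv t).deriv ▸ hnonpos t (interior_subset ht)
  have hgap : gap 1 ≤ gap 0 := hanti Set.self_mem_Ici (Set.mem_Ici.2 zero_le_one) zero_le_one
  have hgap_zero : gap 0 = g x := by simp [gap]
  have hgap_one : gap 1 = g y - ⟪∇ g x, v⟫ - L / 2 * ‖v‖ ^ 2 := by simp [gap, v]
  linarith

theorem norm_gradient_le_of_forall_le_add_mul_norm_sub [CompleteSpace E] {x : E} {δ : ℝ}
    (hg : Differentiable ℝ g) (hδ : 0 ≤ δ) (hx : ∀ z, g x ≤ g z + δ * ‖z - x‖) : ‖∇ g x‖ ≤ δ := by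
  let v := -∇ g x
  have hmin : IsMinOn (fun t : ℝ => g (x + t • v) + δ * (t * ‖v‖)) (Set.Ici 0) 0 := by
    intro t ht
    simpa [norm_smul, abs_of_nonneg (Set.mem_Ici.1 ht)] using hx (x + t • v)
  have hderiv : HasDerivAt (fun t : ℝ => g (x + t • v) + δ * (t * ‖v‖))
      (⟪∇ g x, v⟫ + δ * ‖v‖) 0 := by
    simpa using (hasDerivAt_along_line hg x v 0).fun_add
      (((hasDerivAt_id (0 : ℝ)).mul_const ‖v‖).const_mul δ)
  have hcone : (1 : ℝ) ∈ posTangentConeAt (Set.Ici 0) 0 :=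
    mem_posTangentConeAt_of_segment_subset
      ((convex_Ici 0).segment_subset Set.self_mem_Ici (by simp))
  have hslope := hmin.localize.hasFDerivWithinAt_nonneg
    hderiv.hasFDerivAt.hasFDerivWithinAt hcone
  have hsq : ‖∇ g x‖ * ‖∇ g x‖ ≤ δ * ‖∇ g x‖ := by
    simpa [v, -inner_gradient_left, inner_neg_right, ← real_inner_self_eq_norm_mul_norm]
      using hslope
  exact le_of_not_gt fun hlt =>
    hsq.not_gt (mul_lt_mul_of_pos_right hlt (hδ.trans_lt hlt))

theorem isBounded_setOf_norm_gradient_le [CompleteSpace E] {δ : ℝ}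
    (hflat : ∀ᶠ x in Bornology.cobounded E, δ < ‖∇ g x‖) :
    Bornology.IsBounded {x | ‖∇ g x‖ ≤ δ} :=
  Bornology.isBounded_def.2 (hflat.mono fun _ hx => hx.not_ge)

theorem isBounded_sublevel_of_eventually_lt_norm_gradient [ProperSpace E] {δ : ℝ}
    (hg : Differentiable ℝ g) (hg_nonneg : ∀ x, 0 ≤ g x) (hδ : 0 < δ)
    (hflat : ∀ᶠ x in Bornology.cobounded E, δ < ‖∇ g x‖) (c : ℝ) :
    Bornology.IsBounded {x | g x ≤ c} := by
  obtain ⟨R, hR⟩ := (isBounded_setOf_norm_gradient_le hflat).exists_norm_le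
  -- The penalised function `g + δ‖· - x‖` attains its minimum at a `δ`-critical point near `x`.
  refine isBounded_iff_forall_norm_le.2 ⟨R + c / δ, fun x hx => ?_⟩
  have hpenalty : Tendsto (fun y => g y + δ * ‖y - x‖) (cocompact E) atTop := by
    refine tendsto_atTop_mono (fun y => le_add_of_nonneg_left (hg_nonneg y))
      (Tendsto.const_mul_atTop hδ ?_)
    simpa only [dist_eq_norm] using tendsto_dist_right_cocompact_atTop x
  have hcont : Continuous fun y => g y + δ * ‖y - x‖ := hg.continuous.add (by fun_prop)
  obtain ⟨y, hy⟩ := hcont.exists_forall_le hpenalty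
  have hcrit : ‖∇ g y‖ ≤ δ := by
    refine norm_gradient_le_of_forall_le_add_mul_norm_sub hg hδ.le fun z => ?_
    have htri := mul_le_mul_of_nonneg_left (norm_sub_le_norm_sub_add_norm_sub z y x) hδ.le
    linarith [hy z]
  have hnear : ‖y - x‖ ≤ c / δ := by
    rw [le_div_iff₀' hδ]
    have hgx : g x ≤ c := hx
    have hyx := hy x
    simp only [sub_self, norm_zero, mul_zero, add_zero] at hyx
    linarith [hg_nonneg y]
  calc ‖x‖ ≤ ‖y‖ + ‖y - x‖ := norm_le_norm_add_norm_sub y x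
    _ ≤ R + c / δ := add_le_add (hR y hcrit) hnear

theorem isCompact_sublevel_of_eventually_lt_norm_gradient [ProperSpace E] {δ : ℝ}
    (hg : Differentiable ℝ g) (hg_nonneg : ∀ x, 0 ≤ g x) (hδ : 0 < δ)
    (hflat : ∀ᶠ x in Bornology.cobounded E, δ < ‖∇ g x‖) (c : ℝ) :
    IsCompact {x | g x ≤ c} :=
  Metric.isCompact_of_isClosed_isBounded (isClosed_le hg.continuous continuous_const)
    (isBounded_sublevel_of_eventually_lt_norm_gradient hg hg_nonneg hδ hflat c)

theorem exists_le_of_norm_gradient_le [ProperSpace E] {δ : ℝ} (hg : Differentiable ℝ g)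
    (hflat : ∀ᶠ x in Bornology.cobounded E, δ < ‖∇ g x‖) :
    ∃ c, ∀ x, ‖∇ g x‖ ≤ δ → g x ≤ c := by
  obtain ⟨c, hc⟩ := (isBounded_setOf_norm_gradient_le hflat).isCompact_closure.bddAbove_image
    hg.continuous.continuousOn
  exact ⟨c, fun x hx => hc (Set.mem_image_of_mem g (subset_closure hx))⟩

theorem exists_noncritical_band [CompleteSpace E] (hg : Continuous g)
    (hg' : Continuous (∇ g)) (hcompact : ∀ c, IsCompact {x | g x ≤ c})
    (hsard : IsNowhereDense {y | ∃ x, ∇ g x = 0 ∧ g x = y}) {a b : ℝ} (hab : a < b) :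
    ∃ a' b' δ, a < a' ∧ a' < b' ∧ b' < b ∧ 0 < δ ∧ ∀ x, g x ∈ Set.Icc a' b' → δ ≤ ‖∇ g x‖ := by
  obtain ⟨y, hy, hy_regular⟩ : ∃ y ∈ Set.Ioo a b, y ∉ closure {y | ∃ x, ∇ g x = 0 ∧ g x = y} := by
    by_contra! hcrit
    have := interior_mono (show Set.Ioo a b ⊆ _ from hcrit)
    rw [hsard, interior_Ioo, Set.subset_empty_iff, Set.Ioo_eq_empty_iff] at this
    exact this hab
  obtain ⟨r, hr, hball⟩ := Metric.isOpen_iff.1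
    (isOpen_Ioo.inter isClosed_closure.isOpen_compl) y ⟨hy, hy_regular⟩
  rw [Real.ball_eq_Ioo] at hball
  have hIcc {z : ℝ} (hz : z ∈ Set.Icc (y - r / 2) (y + r / 2)) :=
    hball (show z ∈ Set.Ioo (y - r) (y + r) from ⟨by linarith [hz.1], by linarith [hz.2]⟩)
  have hband_compact : IsCompact {x | g x ∈ Set.Icc (y - r / 2) (y + r / 2)} :=
    (hcompact (y + r / 2)).of_isClosed_subset (isClosed_Icc.preimage hg) fun x hx => hx.2
  obtain ⟨δ, hδ, hδ_le⟩ := hband_compact.exists_forall_le' hg'.norm.continuousOn (a := 0)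
    fun x hx => norm_pos_iff.2 fun hzero => (hIcc hx).2 (subset_closure ⟨x, hzero, rfl⟩)
  exact ⟨y - r / 2, y + r / 2, δ, (hIcc (Set.left_mem_Icc.2 (by linarith))).1.1, by linarith,
    (hIcc (Set.right_mem_Icc.2 (by linarith))).1.2, hδ, hδ_le⟩

end SmoothFunctions

section AsymptoticDescent

variable {E : Type*} [NormedAddCommGroup E] [InnerProductSpace ℝ E]

/-- The region where the norm of the gradient of `g` lies between `δ` and `M`. -/
def gradientShell [CompleteSpace E] (g : E → ℝ) (δ M : ℝ) : Set E :=
  {x | δ ≤ ‖∇ g x‖ ∧ ‖∇ g x‖ ≤ M}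

/-- A sequence that behaves like gradient descent for `g` with step sizes `η`: along each late
excursion inside a shell `gradientShell g δ M` with `0 < δ`, the objective decreases and the iterate
moves as they would under exact gradient descent, up to an error `ε` for the whole excursion. -/
structure AsymptoticGradientDescent [CompleteSpace E] (g : E → ℝ) (η : ℕ → ℝ) (θ : ℕ → E) :
    Prop where
  step_nonneg : ∀ n, 0 ≤ η n
  tendsto_norm_sub : Tendsto (fun n => ‖θ (n + 1) - θ n‖) atTop (𝓝 0)
  frequently_norm_gradient_lt : ∀ δ > 0, ∃ᶠ n in atTop, ‖∇ g (θ n)‖ < δ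
  eventually_objective_le : ∀ δ > 0, ∀ M, ∀ ε > 0, ∀ᶠ n in atTop, ∀ m ≥ n,
    (∀ k ∈ Finset.Ico n m, θ k ∈ gradientShell g δ M) →
      g (θ m) + ∑ k ∈ Finset.Ico n m, η k * ‖∇ g (θ k)‖ ^ 2 ≤ g (θ n) + ε
  eventually_norm_sub_le : ∀ δ > 0, ∀ M, ∀ ε > 0, ∀ᶠ n in atTop, ∀ m ≥ n,
    (∀ k ∈ Finset.Ico n m, θ k ∈ gradientShell g δ M) →
      ‖θ m - θ n‖ ≤ ∑ k ∈ Finset.Ico n m, η k * ‖∇ g (θ k)‖ + ε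

theorem exists_passage {p q : ℕ → Prop} (hp : ∃ᶠ n in atTop, p n) (hq : ∃ᶠ n in atTop, q n)
    (N : ℕ) : ∃ n ≥ N, ∃ m > n, p n ∧ q m ∧ ∀ k ∈ Finset.Ico (n + 1) m, ¬ p k ∧ ¬ q k := by
  classical
  obtain ⟨n₀, hn₀, hpn₀⟩ := frequently_atTop.1 hp N
  have hex : ∃ m, n₀ < m ∧ q m := by
    obtain ⟨m, hm, hqm⟩ := frequently_atTop.1 hq (n₀ + 1)
    exact ⟨m, hm, hqm⟩
  let m := Nat.find hex
  let n := Nat.findGreatest p (m - 1)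
  obtain ⟨hn₀m, hqm⟩ : n₀ < m ∧ q m := Nat.find_spec hex
  have hn₀_le : n₀ ≤ m - 1 := Nat.le_sub_one_of_lt hn₀m
  have hn₀n : n₀ ≤ n := Nat.le_findGreatest hn₀_le hpn₀
  have hnm : n ≤ m - 1 := Nat.findGreatest_le (m - 1)
  refine ⟨n, hn₀.trans hn₀n, m, by omega, Nat.findGreatest_spec hn₀_le hpn₀, hqm,
    fun k hk => ?_⟩
  obtain ⟨hnk, hkm⟩ := Finset.mem_Ico.1 hk
  exact ⟨Nat.findGreatest_is_greatest (n := m - 1) hnk (by omega),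
    fun hqk => Nat.find_min hex hkm ⟨by omega, hqk⟩⟩

namespace AsymptoticGradientDescent

variable {g : E → ℝ} {η : ℕ → ℝ} {θ : ℕ → E}

theorem eventually_mul_norm_sub_le [CompleteSpace E] (h : AsymptoticGradientDescent g η θ)
    {δ ε : ℝ} (hδ : 0 < δ) (hε : 0 < ε) (M : ℝ) :
    ∀ᶠ n in atTop, ∀ m ≥ n, (∀ k ∈ Finset.Ico n m, θ k ∈ gradientShell g δ M) →
      δ * ‖θ m - θ n‖ ≤ g (θ n) - g (θ m) + ε := by
  filter_upwards [h.eventually_objective_le δ hδ M (ε / 2) (by positivity),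
    h.eventually_norm_sub_le δ hδ M (ε / (2 * δ)) (by positivity)] with n hobj hmove m hm hshell
  have hsum : δ * ∑ k ∈ Finset.Ico n m, η k * ‖∇ g (θ k)‖
      ≤ ∑ k ∈ Finset.Ico n m, η k * ‖∇ g (θ k)‖ ^ 2 := by
    rw [Finset.mul_sum]
    refine Finset.sum_le_sum fun k hk => ?_
    rw [mul_left_comm, sq]
    have := h.step_nonneg k
    gcongr
    exact (hshell k hk).1
  calc δ * ‖θ m - θ n‖
      ≤ δ * (∑ k ∈ Finset.Ico n m, η k * ‖∇ g (θ k)‖ + ε / (2 * δ)) := by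
        gcongr
        exact hmove m hm hshell
    _ = δ * ∑ k ∈ Finset.Ico n m, η k * ‖∇ g (θ k)‖ + ε / 2 := by field_simp
    _ ≤ g (θ n) - g (θ m) + ε := by linarith [hobj m hm hshell]

theorem eventually_objective_succ_lt [CompleteSpace E] (h : AsymptoticGradientDescent g η θ)
    {L : ℝ≥0} (hg : Differentiable ℝ g) (hlip : LipschitzWith L (∇ g)) {a ε M : ℝ} (hε : 0 < ε)
    (hM : ∀ x, g x ≤ a → ‖∇ g x‖ ≤ M) :
    ∀ᶠ n in atTop, g (θ n) ≤ a → g (θ (n + 1)) < g (θ n) + ε := by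
  have hincrement : Tendsto
      (fun n => M * ‖θ (n + 1) - θ n‖ + L / 2 * ‖θ (n + 1) - θ n‖ ^ 2) atTop (𝓝 0) := by
    simpa using (h.tendsto_norm_sub.const_mul M).add
      ((h.tendsto_norm_sub.pow 2).const_mul (L / 2 : ℝ))
  filter_upwards [hincrement.eventually_lt_const hε] with n hn hlow
  have hinner : ⟪∇ g (θ n), θ (n + 1) - θ n⟫ ≤ M * ‖θ (n + 1) - θ n‖ :=
    (real_inner_le_norm _ _).trans (mul_le_mul_of_nonneg_right (hM _ hlow) (norm_nonneg _))
  linarith [le_quadratic_of_lipschitzWith_gradient hg hlip (θ n) (θ (n + 1))]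

theorem not_frequently_crossing [CompleteSpace E] (h : AsymptoticGradientDescent g η θ)
    {L : ℝ≥0} (hg : Differentiable ℝ g) (hlip : LipschitzWith L (∇ g)) {a b δ M : ℝ} (hab : a < b)
    (hδ : 0 < δ) (hM : ∀ x, g x ≤ b → ‖∇ g x‖ ≤ M)
    (hband : ∀ x, g x ∈ Set.Icc a b → δ ≤ ‖∇ g x‖) :
    ¬ ((∃ᶠ n in atTop, g (θ n) ≤ a) ∧ ∃ᶠ n in atTop, b ≤ g (θ n)) := by
  rintro ⟨hlow, hhigh⟩
  have hε : 0 < (b - a) / 3 := by linarith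
  obtain ⟨N₁, hjump⟩ := eventually_atTop.1
    (h.eventually_objective_succ_lt hg hlip hε fun x hx => hM x (hx.trans hab.le))
  obtain ⟨N₂, hdescent⟩ := eventually_atTop.1 (h.eventually_mul_norm_sub_le hδ hε M)
  obtain ⟨n, hn, m, hnm, hna, hmb, hbetween⟩ := exists_passage hlow hhigh (max N₁ N₂)
  have hshell (k : ℕ) (hk : k ∈ Finset.Ico (n + 1) m) : θ k ∈ gradientShell g δ M := by
    obtain ⟨hak, hkb⟩ := (hbetween k hk).imp lt_of_not_ge lt_of_not_ge
    exact ⟨hband _ ⟨hak.le, hkb.le⟩, hM _ hkb.le⟩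
  have hgain := hdescent (n + 1) (by omega) m hnm hshell
  have hstart := hjump n (by omega) hna
  linarith [mul_nonneg hδ.le (norm_nonneg (θ m - θ (n + 1)))]

section Convergence

variable [CompleteSpace E] (h : AsymptoticGradientDescent g η θ) {L : ℝ≥0}
  (hg : Differentiable ℝ g) (hlip : LipschitzWith L (∇ g))
  (hcompact : ∀ c, IsCompact {x | g x ≤ c})
  (hsard : IsNowhereDense {y | ∃ x, ∇ g x = 0 ∧ g x = y})

include h hg hlip hcompact hsard

theorem not_frequently_upcrossing {a b : ℝ} (hab : a < b) :
    ¬ ((∃ᶠ n in atTop, g (θ n) ≤ a) ∧ ∃ᶠ n in atTop, b ≤ g (θ n)) := by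
  obtain ⟨a', b', δ, haa', hab', hbb', hδ, hband⟩ :=
    exists_noncritical_band hg.continuous hlip.continuous hcompact hsard hab
  obtain ⟨M, hM⟩ := (hcompact b').exists_bound_of_continuousOn hlip.continuous.continuousOn
  exact fun hcross => h.not_frequently_crossing hg hlip hab' hδ hM hband
    (hcross.imp (Frequently.mono · fun _ hn => hn.trans haa'.le)
      (Frequently.mono · fun _ hn => hbb'.le.trans hn))

theorem eventually_objective_lt {δ c : ℝ} (hδ : 0 < δ) (hc : ∀ x, ‖∇ g x‖ ≤ δ → g x ≤ c) :
    ∀ᶠ n in atTop, g (θ n) < c + 1 := by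
  by_contra hhigh
  exact h.not_frequently_upcrossing hg hlip hcompact hsard (lt_add_one c)
    ⟨(h.frequently_norm_gradient_lt δ hδ).mono fun n hn => hc _ hn.le,
      (not_eventually.1 hhigh).mono fun n hn => not_lt.1 hn⟩

theorem exists_tendsto_objective {c : ℝ} (hbdd : ∀ᶠ n in atTop, g (θ n) < c) :
    ∃ l, Tendsto (fun n => g (θ n)) atTop (𝓝 l) := by
  obtain ⟨lower, hlower⟩ := (hcompact c).bddBelow_image hg.continuous.continuousOn
  refine tendsto_of_no_upcrossings dense_univ (fun a _ b _ hab hcross => ?_)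
    (isBoundedUnder_of_eventually_le (a := c) (hbdd.mono fun n hn => hn.le))
    (isBoundedUnder_of_eventually_ge (a := lower)
      (hbdd.mono fun n hn => hlower ⟨θ n, hn.le, rfl⟩))
  exact h.not_frequently_upcrossing hg hlip hcompact hsard hab
    (hcross.imp (Frequently.mono · fun _ hn => hn.le) (Frequently.mono · fun _ hn => hn.le))

end Convergence

theorem eventually_norm_sub_lt_of_tendsto_objective [CompleteSpace E]
    (h : AsymptoticGradientDescent g η θ) {l : ℝ}
    (hlim : Tendsto (fun n => g (θ n)) atTop (𝓝 l)) {δ r : ℝ} (hδ : 0 < δ) (hr : 0 < r) (M : ℝ) :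
    ∀ᶠ n in atTop, ∀ m ≥ n, (∀ k ∈ Finset.Ico n m, θ k ∈ gradientShell g δ M) →
      ‖θ m - θ n‖ < r := by
  have hε : 0 < δ * r / 2 := by positivity
  obtain ⟨N, hN⟩ := Metric.cauchySeq_iff.1 hlim.cauchySeq (δ * r / 2) hε
  filter_upwards [eventually_ge_atTop N, h.eventually_mul_norm_sub_le hδ hε M]
    with n hn hcost m hm hshell
  refine lt_of_mul_lt_mul_left ?_ hδ.le
  linarith [hcost m hm hshell, (abs_lt.1 (hN n hn m (le_trans hn hm))).2]

theorem tendsto_norm_gradient_of_tendsto_objective [CompleteSpace E]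
    (h : AsymptoticGradientDescent g η θ) (hcont : UniformContinuous (∇ g)) {l M : ℝ}
    (hlim : Tendsto (fun n => g (θ n)) atTop (𝓝 l))
    (hbdd : ∀ᶠ n in atTop, ‖∇ g (θ n)‖ ≤ M) :
    Tendsto (fun n => ‖∇ g (θ n)‖) atTop (𝓝 0) := by
  refine tendsto_order.2 ⟨fun a ha => .of_forall fun n => ha.trans_le (norm_nonneg _),
    fun ε hε => ?_⟩
  by_contra hlarge
  have hfar : ∃ᶠ n in atTop, ε ≤ ‖∇ g (θ n)‖ :=
    (not_eventually.1 hlarge).mono fun n hn => not_lt.1 hn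
  have hnear := h.frequently_norm_gradient_lt (ε / 2) (half_pos hε)
  obtain ⟨r, hr, hvary⟩ := Metric.uniformContinuous_iff.1 hcont (ε / 2) (half_pos hε)
  obtain ⟨N₁, hexcursion⟩ := eventually_atTop.1
    (h.eventually_norm_sub_lt_of_tendsto_objective hlim (half_pos hε) (half_pos hr) M)
  obtain ⟨N₂, hstep⟩ := eventually_atTop.1
    ((h.tendsto_norm_sub.eventually_lt_const (half_pos hr)).and hbdd)
  obtain ⟨n, hn, m, hnm, hn_near, hm_far, hbetween⟩ := exists_passage hnear hfar (max N₁ N₂)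
  have hshell (k : ℕ) (hk : k ∈ Finset.Ico (n + 1) m) : θ k ∈ gradientShell g (ε / 2) M :=
    ⟨not_lt.1 (hbetween k hk).1, (hstep k (by have := Finset.mem_Ico.1 hk; omega)).2⟩
  have hclose : dist (θ m) (θ n) < r := by
    rw [dist_eq_norm]
    have hsplit := norm_sub_le_norm_sub_add_norm_sub (θ m) (θ (n + 1)) (θ n)
    linarith [hexcursion (n + 1) (by omega) m hnm hshell, (hstep n (by omega)).1]
  have hgap := hvary hclose
  rw [dist_eq_norm] at hgap
  linarith [norm_sub_norm_le (∇ g (θ m)) (∇ g (θ n))]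

theorem tendsto_norm_gradient [CompleteSpace E] (h : AsymptoticGradientDescent g η θ)
    {L : ℝ≥0} (hg : Differentiable ℝ g) (hlip : LipschitzWith L (∇ g))
    (hcompact : ∀ c, IsCompact {x | g x ≤ c})
    (hsard : IsNowhereDense {y | ∃ x, ∇ g x = 0 ∧ g x = y})
    {δ c : ℝ} (hδ : 0 < δ) (hc : ∀ x, ‖∇ g x‖ ≤ δ → g x ≤ c) :
    Tendsto (fun n => ‖∇ g (θ n)‖) atTop (𝓝 0) := by
  have hbdd := h.eventually_objective_lt hg hlip hcompact hsard hδ hc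
  obtain ⟨l, hlim⟩ := h.exists_tendsto_objective hg hlip hcompact hsard hbdd
  obtain ⟨M, hM⟩ := (hcompact (c + 1)).exists_bound_of_continuousOn hlip.continuous.continuousOn
  exact h.tendsto_norm_gradient_of_tendsto_objective hlip.uniformContinuous hlim
    (hbdd.mono fun n hn => hM _ hn.le)

end AsymptoticGradientDescent

end AsymptoticDescent

section AdaGradNormPath

variable {E : Type*} [NormedAddCommGroup E] [InnerProductSpace ℝ E]

/-- A trajectory of AdaGrad-Norm driven by the stochastic gradients `G`; `S n` is the accumulator
available before `G n` is observed. -/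
structure AdaGradNormPath (α : ℝ) (G θ : ℕ → E) (S : ℕ → ℝ) : Prop where
  S_zero_pos : 0 < S 0
  S_succ : ∀ n, S (n + 1) = S n + ‖G n‖ ^ 2
  θ_succ : ∀ n, θ (n + 1) = θ n - (α / √(S (n + 1))) • G n

/-- The noise of the stochastic gradients `G`, scaled by the accumulator that is known before the
noise is drawn. -/
noncomputable def scaledNoise [CompleteSpace E] (g : E → ℝ) (G θ : ℕ → E) (S : ℕ → ℝ) (n : ℕ) : E :=
  (√(S n))⁻¹ • (G n - ∇ g (θ n))

/-- The sums of `f` over late excursions of `θ` inside `A` are uniformly small. -/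
def ExcursionSumsVanish {X F : Type*} [NormedAddCommGroup F] (θ : ℕ → X) (A : Set X)
    (f : ℕ → F) : Prop :=
  ∀ ε > 0, ∀ᶠ n in atTop, ∀ m ≥ n, (∀ k ∈ Finset.Ico n m, θ k ∈ A) →
    ‖∑ k ∈ Finset.Ico n m, f k‖ < ε

/-- The pathwise conditions under which the stochastic errors of AdaGrad-Norm are negligible away
from the critical points of `g`. -/
structure NegligibleNoise [CompleteSpace E] (g : E → ℝ) (G θ : ℕ → E) (S : ℕ → ℝ) : Prop where
  summable_norm_gradient_sq_div : Summable fun n => ‖∇ g (θ n)‖ ^ 2 / S n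
  norm_sq_div : ∀ δ > 0, ExcursionSumsVanish θ {x | δ ≤ ‖∇ g x‖} fun n => ‖G n‖ ^ 2 / S n
  noise : ∀ δ > 0, ExcursionSumsVanish θ {x | δ ≤ ‖∇ g x‖} (scaledNoise g G θ S)
  inner_noise : ∀ δ > 0, ∀ M, ExcursionSumsVanish θ (gradientShell g δ M) fun n =>
    ⟪∇ g (θ n), scaledNoise g G θ S n⟫

namespace ExcursionSumsVanish

variable {X F : Type*} [NormedAddCommGroup F] {θ : ℕ → X} {A B : Set X} {f : ℕ → F}

theorem mono (h : ExcursionSumsVanish θ B f) (hAB : A ⊆ B) : ExcursionSumsVanish θ A f :=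
  fun ε hε => (h ε hε).mono fun _ hn m hm hA => hn m hm fun k hk => hAB (hA k hk)

theorem const_smul [NormedSpace ℝ F] (h : ExcursionSumsVanish θ A f) (c : ℝ) :
    ExcursionSumsVanish θ A fun n => c • f n := by
  intro ε hε
  filter_upwards [h (ε / (‖c‖ + 1)) (by positivity)] with n hn m hm hA
  rw [← Finset.smul_sum, norm_smul]
  calc ‖c‖ * ‖∑ k ∈ Finset.Ico n m, f k‖
      ≤ ‖c‖ * (ε / (‖c‖ + 1)) := by gcongr; exact (hn m hm hA).le
    _ < (‖c‖ + 1) * (ε / (‖c‖ + 1)) := by gcongr; exact lt_add_one _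
    _ = ε := by field_simp

theorem of_cauchySeq {f' : ℕ → F} (hf' : CauchySeq fun n => ∑ k ∈ Finset.range n, f' k)
    (heq : ∀ n, θ n ∈ A → f' n = f n) : ExcursionSumsVanish θ A f := by
  intro ε hε
  obtain ⟨N, hN⟩ := Metric.cauchySeq_iff.1 hf' ε hε
  filter_upwards [eventually_ge_atTop N] with n hn m hm hA
  rw [← Finset.sum_congr rfl fun k hk => heq k (hA k hk), Finset.sum_Ico_eq_sub _ hm,
    ← dist_eq_norm]
  exact hN m (le_trans hn hm) n hn

theorem eventually_norm_lt (h : ExcursionSumsVanish θ A f) {ε : ℝ} (hε : 0 < ε) :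
    ∀ᶠ n in atTop, θ n ∈ A → ‖f n‖ < ε := by
  filter_upwards [h ε hε] with n hn hA
  simpa using hn (n + 1) n.le_succ (by simpa using hA)

end ExcursionSumsVanish

theorem inv_sqrt_sub_inv_sqrt_mul_le {a x : ℝ} (ha : 0 < a) (hx : 0 ≤ x) :
    ((√a)⁻¹ - (√(a + x ^ 2))⁻¹) * x ≤ x ^ 2 / a := by
  have hroot : 0 < √a := Real.sqrt_pos.2 ha
  have hmono : √a ≤ √(a + x ^ 2) := Real.sqrt_le_sqrt (by nlinarith)
  have hdiff : √(a + x ^ 2) - √a ≤ x := by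
    rw [sub_le_iff_le_add]
    refine Real.sqrt_le_iff.2 ⟨by positivity, ?_⟩
    nlinarith [Real.sq_sqrt ha.le]
  calc ((√a)⁻¹ - (√(a + x ^ 2))⁻¹) * x = (√(a + x ^ 2) - √a) * x / (√a * √(a + x ^ 2)) := by
        have := hroot.trans_le hmono
        field_simp
    _ ≤ x * x / (√a * √a) := by gcongr
    _ = x ^ 2 / a := by rw [Real.mul_self_sqrt ha.le, sq]

namespace AdaGradNormPath

variable {α : ℝ} {G θ : ℕ → E} {S : ℕ → ℝ}

theorem S_mono (h : AdaGradNormPath α G θ S) : Monotone S :=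
  monotone_nat_of_le_succ fun n => by rw [h.S_succ]; exact le_add_of_nonneg_right (sq_nonneg _)

theorem S_pos (h : AdaGradNormPath α G θ S) (n : ℕ) : 0 < S n :=
  h.S_zero_pos.trans_le (h.S_mono n.zero_le)

theorem sub_eq (h : AdaGradNormPath α G θ S) (n : ℕ) :
    θ (n + 1) - θ n = -(α / √(S (n + 1))) • G n := by
  rw [h.θ_succ, neg_smul]; abel

theorem norm_sub_sq (h : AdaGradNormPath α G θ S) (n : ℕ) :
    ‖θ (n + 1) - θ n‖ ^ 2 = α ^ 2 * (‖G n‖ ^ 2 / S (n + 1)) := by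
  rw [h.sub_eq, norm_smul, mul_pow, norm_neg, Real.norm_eq_abs, sq_abs, div_pow,
    Real.sq_sqrt (h.S_pos _).le]
  ring

theorem norm_sub_sq_le (h : AdaGradNormPath α G θ S) (n : ℕ) :
    ‖θ (n + 1) - θ n‖ ^ 2 ≤ α ^ 2 * (‖G n‖ ^ 2 / S n) := by
  rw [h.norm_sub_sq]
  have := h.S_pos n
  have := h.S_mono n.le_succ
  gcongr

theorem norm_sub_le (h : AdaGradNormPath α G θ S) (n : ℕ) : ‖θ (n + 1) - θ n‖ ≤ |α| := by
  rw [← abs_norm, ← sq_le_sq, h.norm_sub_sq]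
  refine mul_le_of_le_one_right (sq_nonneg α) ((div_le_one (h.S_pos _)).2 ?_)
  rw [h.S_succ]
  exact le_add_of_nonneg_left (h.S_pos n).le

theorem inv_sqrt_sub_nonneg (h : AdaGradNormPath α G θ S) (n : ℕ) :
    0 ≤ (√(S n))⁻¹ - (√(S (n + 1)))⁻¹ :=
  sub_nonneg.2 (inv_anti₀ (Real.sqrt_pos.2 (h.S_pos n)) (Real.sqrt_le_sqrt (h.S_mono n.le_succ)))

theorem inv_sqrt_sub_mul_norm_le (h : AdaGradNormPath α G θ S) (n : ℕ) :
    ((√(S n))⁻¹ - (√(S (n + 1)))⁻¹) * ‖G n‖ ≤ ‖G n‖ ^ 2 / S n := by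
  rw [h.S_succ]
  exact inv_sqrt_sub_inv_sqrt_mul_le (h.S_pos n) (norm_nonneg _)

section Step

variable [CompleteSpace E] {g : E → ℝ}

theorem sub_add_scaledNoise (h : AdaGradNormPath α G θ S) (n : ℕ) :
    θ (n + 1) - θ n + α • scaledNoise g G θ S n
      = (α * ((√(S n))⁻¹ - (√(S (n + 1)))⁻¹)) • G n - (α / √(S n)) • ∇ g (θ n) := by
  rw [h.sub_eq, scaledNoise]; module

theorem norm_sub_add_scaledNoise_le (h : AdaGradNormPath α G θ S) (hα : 0 ≤ α) (n : ℕ) :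
    ‖θ (n + 1) - θ n + α • scaledNoise g G θ S n‖
      ≤ α / √(S n) * ‖∇ g (θ n)‖ + α * (‖G n‖ ^ 2 / S n) := by
  calc ‖θ (n + 1) - θ n + α • scaledNoise g G θ S n‖
      ≤ α * ((√(S n))⁻¹ - (√(S (n + 1)))⁻¹) * ‖G n‖ + α / √(S n) * ‖∇ g (θ n)‖ := by
        rw [h.sub_add_scaledNoise]
        refine (_root_.norm_sub_le _ _).trans_eq ?_
        rw [norm_smul, norm_smul, Real.norm_of_nonneg (mul_nonneg hα (h.inv_sqrt_sub_nonneg n)),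
          Real.norm_of_nonneg (by positivity)]
    _ ≤ α / √(S n) * ‖∇ g (θ n)‖ + α * (‖G n‖ ^ 2 / S n) := by
        rw [mul_assoc, add_comm]
        gcongr
        exact h.inv_sqrt_sub_mul_norm_le n

theorem objective_succ_le (h : AdaGradNormPath α G θ S) (hα : 0 ≤ α) {L : ℝ≥0} {M : ℝ}
    (hg : Differentiable ℝ g) (hlip : LipschitzWith L (∇ g)) {n : ℕ} (hM : ‖∇ g (θ n)‖ ≤ M) :
    g (θ (n + 1)) + α / √(S n) * ‖∇ g (θ n)‖ ^ 2 + α * ⟪∇ g (θ n), scaledNoise g G θ S n⟫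
      ≤ g (θ n) + (α * M + L / 2 * α ^ 2) * (‖G n‖ ^ 2 / S n) := by
  have hdescent := le_quadratic_of_lipschitzWith_gradient hg hlip (θ n) (θ (n + 1))
  have hquadratic := mul_le_mul_of_nonneg_left (h.norm_sub_sq_le n)
    (show (0 : ℝ) ≤ L / 2 by positivity)
  have hlinear : ⟪∇ g (θ n), θ (n + 1) - θ n⟫ + α / √(S n) * ‖∇ g (θ n)‖ ^ 2
      + α * ⟪∇ g (θ n), scaledNoise g G θ S n⟫
        = α * (((√(S n))⁻¹ - (√(S (n + 1)))⁻¹) * ⟪∇ g (θ n), G n⟫) := by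
    have hinner := congrArg (⟪∇ g (θ n), ·⟫) (h.sub_add_scaledNoise (g := g) n)
    simp only [inner_add_right, inner_sub_right, inner_smul_right, real_inner_self_eq_norm_sq]
      at hinner ⊢
    linarith
  have hcorrection : ((√(S n))⁻¹ - (√(S (n + 1)))⁻¹) * ⟪∇ g (θ n), G n⟫
      ≤ M * (‖G n‖ ^ 2 / S n) :=
    calc ((√(S n))⁻¹ - (√(S (n + 1)))⁻¹) * ⟪∇ g (θ n), G n⟫
        ≤ ((√(S n))⁻¹ - (√(S (n + 1)))⁻¹) * (M * ‖G n‖) := by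
          refine mul_le_mul_of_nonneg_left ?_ (h.inv_sqrt_sub_nonneg n)
          exact (real_inner_le_norm _ _).trans (by gcongr)
      _ = M * (((√(S n))⁻¹ - (√(S (n + 1)))⁻¹) * ‖G n‖) := by ring
      _ ≤ M * (‖G n‖ ^ 2 / S n) :=
          mul_le_mul_of_nonneg_left (h.inv_sqrt_sub_mul_norm_le n) ((norm_nonneg _).trans hM)
  linarith [mul_le_mul_of_nonneg_left hcorrection hα]

end Step

theorem S_le_mul_exp (h : AdaGradNormPath α G θ S) {n m : ℕ} (hnm : n ≤ m) :
    S m ≤ S n * Real.exp (∑ k ∈ Finset.Ico n m, ‖G k‖ ^ 2 / S k) := by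
  induction m, hnm using Nat.le_induction with
  | base => simp
  | succ m hnm ih =>
    rw [Finset.sum_Ico_succ_top hnm, Real.exp_add, ← mul_assoc]
    have hn := h.S_pos n
    have hm := h.S_pos m
    calc S (m + 1) = S m * (‖G m‖ ^ 2 / S m + 1) := by rw [h.S_succ]; field_simp; ring
      _ ≤ _ := by gcongr; exact Real.add_one_le_exp _

section NegligibleNoise

variable [CompleteSpace E] {g : E → ℝ}

theorem frequently_norm_gradient_lt (h : AdaGradNormPath α G θ S)
    (hnoise : NegligibleNoise g G θ S) (hS : Tendsto S atTop atTop) {δ : ℝ} (hδ : 0 < δ) :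
    ∃ᶠ n in atTop, ‖∇ g (θ n)‖ < δ := by
  intro hfar
  obtain ⟨N, hN⟩ := eventually_atTop.1 (hfar.and (hnoise.norm_sq_div δ hδ 1 one_pos))
  have hbdd (m : ℕ) (hm : N ≤ m) : S m ≤ S N * Real.exp 1 := by
    have hsum := (hN N le_rfl).2 m hm fun k hk => not_lt.1 (hN k (Finset.mem_Ico.1 hk).1).1
    have hSN := h.S_pos N
    refine (h.S_le_mul_exp hm).trans ?_
    gcongr
    exact (le_abs_self _).trans hsum.le
  obtain ⟨m, hSm, hm⟩ := ((hS.eventually_gt_atTop (S N * Real.exp 1)).and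
    (eventually_ge_atTop N)).exists
  exact (hbdd m hm).not_gt hSm

theorem tendsto_norm_sq_div (h : AdaGradNormPath α G θ S) (hnoise : NegligibleNoise g G θ S)
    {δ₀ δ₁ : ℝ} (hδ₀ : 0 < δ₀) (hsharp : ∀ n, ‖∇ g (θ n)‖ ≤ δ₀ → ‖G n‖ ≤ δ₁)
    (hS : Tendsto S atTop atTop) : Tendsto (fun n => ‖G n‖ ^ 2 / S n) atTop (𝓝 0) := by
  refine tendsto_order.2 ⟨fun a ha => .of_forall fun n =>
    ha.trans_le (div_nonneg (sq_nonneg _) (h.S_pos n).le), fun ε hε => ?_⟩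
  filter_upwards [(hnoise.norm_sq_div δ₀ hδ₀).eventually_norm_lt hε,
    (hS.const_div_atTop (δ₁ ^ 2)).eventually_lt_const hε] with n hfar hnear
  obtain hle | hlt := le_total δ₀ ‖∇ g (θ n)‖
  · exact (le_abs_self _).trans_lt (hfar hle)
  · refine lt_of_le_of_lt ?_ hnear
    have := h.S_pos n
    have := hsharp n hlt
    gcongr

theorem tendsto_norm_sub (h : AdaGradNormPath α G θ S) (hnoise : NegligibleNoise g G θ S)
    {δ₀ δ₁ : ℝ} (hδ₀ : 0 < δ₀) (hsharp : ∀ n, ‖∇ g (θ n)‖ ≤ δ₀ → ‖G n‖ ≤ δ₁)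
    (hS : Tendsto S atTop atTop) : Tendsto (fun n => ‖θ (n + 1) - θ n‖) atTop (𝓝 0) := by
  have hbound := (h.tendsto_norm_sq_div hnoise hδ₀ hsharp hS).const_mul (α ^ 2)
  rw [mul_zero] at hbound
  simpa using (squeeze_zero (fun n => sq_nonneg _) h.norm_sub_sq_le hbound).sqrt

theorem eventually_objective_le (h : AdaGradNormPath α G θ S) (hα : 0 ≤ α) {L : ℝ≥0}
    (hg : Differentiable ℝ g) (hlip : LipschitzWith L (∇ g)) (hnoise : NegligibleNoise g G θ S)
    {δ ε : ℝ} (hδ : 0 < δ) (M : ℝ) (hε : 0 < ε) :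
    ∀ᶠ n in atTop, ∀ m ≥ n, (∀ k ∈ Finset.Ico n m, θ k ∈ gradientShell g δ M) →
      g (θ m) + ∑ k ∈ Finset.Ico n m, α / √(S k) * ‖∇ g (θ k)‖ ^ 2 ≤ g (θ n) + ε := by
  have hsq := (hnoise.norm_sq_div δ hδ).const_smul (α * M + L / 2 * α ^ 2)
  have hinner := (hnoise.inner_noise δ hδ M).const_smul α
  filter_upwards [hsq (ε / 2) (by positivity), hinner (ε / 2) (by positivity)]
    with n hsq_n hinner_n m hm hshell
  have hsteps := Finset.sum_le_sum fun k hk =>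
    h.objective_succ_le hα hg hlip (hshell k hk).2
  have htelescope := Finset.sum_Ico_sub (fun k => g (θ k)) hm
  simp only [Finset.sum_add_distrib, Finset.sum_sub_distrib] at hsteps htelescope
  have herror := (abs_lt.1 (hsq_n m hm fun k hk => (hshell k hk).1)).2
  have hdrift := (abs_lt.1 (hinner_n m hm hshell)).1
  simp only [smul_eq_mul] at herror hdrift
  linarith

theorem eventually_norm_sub_le (h : AdaGradNormPath α G θ S) (hα : 0 ≤ α)
    (hnoise : NegligibleNoise g G θ S) {δ ε : ℝ} (hδ : 0 < δ) (hε : 0 < ε) :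
    ∀ᶠ n in atTop, ∀ m ≥ n, (∀ k ∈ Finset.Ico n m, δ ≤ ‖∇ g (θ k)‖) →
      ‖θ m - θ n‖ ≤ ∑ k ∈ Finset.Ico n m, α / √(S k) * ‖∇ g (θ k)‖ + ε := by
  have hsq := (hnoise.norm_sq_div δ hδ).const_smul α
  have hdrift := (hnoise.noise δ hδ).const_smul α
  filter_upwards [hsq (ε / 2) (by positivity), hdrift (ε / 2) (by positivity)]
    with n hsq_n hdrift_n m hm hfar
  have hdecomp : θ m - θ n = ∑ k ∈ Finset.Ico n m, (θ (k + 1) - θ k + α • scaledNoise g G θ S k)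
      - ∑ k ∈ Finset.Ico n m, α • scaledNoise g G θ S k := by
    rw [Finset.sum_add_distrib, Finset.sum_Ico_sub _ hm, add_sub_cancel_right]
  have hsteps := (norm_sum_le_of_le (Finset.Ico n m) fun k _ =>
    h.norm_sub_add_scaledNoise_le (g := g) hα k).trans_eq Finset.sum_add_distrib
  have herror := (le_abs_self _).trans_lt (hsq_n m hm hfar)
  simp only [smul_eq_mul] at herror
  rw [hdecomp]
  linarith [_root_.norm_sub_le (∑ k ∈ Finset.Ico n m,
    (θ (k + 1) - θ k + α • scaledNoise g G θ S k))
    (∑ k ∈ Finset.Ico n m, α • scaledNoise g G θ S k), hdrift_n m hm hfar]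

theorem asymptoticGradientDescent (h : AdaGradNormPath α G θ S) (hα : 0 ≤ α) {L : ℝ≥0}
    (hg : Differentiable ℝ g) (hlip : LipschitzWith L (∇ g)) (hnoise : NegligibleNoise g G θ S)
    {δ₀ δ₁ : ℝ} (hδ₀ : 0 < δ₀) (hsharp : ∀ n, ‖∇ g (θ n)‖ ≤ δ₀ → ‖G n‖ ≤ δ₁)
    (hS : Tendsto S atTop atTop) : AsymptoticGradientDescent g (fun n => α / √(S n)) θ where
  step_nonneg _ := by positivity
  tendsto_norm_sub := h.tendsto_norm_sub hnoise hδ₀ hsharp hS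
  frequently_norm_gradient_lt _ hδ := h.frequently_norm_gradient_lt hnoise hS hδ
  eventually_objective_le _ hδ M _ hε := h.eventually_objective_le hα hg hlip hnoise hδ M hε
  eventually_norm_sub_le _ hδ _ _ hε :=
    (h.eventually_norm_sub_le hα hnoise hδ hε).mono fun _ hn m hm hshell =>
      hn m hm fun k hk => (hshell k hk).1

theorem tendsto_norm_gradient_of_tendsto (h : AdaGradNormPath α G θ S)
    (hnoise : NegligibleNoise g G θ S) {s : ℝ} (hS : Tendsto S atTop (𝓝 s)) :
    Tendsto (fun n => ‖∇ g (θ n)‖) atTop (𝓝 0) := by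
  have hprod := hS.mul hnoise.summable_norm_gradient_sq_div.tendsto_atTop_zero
  simp only [mul_zero, mul_div_cancel₀ _ (h.S_pos _).ne'] at hprod
  simpa using hprod.sqrt

theorem tendsto_norm_gradient (h : AdaGradNormPath α G θ S) (hα : 0 ≤ α) {L : ℝ≥0}
    (hg : Differentiable ℝ g) (hlip : LipschitzWith L (∇ g))
    (hcompact : ∀ c, IsCompact {x | g x ≤ c})
    (hsard : IsNowhereDense {y | ∃ x, ∇ g x = 0 ∧ g x = y})
    {δ c : ℝ} (hδ : 0 < δ) (hc : ∀ x, ‖∇ g x‖ ≤ δ → g x ≤ c)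
    {δ₀ δ₁ : ℝ} (hδ₀ : 0 < δ₀) (hsharp : ∀ n, ‖∇ g (θ n)‖ ≤ δ₀ → ‖G n‖ ≤ δ₁)
    (hnoise : NegligibleNoise g G θ S) : Tendsto (fun n => ‖∇ g (θ n)‖) atTop (𝓝 0) := by
  obtain hS | ⟨s, hS⟩ := tendsto_atTop_of_monotone h.S_mono
  · exact (h.asymptoticGradientDescent hα hg hlip hnoise hδ₀ hsharp hS).tendsto_norm_gradient
      hg hlip hcompact hsard hδ hc
  · exact h.tendsto_norm_gradient_of_tendsto hnoise hS

end NegligibleNoise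

end AdaGradNormPath

end AdaGradNormPath

section Energy

variable {E : Type*} [NormedAddCommGroup E] [InnerProductSpace ℝ E]

theorem sq_div_mul_sqrt_le {a x : ℝ} (ha : 0 < a) :
    x ^ 2 / ((a + x ^ 2) * √(a + x ^ 2)) ≤ 2 * ((√a)⁻¹ - (√(a + x ^ 2))⁻¹) := by
  have hb : 0 < a + x ^ 2 := by positivity
  have : 0 < √a := Real.sqrt_pos.2 ha
  have : 0 < √(a + x ^ 2) := Real.sqrt_pos.2 hb
  have hst : √a ≤ √(a + x ^ 2) := Real.sqrt_le_sqrt (by nlinarith)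
  have hfactor : x ^ 2 = (√(a + x ^ 2) - √a) * (√(a + x ^ 2) + √a) := by
    linear_combination Real.mul_self_sqrt ha.le - Real.mul_self_sqrt hb.le
  calc x ^ 2 / ((a + x ^ 2) * √(a + x ^ 2))
      = (√(a + x ^ 2) - √a) * (√(a + x ^ 2) + √a)
          / (√(a + x ^ 2) * √(a + x ^ 2) * √(a + x ^ 2)) := by
        rw [Real.mul_self_sqrt hb.le, ← hfactor]
    _ ≤ (√(a + x ^ 2) - √a) * (√(a + x ^ 2) + √(a + x ^ 2))
          / (√a * √(a + x ^ 2) * √(a + x ^ 2)) := by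
        have := sub_nonneg.2 hst
        gcongr
    _ = 2 * ((√a)⁻¹ - (√(a + x ^ 2))⁻¹) := by field_simp; ring

theorem inv_sub_inv_add_sq {a : ℝ} (x : ℝ) (ha : 0 < a) :
    a⁻¹ - (a + x ^ 2)⁻¹ = x ^ 2 / (a + x ^ 2) / a := by
  have : 0 < a + x ^ 2 := by positivity
  field_simp
  ring

/-- A positive bound for the conditional second moment of a stochastic gradient with affine variance
at a point where the gradient has norm `y`; the summand `1` keeps it positive when the variance
vanishes. -/
def affineVariance (σ₀ σ₁ y : ℝ) : ℝ := σ₀ * y ^ 2 + σ₁ + 1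

theorem affineVariance_pos {σ₀ σ₁ : ℝ} (hσ₀ : 0 ≤ σ₀) (hσ₁ : 0 ≤ σ₁) (y : ℝ) :
    0 < affineVariance σ₀ σ₁ y := by
  unfold affineVariance; positivity

/-- The Lyapunov function of AdaGrad-Norm: `v` is the objective, `y` the gradient norm and `a` the
accumulator. -/
noncomputable def adaGradEnergy (α L σ₀ σ₁ v y a : ℝ) : ℝ :=
  (v + L * α ^ 2) / √a
    + α / 2 * ((affineVariance σ₀ σ₁ y + σ₀ * (4 * σ₀ + 5) * (L * α) ^ 2) / a)

theorem adaGradEnergy_nonneg {α L σ₀ σ₁ v y a : ℝ} (hα : 0 ≤ α) (hL : 0 ≤ L) (hσ₀ : 0 ≤ σ₀)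
    (hσ₁ : 0 ≤ σ₁) (hv : 0 ≤ v) (ha : 0 ≤ a) : 0 ≤ adaGradEnergy α L σ₀ σ₁ v y a := by
  have := (affineVariance_pos hσ₀ hσ₁ y).le
  unfold adaGradEnergy
  positivity

theorem mul_mul_inv_sub_inv_le {a x y A : ℝ} (ha : 0 < a) (hA : 0 < A) :
    y * x * (a⁻¹ - (a + x ^ 2)⁻¹)
      ≤ y ^ 2 / (2 * A * a) * x ^ 2 + A / 2 * (a⁻¹ - (a + x ^ 2)⁻¹) := by
  have hb : 0 < a + x ^ 2 := by positivity
  rw [inv_sub_inv_add_sq x ha]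
  generalize hr : x ^ 2 / (a + x ^ 2) = r
  have hr_nonneg : 0 ≤ r := by rw [← hr]; positivity
  have hr_le_one : r ≤ 1 := by rw [← hr, div_le_one hb]; exact le_add_of_nonneg_left ha.le
  have hyoung : y * x * r ≤ y ^ 2 * x ^ 2 / (2 * A) + A / 2 * r ^ 2 := by
    rw [← sub_nonneg]
    have hsq : y ^ 2 * x ^ 2 / (2 * A) + A / 2 * r ^ 2 - y * x * r
        = (y * x - A * r) ^ 2 / (2 * A) := by field_simp; ring
    rw [hsq]
    positivity
  calc y * x * (r / a) = y * x * r / a := by ring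
    _ ≤ (y ^ 2 * x ^ 2 / (2 * A) + A / 2 * r) / a := by
        gcongr
        exact hyoung.trans (by gcongr; exact pow_le_of_le_one hr_nonneg hr_le_one two_ne_zero)
    _ = _ := by field_simp

theorem sq_add_mul_le {y r l η : ℝ} (hη : 0 < η) :
    (y + l * r) ^ 2 ≤ y ^ 2 + η * y ^ 2 + (1 + 1 / η) * l ^ 2 * r ^ 2 := by
  rw [← sub_nonneg]
  have hsq : y ^ 2 + η * y ^ 2 + (1 + 1 / η) * l ^ 2 * r ^ 2 - (y + l * r) ^ 2
      = (η * y - l * r) ^ 2 / η := by field_simp; ring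
  rw [hsq]
  positivity

theorem sq_div_add_sq_le {a x y y' l η : ℝ} (ha : 0 < a) (hη : 0 < η) (hy' : 0 ≤ y')
    (hyy' : y' ≤ y + l * (x / √(a + x ^ 2))) :
    y' ^ 2 / (a + x ^ 2) ≤ y ^ 2 / (a + x ^ 2) + η * (y ^ 2 / a)
      + (1 + 1 / η) * l ^ 2 * (a⁻¹ - (a + x ^ 2)⁻¹) := by
  have hb : 0 < a + x ^ 2 := by positivity
  have hab : a ≤ a + x ^ 2 := le_add_of_nonneg_right (sq_nonneg x)
  calc y' ^ 2 / (a + x ^ 2)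
      ≤ (y ^ 2 + η * y ^ 2 + (1 + 1 / η) * l ^ 2 * (x / √(a + x ^ 2)) ^ 2) / (a + x ^ 2) := by
        gcongr
        exact (pow_le_pow_left₀ hy' hyy' 2).trans (sq_add_mul_le hη)
    _ = y ^ 2 / (a + x ^ 2) + η * (y ^ 2 / (a + x ^ 2))
          + (1 + 1 / η) * l ^ 2 * (x ^ 2 / (a + x ^ 2) / (a + x ^ 2)) := by
        rw [div_pow, Real.sq_sqrt hb.le]; ring
    _ ≤ y ^ 2 / (a + x ^ 2) + η * (y ^ 2 / a)
          + (1 + 1 / η) * l ^ 2 * (a⁻¹ - (a + x ^ 2)⁻¹) := by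
        rw [inv_sub_inv_add_sq x ha]
        gcongr

theorem affineVariance_mul_inv_sub_inv_le {a x y y' l σ₀ σ₁ : ℝ} (ha : 0 < a) (hσ₀ : 0 ≤ σ₀)
    (hy' : 0 ≤ y') (hyy' : y' ≤ y + l * (x / √(a + x ^ 2))) :
    affineVariance σ₀ σ₁ y * (a⁻¹ - (a + x ^ 2)⁻¹)
      ≤ (affineVariance σ₀ σ₁ y + σ₀ * (4 * σ₀ + 5) * l ^ 2) / a
        - (affineVariance σ₀ σ₁ y' + σ₀ * (4 * σ₀ + 5) * l ^ 2) / (a + x ^ 2)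
        + y ^ 2 / a / 4 := by
  have hyoung := mul_le_mul_of_nonneg_left
    (sq_div_add_sq_le (η := 1 / (4 * (σ₀ + 1))) ha (by positivity) hy' hyy') hσ₀
  have hη : σ₀ * (1 / (4 * (σ₀ + 1))) ≤ 1 / 4 := by
    rw [mul_one_div, div_le_div_iff₀ (by positivity) (by norm_num)]
    linarith
  have hyη := mul_le_mul_of_nonneg_right hη (show 0 ≤ y ^ 2 / a by positivity)
  rw [one_div_one_div] at hyoung
  simp only [affineVariance]
  linear_combination hyoung + hyη

namespace AdaGradNormPath

variable [CompleteSpace E] {α σ₀ σ₁ : ℝ} {L : ℝ≥0} {g : E → ℝ} {G θ : ℕ → E} {S : ℕ → ℝ}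

theorem norm_gradient_succ_le (h : AdaGradNormPath α G θ S) (hα : 0 ≤ α)
    (hlip : LipschitzWith L (∇ g)) (n : ℕ) :
    ‖∇ g (θ (n + 1))‖ ≤ ‖∇ g (θ n)‖ + L * α * (‖G n‖ / √(S (n + 1))) := by
  have hvary := hlip.norm_sub_le (θ (n + 1)) (θ n)
  rw [h.sub_eq, norm_smul, norm_neg, Real.norm_of_nonneg (by positivity)] at hvary
  have hassoc : L * (α / √(S (n + 1)) * ‖G n‖) = L * α * (‖G n‖ / √(S (n + 1))) := by ring
  linarith [norm_sub_norm_le (∇ g (θ (n + 1))) (∇ g (θ n))]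

theorem objective_add_div_sqrt_succ_le (h : AdaGradNormPath α G θ S)
    (hg : Differentiable ℝ g) (hg_nonneg : ∀ x, 0 ≤ g x) (hlip : LipschitzWith L (∇ g)) (n : ℕ) :
    (g (θ (n + 1)) + L * α ^ 2) / √(S (n + 1))
      ≤ (g (θ n) + L * α ^ 2) / √(S n) - α * (⟪∇ g (θ n), G n⟫ / S (n + 1)) := by
  have hS := h.S_pos n
  have hS' := h.S_pos (n + 1)
  have hdescent := le_quadratic_of_lipschitzWith_gradient hg hlip (θ n) (θ (n + 1))
  rw [h.norm_sub_sq, h.sub_eq, inner_smul_right] at hdescent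
  have hquadratic := sq_div_mul_sqrt_le (x := ‖G n‖) hS
  rw [← h.S_succ] at hquadratic
  have hold : g (θ n) / √(S (n + 1)) ≤ g (θ n) / √(S n) := by
    have := hg_nonneg (θ n)
    have := h.S_mono n.le_succ
    gcongr
  have hnew : g (θ (n + 1)) / √(S (n + 1))
      ≤ g (θ n) / √(S (n + 1)) - α * (⟪∇ g (θ n), G n⟫ / S (n + 1))
        + L / 2 * α ^ 2 * (‖G n‖ ^ 2 / (S (n + 1) * √(S (n + 1)))) := by
    refine (div_le_div_of_nonneg_right hdescent (Real.sqrt_nonneg _)).trans_eq ?_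
    nth_rewrite 5 [← Real.mul_self_sqrt hS'.le]
    field_simp
    ring
  have hscaled := mul_le_mul_of_nonneg_left hquadratic
    (show 0 ≤ L / 2 * α ^ 2 by positivity)
  linear_combination hnew + hold + hscaled

theorem energy_succ_le (h : AdaGradNormPath α G θ S) (hα : 0 ≤ α) (hσ₀ : 0 ≤ σ₀) (hσ₁ : 0 ≤ σ₁)
    (hg : Differentiable ℝ g) (hg_nonneg : ∀ x, 0 ≤ g x) (hlip : LipschitzWith L (∇ g)) (n : ℕ) :
    adaGradEnergy α L σ₀ σ₁ (g (θ (n + 1))) ‖∇ g (θ (n + 1))‖ (S (n + 1))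
        + α * ⟪(S n)⁻¹ • ∇ g (θ n), G n⟫
      ≤ adaGradEnergy α L σ₀ σ₁ (g (θ n)) ‖∇ g (θ n)‖ (S n)
        + α * (‖∇ g (θ n)‖ ^ 2 / (2 * affineVariance σ₀ σ₁ ‖∇ g (θ n)‖ * S n) * ‖G n‖ ^ 2)
        + α / 8 * (‖∇ g (θ n)‖ ^ 2 / S n) := by
  have hS := h.S_pos n
  have hobjective := h.objective_add_div_sqrt_succ_le hg hg_nonneg hlip n
  have hinner : ⟪∇ g (θ n), G n⟫ * ((S n)⁻¹ - (S (n + 1))⁻¹)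
      ≤ ‖∇ g (θ n)‖ * ‖G n‖ * ((S n)⁻¹ - (S (n + 1))⁻¹) :=
    mul_le_mul_of_nonneg_right (real_inner_le_norm _ _)
      (sub_nonneg.2 (inv_anti₀ hS (h.S_mono n.le_succ)))
  have hcross := mul_mul_inv_sub_inv_le (x := ‖G n‖) (y := ‖∇ g (θ n)‖) hS
    (affineVariance_pos hσ₀ hσ₁ ‖∇ g (θ n)‖)
  have hgradient := h.norm_gradient_succ_le hα hlip n
  rw [h.S_succ] at hgradient
  have hvariance := affineVariance_mul_inv_sub_inv_le (σ₁ := σ₁) hS hσ₀ (norm_nonneg _) hgradient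
  rw [← h.S_succ] at hcross hvariance
  rw [real_inner_smul_left]
  simp only [adaGradEnergy]
  linear_combination hobjective + α * hinner + α * hcross + α / 2 * hvariance

end AdaGradNormPath

end Energy

section Probability

variable {E : Type*} [NormedAddCommGroup E] [InnerProductSpace ℝ E]
  {Ω : Type*} {m0 : MeasurableSpace Ω} {P : Measure Ω}

theorem summable_of_succ_add_le {a b : ℕ → ℝ} (ha : ∀ n, 0 ≤ a n) (hb : ∀ n, 0 ≤ b n)
    (hab : ∀ n, a (n + 1) + b n ≤ a n) : Summable b := by
  refine summable_of_sum_range_le hb (c := a 0) fun n => ?_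
  suffices a n + ∑ k ∈ Finset.range n, b k ≤ a 0 by linarith [ha n]
  induction n with
  | zero => simp
  | succ n ih => rw [Finset.sum_range_succ]; linarith [hab n]

theorem ae_summable_of_summable_integral {f : ℕ → Ω → ℝ} (hf : ∀ n ω, 0 ≤ f n ω)
    (hf_int : ∀ n, Integrable (f n) P) (hsum : Summable fun n => ∫ ω, f n ω ∂P) :
    ∀ᵐ ω ∂P, Summable fun n => f n ω := by
  have hmeas (n : ℕ) := (hf_int n).1.aemeasurable.ennreal_ofReal
  have hfinite : ∫⁻ ω, ∑' n, ENNReal.ofReal (f n ω) ∂P ≠ ⊤ := by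
    simp_rw [lintegral_tsum hmeas,
      ← ofReal_integral_eq_lintegral_ofReal (hf_int _) (ae_of_all _ (hf _))]
    exact hsum.tsum_ofReal_ne_top
  filter_upwards [ae_lt_top' (AEMeasurable.tsum hmeas) hfinite] with ω hω
  simpa only [ENNReal.toReal_ofReal (hf _ ω)] using ENNReal.summable_toReal hω.ne

/-- A bounded function that is strongly measurable with respect to the `σ`-algebra `m`. -/
structure BoundedMeasurable {F : Type*} [Norm F] [TopologicalSpace F] (m : MeasurableSpace Ω)
    (f : Ω → F) : Prop where
  stronglyMeasurable : StronglyMeasurable[m] f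
  exists_norm_le : ∃ C, ∀ ω, ‖f ω‖ ≤ C

namespace BoundedMeasurable

variable {F F' : Type*} [NormedAddCommGroup F] [NormedAddCommGroup F'] {m : MeasurableSpace Ω}

theorem prodMk {f : Ω → F} {f' : Ω → F'} (hf : BoundedMeasurable m f)
    (hf' : BoundedMeasurable m f') : BoundedMeasurable m fun ω => (f ω, f' ω) := by
  obtain ⟨C, hC⟩ := hf.exists_norm_le
  obtain ⟨C', hC'⟩ := hf'.exists_norm_le
  exact ⟨hf.1.prodMk hf'.1, max C C', fun ω => max_le_max (hC ω) (hC' ω)⟩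

theorem comp [ProperSpace F] {f : Ω → F} (hf : BoundedMeasurable m f) {φ : F → F'}
    (hφ : Continuous φ) : BoundedMeasurable m fun ω => φ (f ω) := by
  obtain ⟨C, hC⟩ := hf.exists_norm_le
  obtain ⟨K, hK⟩ := (isCompact_closedBall 0 C).exists_bound_of_continuousOn hφ.continuousOn
  exact ⟨hφ.comp_stronglyMeasurable hf.1, K, fun ω => hK _ (mem_closedBall_zero_iff.2 (hC ω))⟩

theorem memLp [IsFiniteMeasure P] {f : Ω → F} (hf : BoundedMeasurable m f) (hm : m ≤ m0)
    (p : ENNReal) : MemLp f p P := by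
  obtain ⟨C, hC⟩ := hf.exists_norm_le
  exact .of_bound (hf.1.mono hm).aestronglyMeasurable C (ae_of_all _ hC)

theorem integrable [IsFiniteMeasure P] {f : Ω → F} (hf : BoundedMeasurable m f) (hm : m ≤ m0) :
    Integrable f P :=
  memLp_one_iff_integrable.1 (hf.memLp hm 1)

theorem integrable_mul {w Y : Ω → ℝ} (hw : BoundedMeasurable m w) (hm : m ≤ m0)
    (hY : Integrable Y P) : Integrable (fun ω => w ω * Y ω) P := by
  obtain ⟨C, hC⟩ := hw.exists_norm_le
  exact hY.bdd_mul (hw.1.mono hm).aestronglyMeasurable (ae_of_all _ hC)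

theorem integral_mul_le_of_condExp_le [IsFiniteMeasure P] {w Y Z : Ω → ℝ}
    (hw : BoundedMeasurable m w) (hm : m ≤ m0) (hw_nonneg : ∀ ω, 0 ≤ w ω) (hY : Integrable Y P)
    (hZ : Integrable Z P) (hYZ : P[Y | m] ≤ᵐ[P] Z) :
    ∫ ω, w ω * Y ω ∂P ≤ ∫ ω, w ω * Z ω ∂P := by
  rw [← integral_condExp hm]
  refine integral_mono_ae integrable_condExp (hw.integrable_mul hm hZ) ?_
  filter_upwards [condExp_mul_of_stronglyMeasurable_left hw.1 (hw.integrable_mul hm hY) hY, hYZ]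
    with ω hpull hle
  exact hpull.le.trans (mul_le_mul_of_nonneg_left hle (hw_nonneg ω))

theorem memLp_smul [NormedSpace ℝ F] {w : Ω → ℝ} {Y : Ω → F}
    {p : ENNReal} (hw : BoundedMeasurable m w) (hm : m ≤ m0) (hY : MemLp Y p P) :
    MemLp (fun ω => w ω • Y ω) p P := by
  obtain ⟨C, hC⟩ := hw.exists_norm_le
  refine hY.of_le_mul (c := C) ((hw.1.mono hm).aestronglyMeasurable.smul hY.1)
    (ae_of_all _ fun ω => ?_)
  exact (norm_smul_le _ _).trans (mul_le_mul_of_nonneg_right (hC ω) (norm_nonneg _))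

theorem condExp_smul [NormedSpace ℝ F] [CompleteSpace F] {w : Ω → ℝ} {Y Z : Ω → F}
    (hw : BoundedMeasurable m w) (hm : m ≤ m0) (hY : Integrable Y P) (hYZ : P[Y | m] =ᵐ[P] Z) :
    P[fun ω => w ω • Y ω | m] =ᵐ[P] fun ω => w ω • Z ω := by
  have hwY := memLp_one_iff_integrable.1 (hw.memLp_smul hm (memLp_one_iff_integrable.2 hY))
  filter_upwards [condExp_smul_of_aestronglyMeasurable_left hw.1.aestronglyMeasurable hwY hY, hYZ]
    with ω hpull hω
  rw [← hω]
  exact hpull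

theorem integrable_inner {X Y : Ω → E} (hX : BoundedMeasurable m X) (hm : m ≤ m0)
    (hY : Integrable Y P) : Integrable (fun ω => ⟪X ω, Y ω⟫) P := by
  obtain ⟨C, hC⟩ := hX.exists_norm_le
  exact (innerSL ℝ).integrable_of_bilin_of_bdd_left C
    (hX.1.mono hm).aestronglyMeasurable (ae_of_all _ hC) hY

theorem condExp_inner [CompleteSpace E] {X Y Z : Ω → E} (hX : BoundedMeasurable m X) (hm : m ≤ m0)
    (hY : Integrable Y P) (hYZ : P[Y | m] =ᵐ[P] Z) :
    P[fun ω => ⟪X ω, Y ω⟫ | m] =ᵐ[P] fun ω => ⟪X ω, Z ω⟫ := by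
  filter_upwards [condExp_bilin_of_stronglyMeasurable_left (innerSL ℝ) hX.1
    (hX.integrable_inner hm hY) hY, hYZ] with ω hpull hω
  rw [← hω]
  exact hpull

theorem integral_inner_eq [CompleteSpace E] [IsFiniteMeasure P] {X Y Z : Ω → E}
    (hX : BoundedMeasurable m X) (hm : m ≤ m0) (hY : Integrable Y P) (hYZ : P[Y | m] =ᵐ[P] Z) :
    ∫ ω, ⟪X ω, Y ω⟫ ∂P = ∫ ω, ⟪X ω, Z ω⟫ ∂P := by
  rw [← integral_condExp hm]
  exact integral_congr_ae (hX.condExp_inner hm hY hYZ)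

end BoundedMeasurable

/-- A martingale difference sequence, `W n` being revealed at time `n + 1`, whose variances are
summable. -/
structure SquareSummableMartingaleDifference (P : Measure Ω) (ℱ : Filtration ℕ m0)
    (W : ℕ → Ω → E) : Prop where
  stronglyMeasurable : ∀ n, StronglyMeasurable[ℱ (n + 1)] (W n)
  memLp : ∀ n, MemLp (W n) 2 P
  condExp_eq_zero : ∀ n, P[W n | ℱ n] =ᵐ[P] 0
  summable_integral_norm_sq : Summable fun n => ∫ ω, ‖W n ω‖ ^ 2 ∂P

namespace SquareSummableMartingaleDifference

variable {ℱ : Filtration ℕ m0} {W : ℕ → Ω → E}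

theorem stronglyAdapted_sum (h : SquareSummableMartingaleDifference P ℱ W) :
    StronglyAdapted ℱ fun n ω => ∑ k ∈ Finset.range n, W k ω := fun _ =>
  Finset.stronglyMeasurable_fun_sum _ fun k hk =>
    (h.stronglyMeasurable k).mono (ℱ.mono (Finset.mem_range.1 hk))

theorem memLp_sum (h : SquareSummableMartingaleDifference P ℱ W) (n : ℕ) :
    MemLp (fun ω => ∑ k ∈ Finset.range n, W k ω) 2 P :=
  memLp_finsetSum _ fun k _ => h.memLp k

variable [IsFiniteMeasure P]

theorem martingale_sum [CompleteSpace E] (h : SquareSummableMartingaleDifference P ℱ W) :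
    Martingale (fun n ω => ∑ k ∈ Finset.range n, W k ω) ℱ P := by
  refine martingale_of_condExp_sub_eq_zero_nat h.stronglyAdapted_sum
    (fun n => (h.memLp_sum n).integrable one_le_two) fun n => ?_
  have hincrement : (fun ω => ∑ k ∈ Finset.range (n + 1), W k ω)
      - (fun ω => ∑ k ∈ Finset.range n, W k ω) = W n := by
    ext ω
    simp [Finset.sum_range_succ]
  rw [hincrement]
  exact h.condExp_eq_zero n

theorem integral_inner_sum_eq_zero [CompleteSpace E]
    (h : SquareSummableMartingaleDifference P ℱ W) (n : ℕ) :
    ∫ ω, ⟪∑ k ∈ Finset.range n, W k ω, W n ω⟫ ∂P = 0 := by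
  have hint := memLp_one_iff_integrable.1
    ((innerSL ℝ).memLp_of_bilin (r := 1) (h.memLp_sum n) (h.memLp n))
  have hpull := condExp_bilin_of_stronglyMeasurable_left (innerSL ℝ) (h.stronglyAdapted_sum n)
    hint ((h.memLp n).integrable one_le_two)
  refine (integral_condExp (ℱ.le n)).symm.trans (integral_eq_zero_of_ae (hpull.trans ?_))
  filter_upwards [h.condExp_eq_zero n] with ω hω
  simp [hω]

theorem integral_norm_sum_sq [CompleteSpace E] (h : SquareSummableMartingaleDifference P ℱ W)
    (n : ℕ) : ∫ ω, ‖∑ k ∈ Finset.range n, W k ω‖ ^ 2 ∂P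
      = ∑ k ∈ Finset.range n, ∫ ω, ‖W k ω‖ ^ 2 ∂P := by
  induction n with
  | zero => simp
  | succ n ih =>
    have hint : Integrable (fun ω => ⟪∑ k ∈ Finset.range n, W k ω, W n ω⟫) P :=
      memLp_one_iff_integrable.1
        ((innerSL ℝ).memLp_of_bilin (r := 1) (h.memLp_sum n) (h.memLp n))
    simp_rw [Finset.sum_range_succ, norm_add_sq_real]
    rw [integral_add
        (f := fun ω => ‖∑ k ∈ Finset.range n, W k ω‖ ^ 2 + 2 * ⟪∑ k ∈ Finset.range n, W k ω, W n ω⟫)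
        ((h.memLp_sum n).norm.integrable_sq.add (hint.const_mul 2)) (h.memLp n).norm.integrable_sq,
      integral_add (h.memLp_sum n).norm.integrable_sq (hint.const_mul 2), integral_const_mul,
      h.integral_inner_sum_eq_zero, ih, mul_zero, add_zero]

theorem exists_eLpNorm_one_sum_le [CompleteSpace E]
    (h : SquareSummableMartingaleDifference P ℱ W) :
    ∃ R : ℝ≥0, ∀ n, eLpNorm (fun ω => ∑ k ∈ Finset.range n, W k ω) 1 P ≤ R := by
  set C := ∑' n, ∫ ω, ‖W n ω‖ ^ 2 ∂P
  refine ⟨(P.real Set.univ + C).toNNReal, fun n => ?_⟩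
  have hint := (h.memLp_sum n).integrable one_le_two
  rw [eLpNorm_one_eq_lintegral_enorm, ← ofReal_integral_norm_eq_lintegral_enorm hint]
  refine ENNReal.ofReal_le_ofReal ?_
  calc ∫ ω, ‖∑ k ∈ Finset.range n, W k ω‖ ∂P
      ≤ ∫ ω, (1 + ‖∑ k ∈ Finset.range n, W k ω‖ ^ 2) ∂P := by
        refine integral_mono hint.norm
          ((integrable_const _).add (h.memLp_sum n).norm.integrable_sq) fun ω => ?_
        nlinarith [sq_nonneg (‖∑ k ∈ Finset.range n, W k ω‖ - 1)]
    _ = P.real Set.univ + ∑ k ∈ Finset.range n, ∫ ω, ‖W k ω‖ ^ 2 ∂P := by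
        rw [integral_add (integrable_const _) (h.memLp_sum n).norm.integrable_sq,
          h.integral_norm_sum_sq, integral_const, smul_eq_mul, mul_one]
    _ ≤ P.real Set.univ + C := by
        gcongr
        exact h.summable_integral_norm_sq.sum_le_tsum _ fun k _ =>
          integral_nonneg fun ω => sq_nonneg _

theorem ae_cauchySeq_sum_real {D : ℕ → Ω → ℝ} (h : SquareSummableMartingaleDifference P ℱ D) :
    ∀ᵐ ω ∂P, CauchySeq fun n => ∑ k ∈ Finset.range n, D k ω := by
  obtain ⟨R, hR⟩ := h.exists_eLpNorm_one_sum_le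
  filter_upwards [h.martingale_sum.submartingale.exists_ae_tendsto_of_bdd hR] with ω ⟨c, hc⟩
  exact hc.cauchySeq

theorem predictable_inner [CompleteSpace E] (h : SquareSummableMartingaleDifference P ℱ W)
    {X : ℕ → Ω → E} {K : ℝ} (hX : ∀ n, StronglyMeasurable[ℱ n] (X n)) (hK : ∀ n ω, ‖X n ω‖ ≤ K) :
    SquareSummableMartingaleDifference P ℱ fun n ω => ⟪X n ω, W n ω⟫ := by
  have hmeas (n : ℕ) : StronglyMeasurable[ℱ (n + 1)] fun ω => ⟪X n ω, W n ω⟫ :=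
    ((hX n).mono (ℱ.mono n.le_succ)).inner (h.stronglyMeasurable n)
  have hbound (n : ℕ) (ω : Ω) : ‖⟪X n ω, W n ω⟫‖ ≤ K * ‖W n ω‖ :=
    (norm_inner_le_norm _ _).trans (mul_le_mul_of_nonneg_right (hK n ω) (norm_nonneg _))
  have hmemLp (n : ℕ) : MemLp (fun ω => ⟪X n ω, W n ω⟫) 2 P :=
    (h.memLp n).of_le_mul ((hmeas n).mono (ℱ.le _)).aestronglyMeasurable (ae_of_all _ (hbound n))
  refine ⟨hmeas, hmemLp, fun n => ?_, ?_⟩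
  · have hX_bounded : BoundedMeasurable (ℱ n) (X n) := ⟨hX n, K, hK n⟩
    refine (hX_bounded.condExp_inner (ℱ.le n) ((h.memLp n).integrable one_le_two)
      (h.condExp_eq_zero n)).trans (ae_of_all _ fun ω => inner_zero_right _)
  · refine .of_nonneg_of_le (fun n => integral_nonneg fun ω => sq_nonneg _) (fun n => ?_)
      (h.summable_integral_norm_sq.mul_left (K ^ 2))
    rw [← integral_const_mul]
    refine integral_mono (hmemLp n).norm.integrable_sq
      ((h.memLp n).norm.integrable_sq.const_mul _) fun ω => ?_
    exact (pow_le_pow_left₀ (norm_nonneg _) (hbound n ω) 2).trans_eq (mul_pow _ _ _)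

theorem ae_cauchySeq_sum [FiniteDimensional ℝ E] (h : SquareSummableMartingaleDifference P ℱ W) :
    ∀ᵐ ω ∂P, CauchySeq fun n => ∑ k ∈ Finset.range n, W k ω := by
  have : CompleteSpace E := FiniteDimensional.complete ℝ E
  let b := stdOrthonormalBasis ℝ E
  have hcoord (i) : ∀ᵐ ω ∂P, CauchySeq fun n => ∑ k ∈ Finset.range n, ⟪b i, W k ω⟫ :=
    (h.predictable_inner (X := fun _ _ => b i) (fun _ => stronglyMeasurable_const)
      fun _ _ => (b.norm_eq_one i).le).ae_cauchySeq_sum_real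
  filter_upwards [ae_all_iff.2 hcoord] with ω hω
  choose c hc using fun i => cauchySeq_tendsto_of_complete (hω i)
  have hexpand := tendsto_finsetSum Finset.univ fun i _ => (hc i).smul_const (b i)
  simp_rw [← inner_sum, b.sum_repr'] at hexpand
  exact hexpand.cauchySeq

end SquareSummableMartingaleDifference

end Probability

section GradientCutoff

variable {E : Type*} [NormedAddCommGroup E] [InnerProductSpace ℝ E] [CompleteSpace E]

/-- A continuous cutoff that vanishes at the critical points of `g` and equals `1` where the
gradient has norm at least `δ`. -/
noncomputable def gradientCutoff (g : E → ℝ) (δ : ℝ) (x : E) : ℝ := min 1 (‖∇ g x‖ / δ)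

theorem gradientCutoff_of_le {g : E → ℝ} {δ : ℝ} (hδ : 0 < δ) {x : E} (hx : δ ≤ ‖∇ g x‖) :
    gradientCutoff g δ x = 1 :=
  min_eq_left ((one_le_div hδ).2 hx)

theorem gradientCutoff_nonneg {g : E → ℝ} {δ : ℝ} (hδ : 0 ≤ δ) (x : E) :
    0 ≤ gradientCutoff g δ x :=
  le_min zero_le_one (by positivity)

theorem continuous_gradientCutoff {g : E → ℝ} (hg : Continuous (∇ g)) (δ : ℝ) :
    Continuous (gradientCutoff g δ) :=
  continuous_const.min (hg.norm.div_const δ)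

theorem gradientCutoff_sq_le_one {g : E → ℝ} {δ : ℝ} (hδ : 0 ≤ δ) (x : E) :
    gradientCutoff g δ x ^ 2 ≤ 1 :=
  pow_le_one₀ (gradientCutoff_nonneg hδ x) (min_le_left _ _)

theorem gradientCutoff_sq_le {g : E → ℝ} {δ : ℝ} (hδ : 0 ≤ δ) (x : E) :
    gradientCutoff g δ x ^ 2 ≤ ‖∇ g x‖ ^ 2 / δ ^ 2 := by
  rw [← div_pow]
  exact pow_le_pow_left₀ (gradientCutoff_nonneg hδ x) (min_le_right _ _) 2

/-- The gradient of `g`, radially truncated to norm at most `M`. -/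
noncomputable def truncatedGradient (g : E → ℝ) (M : ℝ) (x : E) : E :=
  (M / max M ‖∇ g x‖) • ∇ g x

theorem truncatedGradient_of_le {g : E → ℝ} {M : ℝ} (hM : 0 < M) {x : E} (hx : ‖∇ g x‖ ≤ M) :
    truncatedGradient g M x = ∇ g x := by
  rw [truncatedGradient, max_eq_left hx, div_self hM.ne', one_smul]

theorem norm_truncatedGradient_le {g : E → ℝ} {M : ℝ} (hM : 0 < M) (x : E) :
    ‖truncatedGradient g M x‖ ≤ M := by
  have hmax : 0 < max M ‖∇ g x‖ := lt_max_of_lt_left hM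
  rw [truncatedGradient, norm_smul, Real.norm_of_nonneg (by positivity), div_mul_eq_mul_div,
    div_le_iff₀ hmax]
  exact mul_le_mul_of_nonneg_left (le_max_right _ _) hM.le

theorem continuous_truncatedGradient {g : E → ℝ} (hg : Continuous (∇ g)) {M : ℝ} (hM : 0 < M) :
    Continuous (truncatedGradient g M) :=
  (continuous_const.div (continuous_const.max hg.norm) fun _ => (lt_max_of_lt_left hM).ne').smul hg

/-- The scaled noise, damped by `gradientCutoff g δ` near the critical points of `g`. -/
noncomputable def cutoffNoise (g : E → ℝ) (δ : ℝ) (G θ : ℕ → E) (S : ℕ → ℝ) (n : ℕ) : E :=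
  gradientCutoff g δ (θ n) • scaledNoise g G θ S n

theorem cutoffNoise_of_le {g : E → ℝ} {δ : ℝ} (hδ : 0 < δ) {G θ : ℕ → E} {S : ℕ → ℝ} {n : ℕ}
    (hθ : δ ≤ ‖∇ g (θ n)‖) : cutoffNoise g δ G θ S n = scaledNoise g G θ S n := by
  rw [cutoffNoise, gradientCutoff_of_le hδ hθ, one_smul]

theorem AdaGradNormPath.norm_cutoffNoise_sq_le {α δ : ℝ} {g : E → ℝ} {G θ : ℕ → E} {S : ℕ → ℝ}
    (h : AdaGradNormPath α G θ S) (hδ : 0 ≤ δ) (n : ℕ) :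
    ‖cutoffNoise g δ G θ S n‖ ^ 2 ≤ 2 * (gradientCutoff g δ (θ n) ^ 2 / S n * ‖G n‖ ^ 2)
      + 2 * (‖∇ g (θ n)‖ ^ 2 / S n) := by
  have hS := h.S_pos n
  have hparallelogram : ‖G n - ∇ g (θ n)‖ ^ 2 ≤ 2 * ‖G n‖ ^ 2 + 2 * ‖∇ g (θ n)‖ ^ 2 := by
    linarith [parallelogram_law_with_norm ℝ (G n) (∇ g (θ n)), mul_self_nonneg ‖G n + ∇ g (θ n)‖]
  calc ‖cutoffNoise g δ G θ S n‖ ^ 2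
      = gradientCutoff g δ (θ n) ^ 2 / S n * ‖G n - ∇ g (θ n)‖ ^ 2 := by
        rw [cutoffNoise, scaledNoise, norm_smul, norm_smul, mul_pow, mul_pow, Real.norm_eq_abs,
          sq_abs, norm_inv, inv_pow, Real.norm_eq_abs, sq_abs, Real.sq_sqrt hS.le]
        ring
    _ ≤ gradientCutoff g δ (θ n) ^ 2 / S n * (2 * ‖G n‖ ^ 2 + 2 * ‖∇ g (θ n)‖ ^ 2) := by
        gcongr
    _ = 2 * (gradientCutoff g δ (θ n) ^ 2 / S n * ‖G n‖ ^ 2)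
          + 2 * (gradientCutoff g δ (θ n) ^ 2 * ‖∇ g (θ n)‖ ^ 2 / S n) := by ring
    _ ≤ _ := by
        gcongr
        exact mul_le_of_le_one_left (sq_nonneg _) (gradientCutoff_sq_le_one hδ _)

end GradientCutoff

section StochasticAdaGradNorm

variable {E : Type*} [NormedAddCommGroup E] [InnerProductSpace ℝ E] [ProperSpace E]

/-- AdaGrad-Norm for the objective `g`, driven by unbiased stochastic gradients `G` of affine
variance: `θ n` and `S n` are known at time `n`, and `G n` is revealed at time `n + 1`. -/
structure StochasticAdaGradNorm {Ω : Type*} {m0 : MeasurableSpace Ω} (P : Measure Ω)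
    (ℱ : Filtration ℕ m0) (α σ₀ σ₁ s₀ : ℝ) (g : E → ℝ) (G θ : ℕ → Ω → E) (S : ℕ → Ω → ℝ) :
    Prop where
  path : ∀ ω, AdaGradNormPath α (G · ω) (θ · ω) (S · ω)
  s₀_pos : 0 < s₀
  s₀_le : ∀ ω, s₀ ≤ S 0 ω
  stronglyMeasurable_S_zero : StronglyMeasurable[ℱ 0] (S 0)
  boundedMeasurable_θ_zero : BoundedMeasurable (ℱ 0) (θ 0)
  stronglyMeasurable_G : ∀ n, StronglyMeasurable[ℱ (n + 1)] (G n)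
  memLp_G : ∀ n, MemLp (G n) 2 P
  condExp_G : ∀ n, P[G n | ℱ n] =ᵐ[P] fun ω => ∇ g (θ n ω)
  condExp_norm_G_sq_le : ∀ n,
    P[fun ω => ‖G n ω‖ ^ 2 | ℱ n] ≤ᵐ[P] fun ω => σ₀ * ‖∇ g (θ n ω)‖ ^ 2 + σ₁

namespace StochasticAdaGradNorm

variable {Ω : Type*} {m0 : MeasurableSpace Ω} {P : Measure Ω} {ℱ : Filtration ℕ m0}
  {α σ₀ σ₁ s₀ : ℝ} {L : ℝ≥0} {g : E → ℝ} {G θ : ℕ → Ω → E} {S : ℕ → Ω → ℝ}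

theorem stronglyMeasurable_S (h : StochasticAdaGradNorm P ℱ α σ₀ σ₁ s₀ g G θ S) (n : ℕ) :
    StronglyMeasurable[ℱ n] (S n) := by
  induction n with
  | zero => exact h.stronglyMeasurable_S_zero
  | succ n ih =>
    rw [funext fun ω => (h.path ω).S_succ n]
    exact (ih.mono (ℱ.mono n.le_succ)).add ((h.stronglyMeasurable_G n).norm.pow 2)

theorem boundedMeasurable_inv_S (h : StochasticAdaGradNorm P ℱ α σ₀ σ₁ s₀ g G θ S) (n : ℕ) :
    BoundedMeasurable (ℱ n) fun ω => (S n ω)⁻¹ := by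
  refine ⟨(h.stronglyMeasurable_S n).measurable.inv.stronglyMeasurable, s₀⁻¹, fun ω => ?_⟩
  rw [norm_inv, Real.norm_of_nonneg ((h.path ω).S_pos n).le]
  exact inv_anti₀ h.s₀_pos ((h.s₀_le ω).trans ((h.path ω).S_mono n.zero_le))

theorem boundedMeasurable_θ (h : StochasticAdaGradNorm P ℱ α σ₀ σ₁ s₀ g G θ S) (n : ℕ) :
    BoundedMeasurable (ℱ n) (θ n) := by
  induction n with
  | zero => exact h.boundedMeasurable_θ_zero
  | succ n ih =>
    obtain ⟨C, hC⟩ := ih.exists_norm_le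
    refine ⟨?_, C + |α|, fun ω => ?_⟩
    · have hstep : StronglyMeasurable[ℱ (n + 1)] fun ω => α / √(S (n + 1) ω) :=
        (measurable_const.div (h.stronglyMeasurable_S (n + 1)).measurable.sqrt).stronglyMeasurable
      rw [funext fun ω => (h.path ω).θ_succ n]
      exact (ih.1.mono (ℱ.mono n.le_succ)).sub (hstep.smul (h.stronglyMeasurable_G n))
    · linarith [norm_sub_norm_le (θ (n + 1) ω) (θ n ω), (h.path ω).norm_sub_le n, hC ω]

theorem boundedMeasurable_comp (h : StochasticAdaGradNorm P ℱ α σ₀ σ₁ s₀ g G θ S) {F : Type*}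
    [NormedAddCommGroup F] {φ : E × ℝ → F} (hφ : Continuous φ) (n : ℕ) :
    BoundedMeasurable (ℱ n) fun ω => φ (θ n ω, (S n ω)⁻¹) :=
  ((h.boundedMeasurable_θ n).prodMk (h.boundedMeasurable_inv_S n)).comp hφ

theorem boundedMeasurable_norm_gradient_sq_div (h : StochasticAdaGradNorm P ℱ α σ₀ σ₁ s₀ g G θ S)
    (hg : Continuous (∇ g)) (n : ℕ) :
    BoundedMeasurable (ℱ n) fun ω => ‖∇ g (θ n ω)‖ ^ 2 / S n ω := by
  simp only [div_eq_mul_inv]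
  exact h.boundedMeasurable_comp (φ := fun p => ‖∇ g p.1‖ ^ 2 * p.2) (by fun_prop) n

theorem boundedMeasurable_energy (h : StochasticAdaGradNorm P ℱ α σ₀ σ₁ s₀ g G θ S)
    (hg : Continuous g) (hgrad : Continuous (∇ g)) (n : ℕ) : BoundedMeasurable (ℱ n) fun ω =>
      adaGradEnergy α L σ₀ σ₁ (g (θ n ω)) ‖∇ g (θ n ω)‖ (S n ω) := by
  simp only [adaGradEnergy, affineVariance, div_eq_mul_inv, ← Real.sqrt_inv]
  exact h.boundedMeasurable_comp (φ := fun p => (g p.1 + L * α ^ 2) * √p.2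
    + α * 2⁻¹ * ((σ₀ * ‖∇ g p.1‖ ^ 2 + σ₁ + 1 + σ₀ * (4 * σ₀ + 5) * (L * α) ^ 2) * p.2))
    (by fun_prop) n

theorem boundedMeasurable_energyWeight (h : StochasticAdaGradNorm P ℱ α σ₀ σ₁ s₀ g G θ S)
    (hσ₀ : 0 ≤ σ₀) (hσ₁ : 0 ≤ σ₁) (hg : Continuous (∇ g)) (n : ℕ) :
    BoundedMeasurable (ℱ n) fun ω => ‖∇ g (θ n ω)‖ ^ 2
      / (2 * affineVariance σ₀ σ₁ ‖∇ g (θ n ω)‖ * S n ω) := by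
  simp only [← div_div _ _ (S n _), div_eq_mul_inv _ (S n _)]
  refine h.boundedMeasurable_comp
    (φ := fun p => ‖∇ g p.1‖ ^ 2 / (2 * affineVariance σ₀ σ₁ ‖∇ g p.1‖) * p.2) ?_ n
  have hvariance : Continuous fun p : E × ℝ => 2 * affineVariance σ₀ σ₁ ‖∇ g p.1‖ := by
    unfold affineVariance; fun_prop
  exact (Continuous.div (by fun_prop) hvariance fun _ =>
    (mul_pos two_pos (affineVariance_pos hσ₀ hσ₁ _)).ne').mul continuous_snd

theorem boundedMeasurable_cutoff_mul (h : StochasticAdaGradNorm P ℱ α σ₀ σ₁ s₀ g G θ S)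
    (hg : Continuous (∇ g)) (δ : ℝ) (n : ℕ) :
    BoundedMeasurable (ℱ n) fun ω => gradientCutoff g δ (θ n ω) * (√(S n ω))⁻¹ := by
  have hcutoff := continuous_gradientCutoff hg δ
  simp only [← Real.sqrt_inv]
  exact h.boundedMeasurable_comp (φ := fun p => gradientCutoff g δ p.1 * √p.2) (by fun_prop) n

theorem boundedMeasurable_cutoff_sq_div (h : StochasticAdaGradNorm P ℱ α σ₀ σ₁ s₀ g G θ S)
    (hg : Continuous (∇ g)) (δ : ℝ) (n : ℕ) :
    BoundedMeasurable (ℱ n) fun ω => gradientCutoff g δ (θ n ω) ^ 2 / S n ω := by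
  have hcutoff := continuous_gradientCutoff hg δ
  simp only [div_eq_mul_inv]
  exact h.boundedMeasurable_comp (φ := fun p => gradientCutoff g δ p.1 ^ 2 * p.2) (by fun_prop) n

variable [IsFiniteMeasure P]

theorem integral_mul_norm_G_sq_le (h : StochasticAdaGradNorm P ℱ α σ₀ σ₁ s₀ g G θ S)
    (hg : Continuous (∇ g)) {n : ℕ} {w : Ω → ℝ} (hw : BoundedMeasurable (ℱ n) w)
    (hw_nonneg : ∀ ω, 0 ≤ w ω) {c : ℝ}
    (hwc : ∀ ω, w ω * (σ₀ * ‖∇ g (θ n ω)‖ ^ 2 + σ₁) ≤ c * (‖∇ g (θ n ω)‖ ^ 2 / S n ω)) :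
    ∫ ω, w ω * ‖G n ω‖ ^ 2 ∂P ≤ c * ∫ ω, ‖∇ g (θ n ω)‖ ^ 2 / S n ω ∂P := by
  have hvariance : BoundedMeasurable (ℱ n) fun ω => σ₀ * ‖∇ g (θ n ω)‖ ^ 2 + σ₁ :=
    h.boundedMeasurable_comp (φ := fun p => σ₀ * ‖∇ g p.1‖ ^ 2 + σ₁) (by fun_prop) n
  rw [← integral_const_mul]
  exact (hw.integral_mul_le_of_condExp_le (ℱ.le n) hw_nonneg (h.memLp_G n).norm.integrable_sq
    (hvariance.integrable (ℱ.le n)) (h.condExp_norm_G_sq_le n)).trans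
    (integral_mono (hw.integrable_mul (ℱ.le n) (hvariance.integrable (ℱ.le n)))
      (((h.boundedMeasurable_norm_gradient_sq_div hg n).integrable (ℱ.le n)).const_mul c) hwc)

theorem integral_inner_inv_smul_gradient (h : StochasticAdaGradNorm P ℱ α σ₀ σ₁ s₀ g G θ S)
    (hg : Continuous (∇ g)) (n : ℕ) :
    ∫ ω, ⟪(S n ω)⁻¹ • ∇ g (θ n ω), G n ω⟫ ∂P = ∫ ω, ‖∇ g (θ n ω)‖ ^ 2 / S n ω ∂P := by
  have hfield : BoundedMeasurable (ℱ n) fun ω => (S n ω)⁻¹ • ∇ g (θ n ω) :=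
    h.boundedMeasurable_comp (φ := fun p => p.2 • ∇ g p.1) (by fun_prop) n
  rw [hfield.integral_inner_eq (ℱ.le n) ((h.memLp_G n).integrable one_le_two) (h.condExp_G n)]
  simp only [real_inner_smul_left, real_inner_self_eq_norm_sq, inv_mul_eq_div]

theorem integral_energyWeight_mul_le (h : StochasticAdaGradNorm P ℱ α σ₀ σ₁ s₀ g G θ S)
    (hσ₀ : 0 ≤ σ₀) (hσ₁ : 0 ≤ σ₁) (hg : Continuous (∇ g)) (n : ℕ) :
    ∫ ω, ‖∇ g (θ n ω)‖ ^ 2 / (2 * affineVariance σ₀ σ₁ ‖∇ g (θ n ω)‖ * S n ω) * ‖G n ω‖ ^ 2 ∂P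
      ≤ 1 / 2 * ∫ ω, ‖∇ g (θ n ω)‖ ^ 2 / S n ω ∂P := by
  have hvariance_pos := affineVariance_pos hσ₀ hσ₁
  refine h.integral_mul_norm_G_sq_le hg (h.boundedMeasurable_energyWeight hσ₀ hσ₁ hg n)
    (fun ω => ?_) fun ω => ?_
  · have := hvariance_pos ‖∇ g (θ n ω)‖
    have := (h.path ω).S_pos n
    positivity
  · have hvariance := hvariance_pos ‖∇ g (θ n ω)‖
    have := (h.path ω).S_pos n
    calc ‖∇ g (θ n ω)‖ ^ 2 / (2 * affineVariance σ₀ σ₁ ‖∇ g (θ n ω)‖ * S n ω)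
          * (σ₀ * ‖∇ g (θ n ω)‖ ^ 2 + σ₁)
        ≤ ‖∇ g (θ n ω)‖ ^ 2 / (2 * affineVariance σ₀ σ₁ ‖∇ g (θ n ω)‖ * S n ω)
          * affineVariance σ₀ σ₁ ‖∇ g (θ n ω)‖ := by
          gcongr
          exact (lt_add_one _).le
      _ = 1 / 2 * (‖∇ g (θ n ω)‖ ^ 2 / S n ω) := by field_simp

theorem integral_energy_succ_add_le (h : StochasticAdaGradNorm P ℱ α σ₀ σ₁ s₀ g G θ S)
    (hα : 0 ≤ α) (hσ₀ : 0 ≤ σ₀) (hσ₁ : 0 ≤ σ₁) (hg : Differentiable ℝ g)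
    (hg_nonneg : ∀ x, 0 ≤ g x) (hlip : LipschitzWith L (∇ g)) (n : ℕ) :
    ∫ ω, adaGradEnergy α L σ₀ σ₁ (g (θ (n + 1) ω)) ‖∇ g (θ (n + 1) ω)‖ (S (n + 1) ω) ∂P
        + 3 * α / 8 * ∫ ω, ‖∇ g (θ n ω)‖ ^ 2 / S n ω ∂P
      ≤ ∫ ω, adaGradEnergy α L σ₀ σ₁ (g (θ n ω)) ‖∇ g (θ n ω)‖ (S n ω) ∂P := by
  have hgrad := hlip.continuous
  have henergy (k : ℕ) := (h.boundedMeasurable_energy (L := L) hg.continuous hgrad k).integrable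
    (P := P) (ℱ.le k)
  have hfield : BoundedMeasurable (ℱ n) fun ω => (S n ω)⁻¹ • ∇ g (θ n ω) :=
    h.boundedMeasurable_comp (φ := fun p => p.2 • ∇ g p.1) (by fun_prop) n
  have hinner := (hfield.integrable_inner (ℱ.le n)
    ((h.memLp_G n).integrable one_le_two)).const_mul α
  have hweight := ((h.boundedMeasurable_energyWeight hσ₀ hσ₁ hgrad n).integrable_mul (ℱ.le n)
    (h.memLp_G n).norm.integrable_sq).const_mul α
  have hquotient := ((h.boundedMeasurable_norm_gradient_sq_div hgrad n).integrable
    (P := P) (ℱ.le n)).const_mul (α / 8)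
  have hdescent := integral_mono ((henergy (n + 1)).add hinner)
    (((henergy n).add hweight).add hquotient)
    fun ω => (h.path ω).energy_succ_le hα hσ₀ hσ₁ hg hg_nonneg hlip n
  rw [integral_add' (henergy (n + 1)) hinner, integral_add' ((henergy n).add hweight) hquotient,
    integral_add' (henergy n) hweight] at hdescent
  simp only [integral_const_mul] at hdescent
  rw [h.integral_inner_inv_smul_gradient hgrad] at hdescent
  linarith [mul_le_mul_of_nonneg_left (h.integral_energyWeight_mul_le hσ₀ hσ₁ hgrad n) hα]

theorem summable_integral_norm_gradient_sq_div (h : StochasticAdaGradNorm P ℱ α σ₀ σ₁ s₀ g G θ S)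
    (hα : 0 < α) (hσ₀ : 0 ≤ σ₀) (hσ₁ : 0 ≤ σ₁) (hg : Differentiable ℝ g)
    (hg_nonneg : ∀ x, 0 ≤ g x) (hlip : LipschitzWith L (∇ g)) :
    Summable fun n => ∫ ω, ‖∇ g (θ n ω)‖ ^ 2 / S n ω ∂P := by
  refine (summable_mul_left_iff (a := 3 * α / 8) (by positivity)).1
    (summable_of_succ_add_le
      (a := fun n => ∫ ω, adaGradEnergy α L σ₀ σ₁ (g (θ n ω)) ‖∇ g (θ n ω)‖ (S n ω) ∂P)
      (fun n => ?_) (fun n => ?_)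
      (h.integral_energy_succ_add_le hα.le hσ₀ hσ₁ hg hg_nonneg hlip))
  · exact integral_nonneg fun ω =>
      adaGradEnergy_nonneg hα.le L.2 hσ₀ hσ₁ (hg_nonneg _) ((h.path ω).S_pos n).le
  · refine mul_nonneg (by positivity) (integral_nonneg fun ω => ?_)
    have := (h.path ω).S_pos n
    positivity

theorem summable_integral_cutoff_sq_div_mul (h : StochasticAdaGradNorm P ℱ α σ₀ σ₁ s₀ g G θ S)
    (hσ₀ : 0 ≤ σ₀) (hσ₁ : 0 ≤ σ₁) (hg : Continuous (∇ g))
    (hsum : Summable fun n => ∫ ω, ‖∇ g (θ n ω)‖ ^ 2 / S n ω ∂P) {δ : ℝ} (hδ : 0 ≤ δ) :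
    Summable fun n => ∫ ω, gradientCutoff g δ (θ n ω) ^ 2 / S n ω * ‖G n ω‖ ^ 2 ∂P := by
  have hS (n : ℕ) (ω : Ω) : 0 < S n ω := (h.path ω).S_pos n
  have hweight (n : ℕ) (ω : Ω) : 0 ≤ gradientCutoff g δ (θ n ω) ^ 2 / S n ω :=
    div_nonneg (sq_nonneg _) (hS n ω).le
  refine .of_nonneg_of_le
    (fun n => integral_nonneg fun ω => mul_nonneg (hweight n ω) (sq_nonneg _))
    (fun n => h.integral_mul_norm_G_sq_le hg (h.boundedMeasurable_cutoff_sq_div hg δ n)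
      (hweight n) (c := σ₀ + σ₁ / δ ^ 2) fun ω => ?_) (hsum.mul_left _)
  have hS' := hS n ω
  calc gradientCutoff g δ (θ n ω) ^ 2 / S n ω * (σ₀ * ‖∇ g (θ n ω)‖ ^ 2 + σ₁)
      = (gradientCutoff g δ (θ n ω) ^ 2 * (σ₀ * ‖∇ g (θ n ω)‖ ^ 2)
          + gradientCutoff g δ (θ n ω) ^ 2 * σ₁) / S n ω := by ring
    _ ≤ (1 * (σ₀ * ‖∇ g (θ n ω)‖ ^ 2) + ‖∇ g (θ n ω)‖ ^ 2 / δ ^ 2 * σ₁) / S n ω := by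
        gcongr
        · exact gradientCutoff_sq_le_one hδ _
        · exact gradientCutoff_sq_le hδ _
    _ = (σ₀ + σ₁ / δ ^ 2) * (‖∇ g (θ n ω)‖ ^ 2 / S n ω) := by ring

theorem condExp_G_sub_gradient (h : StochasticAdaGradNorm P ℱ α σ₀ σ₁ s₀ g G θ S)
    (hg : Continuous (∇ g)) (n : ℕ) :
    P[fun ω => G n ω - ∇ g (θ n ω) | ℱ n] =ᵐ[P] 0 := by
  have hgrad := (h.boundedMeasurable_θ n).comp hg
  refine (condExp_sub ((h.memLp_G n).integrable one_le_two) (hgrad.integrable (ℱ.le n)) _).trans ?_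
  rw [condExp_of_stronglyMeasurable (ℱ.le n) hgrad.1 (hgrad.integrable (ℱ.le n))]
  filter_upwards [h.condExp_G n] with ω hω
  simp [hω]

theorem squareSummableMartingaleDifference_cutoffNoise
    (h : StochasticAdaGradNorm P ℱ α σ₀ σ₁ s₀ g G θ S) (hσ₀ : 0 ≤ σ₀) (hσ₁ : 0 ≤ σ₁)
    (hg : Continuous (∇ g)) (hsum : Summable fun n => ∫ ω, ‖∇ g (θ n ω)‖ ^ 2 / S n ω ∂P)
    {δ : ℝ} (hδ : 0 ≤ δ) :
    SquareSummableMartingaleDifference P ℱ fun n ω =>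
      cutoffNoise g δ (G · ω) (θ · ω) (S · ω) n := by
  have hfactor (n : ℕ) : (fun ω => cutoffNoise g δ (G · ω) (θ · ω) (S · ω) n) = fun ω =>
      (gradientCutoff g δ (θ n ω) * (√(S n ω))⁻¹) • (G n ω - ∇ g (θ n ω)) := by
    simp only [cutoffNoise, scaledNoise, smul_smul]
  have hweight (n : ℕ) := h.boundedMeasurable_cutoff_mul hg δ n
  have hgrad (n : ℕ) := (h.boundedMeasurable_θ n).comp hg
  have hnoise (n : ℕ) := (h.memLp_G n).sub ((hgrad n).memLp (ℱ.le n) 2)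
  have hmemLp (n : ℕ) : MemLp (fun ω => cutoffNoise g δ (G · ω) (θ · ω) (S · ω) n) 2 P := by
    rw [hfactor]
    exact (hweight n).memLp_smul (ℱ.le n) (hnoise n)
  refine ⟨fun n => ?_, hmemLp, fun n => ?_, ?_⟩
  · rw [hfactor]
    exact ((hweight n).1.mono (ℱ.mono n.le_succ)).smul
      ((h.stronglyMeasurable_G n).sub ((hgrad n).1.mono (ℱ.mono n.le_succ)))
  · rw [hfactor]
    refine ((hweight n).condExp_smul (ℱ.le n) ((hnoise n).integrable one_le_two)
      (h.condExp_G_sub_gradient hg n)).trans (ae_of_all _ fun ω => smul_zero _)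
  · have hcutoff (n : ℕ) := ((h.boundedMeasurable_cutoff_sq_div hg δ n).integrable_mul (ℱ.le n)
      (h.memLp_G n).norm.integrable_sq).const_mul 2
    have hquotient (n : ℕ) := ((h.boundedMeasurable_norm_gradient_sq_div hg n).integrable
      (P := P) (ℱ.le n)).const_mul 2
    refine .of_nonneg_of_le (fun n => integral_nonneg fun ω => sq_nonneg _) (fun n => ?_)
      (((h.summable_integral_cutoff_sq_div_mul hσ₀ hσ₁ hg hsum hδ).mul_left 2).add
        (hsum.mul_left 2))
    rw [← integral_const_mul, ← integral_const_mul, ← integral_add (hcutoff n) (hquotient n)]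
    exact integral_mono (hmemLp n).norm.integrable_sq ((hcutoff n).add (hquotient n))
      fun ω => (h.path ω).norm_cutoffNoise_sq_le hδ n

theorem ae_excursionSumsVanish_norm_sq_div (h : StochasticAdaGradNorm P ℱ α σ₀ σ₁ s₀ g G θ S)
    (hσ₀ : 0 ≤ σ₀) (hσ₁ : 0 ≤ σ₁) (hg : Continuous (∇ g))
    (hsum : Summable fun n => ∫ ω, ‖∇ g (θ n ω)‖ ^ 2 / S n ω ∂P) {δ : ℝ} (hδ : 0 < δ) :
    ∀ᵐ ω ∂P, ExcursionSumsVanish (θ · ω) {x | δ ≤ ‖∇ g x‖} fun n => ‖G n ω‖ ^ 2 / S n ω := by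
  have hsummable := ae_summable_of_summable_integral
    (fun n ω => mul_nonneg (div_nonneg (sq_nonneg _) ((h.path ω).S_pos n).le) (sq_nonneg _))
    (fun n => (h.boundedMeasurable_cutoff_sq_div hg δ n).integrable_mul (ℱ.le n)
      (h.memLp_G n).norm.integrable_sq)
    (h.summable_integral_cutoff_sq_div_mul hσ₀ hσ₁ hg hsum hδ.le)
  filter_upwards [hsummable] with ω hω
  refine .of_cauchySeq hω.hasSum.tendsto_sum_nat.cauchySeq fun n hn => ?_
  rw [gradientCutoff_of_le hδ hn, one_pow, one_div_mul_eq_div]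

theorem ae_excursionSumsVanish_scaledNoise (h : StochasticAdaGradNorm P ℱ α σ₀ σ₁ s₀ g G θ S)
    (hσ₀ : 0 ≤ σ₀) (hσ₁ : 0 ≤ σ₁) (hg : Continuous (∇ g))
    (hsum : Summable fun n => ∫ ω, ‖∇ g (θ n ω)‖ ^ 2 / S n ω ∂P) {δ : ℝ} (hδ : 0 < δ) :
    ∀ᵐ ω ∂P, ExcursionSumsVanish (θ · ω) {x | δ ≤ ‖∇ g x‖}
      (scaledNoise g (G · ω) (θ · ω) (S · ω)) := by
  have : FiniteDimensional ℝ E := .of_locallyCompactSpace ℝ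
  filter_upwards [(h.squareSummableMartingaleDifference_cutoffNoise hσ₀ hσ₁ hg hsum
    hδ.le).ae_cauchySeq_sum] with ω hω
  exact .of_cauchySeq hω fun n hn => cutoffNoise_of_le hδ hn

theorem ae_excursionSumsVanish_inner_scaledNoise
    (h : StochasticAdaGradNorm P ℱ α σ₀ σ₁ s₀ g G θ S) (hσ₀ : 0 ≤ σ₀) (hσ₁ : 0 ≤ σ₁)
    (hg : Continuous (∇ g)) (hsum : Summable fun n => ∫ ω, ‖∇ g (θ n ω)‖ ^ 2 / S n ω ∂P)
    {δ M : ℝ} (hδ : 0 < δ) (hM : 0 < M) :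
    ∀ᵐ ω ∂P, ExcursionSumsVanish (θ · ω) (gradientShell g δ M) fun n =>
      ⟪∇ g (θ n ω), scaledNoise g (G · ω) (θ · ω) (S · ω) n⟫ := by
  have hfield := (h.squareSummableMartingaleDifference_cutoffNoise hσ₀ hσ₁ hg hsum
    hδ.le).predictable_inner (X := fun n ω => truncatedGradient g M (θ n ω))
    (fun n => (continuous_truncatedGradient hg hM).comp_stronglyMeasurable
      (h.boundedMeasurable_θ n).1) fun _ _ => norm_truncatedGradient_le hM _
  filter_upwards [hfield.ae_cauchySeq_sum_real] with ω hω
  refine .of_cauchySeq hω fun n hn => ?_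
  rw [truncatedGradient_of_le hM hn.2, cutoffNoise_of_le hδ hn.1]

theorem ae_negligibleNoise (h : StochasticAdaGradNorm P ℱ α σ₀ σ₁ s₀ g G θ S)
    (hσ₀ : 0 ≤ σ₀) (hσ₁ : 0 ≤ σ₁) (hg : Continuous (∇ g))
    (hsum : Summable fun n => ∫ ω, ‖∇ g (θ n ω)‖ ^ 2 / S n ω ∂P) :
    ∀ᵐ ω ∂P, NegligibleNoise g (G · ω) (θ · ω) (S · ω) := by
  have hlevel (j : ℕ) : (0 : ℝ) < 1 / (j + 1) := Nat.one_div_pos_of_nat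
  filter_upwards [
    ae_summable_of_summable_integral
      (fun n ω => div_nonneg (sq_nonneg _) ((h.path ω).S_pos n).le)
      (fun n => (h.boundedMeasurable_norm_gradient_sq_div hg n).integrable (ℱ.le n)) hsum,
    ae_all_iff.2 fun j => h.ae_excursionSumsVanish_norm_sq_div hσ₀ hσ₁ hg hsum (hlevel j),
    ae_all_iff.2 fun j => h.ae_excursionSumsVanish_scaledNoise hσ₀ hσ₁ hg hsum (hlevel j),
    ae_all_iff.2 fun j => ae_all_iff.2 fun i : ℕ =>
      h.ae_excursionSumsVanish_inner_scaledNoise hσ₀ hσ₁ hg hsum (hlevel j) i.cast_add_one_pos]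
    with ω hsummable hnorm_sq hnoise hinner
  refine ⟨hsummable, fun δ hδ => ?_, fun δ hδ => ?_, fun δ hδ M => ?_⟩
  all_goals obtain ⟨j, hj⟩ := exists_nat_one_div_lt hδ
  · exact (hnorm_sq j).mono fun x hx => hj.le.trans hx
  · exact (hnoise j).mono fun x hx => hj.le.trans hx
  · obtain ⟨i, hi⟩ := exists_nat_ge M
    exact (hinner j i).mono fun x hx => ⟨hj.le.trans hx.1, hx.2.trans (by linarith)⟩

theorem ae_tendsto_norm_gradient (h : StochasticAdaGradNorm P ℱ α σ₀ σ₁ s₀ g G θ S)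
    (hα : 0 < α) (hσ₀ : 0 ≤ σ₀) (hσ₁ : 0 ≤ σ₁) (hg : Differentiable ℝ g)
    (hg_nonneg : ∀ x, 0 ≤ g x) (hlip : LipschitzWith L (∇ g))
    {δ : ℝ} (hδ : 0 < δ) (hflat : ∀ᶠ x in Bornology.cobounded E, δ < ‖∇ g x‖)
    (hsard : IsNowhereDense {y | ∃ x, ∇ g x = 0 ∧ g x = y})
    {δ₀ δ₁ : ℝ} (hδ₀ : 0 < δ₀)
    (hsharp : ∀ᵐ ω ∂P, ∀ n, ‖∇ g (θ n ω)‖ ≤ δ₀ → ‖G n ω‖ ≤ δ₁) :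
    ∀ᵐ ω ∂P, Tendsto (fun n => ‖∇ g (θ n ω)‖) atTop (𝓝 0) := by
  have hcompact := isCompact_sublevel_of_eventually_lt_norm_gradient hg hg_nonneg hδ hflat
  obtain ⟨c, hc⟩ := exists_le_of_norm_gradient_le hg hflat
  have hsum := h.summable_integral_norm_gradient_sq_div hα hσ₀ hσ₁ hg hg_nonneg hlip
  filter_upwards [h.ae_negligibleNoise hσ₀ hσ₁ hlip.continuous hsum, hsharp] with ω hnoise hsharp_ω
  exact (h.path ω).tendsto_norm_gradient hα.le hg hlip hcompact hsard hδ hc hδ₀ hsharp_ω hnoise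

end StochasticAdaGradNorm

end StochasticAdaGradNorm

theorem adagrad_norm_almost_sure_convergence_general
    {E : Type*} [NormedAddCommGroup E] [InnerProductSpace ℝ E] [ProperSpace E]
    {Ω : Type*} {m0 : MeasurableSpace Ω} (P : Measure Ω) [IsFiniteMeasure P]
    (ℱ : Filtration ℕ m0) (g : E → ℝ) (L : ℝ≥0) (σ₀ σ₁ α₀ S₀ R δt δ₀ δ₁ : ℝ)
    (hσ₀ : 0 ≤ σ₀) (hσ₁ : 0 ≤ σ₁) (hα₀ : 0 < α₀) (hS₀ : 0 < S₀) (hδ₀ : 0 < δ₀)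
    (hg_diff : Differentiable ℝ g) (hg_nonneg : ∀ x, 0 ≤ g x)
    (hg_smooth : LipschitzWith L (∇ g)) (hδt : 0 < δt)
    (hflat : ∀ᶠ x in Bornology.cobounded E, δt < ‖∇ g x‖)
    (hg_sard : IsNowhereDense {y | ∃ x, ∇ g x = 0 ∧ g x = y})
    (G θ : ℕ → Ω → E) (S : ℕ → Ω → ℝ)
    (hG_meas : ∀ n, 1 ≤ n → StronglyMeasurable[ℱ n] (G n))
    (hG_sq_int : ∀ n, 1 ≤ n → Integrable (fun ω => ‖G n ω‖ ^ 2) P)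
    (hθ_init_meas : StronglyMeasurable[ℱ 0] (θ 1)) (hθ_init : ∀ ω, ‖θ 1 ω‖ ≤ R)
    (hS_init_meas : StronglyMeasurable[ℱ 0] (S 0)) (hS_init : ∀ ω, S₀ ≤ S 0 ω)
    (hS_rec : ∀ n, 1 ≤ n → ∀ ω, S n ω = S (n - 1) ω + ‖G n ω‖ ^ 2)
    (hθ_rec : ∀ n, 1 ≤ n → ∀ ω, θ (n + 1) ω = θ n ω - (α₀ / √(S n ω)) • G n ω)
    (hG_unbiased : ∀ n, 1 ≤ n → P[G n | ℱ (n - 1)] =ᵐ[P] fun ω => ∇ g (θ n ω))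
    (hG_var : ∀ n, 1 ≤ n → ∀ᵐ ω ∂P,
      (P[fun ω => ‖G n ω‖ ^ 2 | ℱ (n - 1)]) ω ≤ σ₀ * ‖∇ g (θ n ω)‖ ^ 2 + σ₁)
    (hG_sharp : ∀ᵐ ω ∂P, ∀ n, 1 ≤ n → ‖∇ g (θ n ω)‖ ≤ δ₀ → ‖G n ω‖ ≤ δ₁) :
    ∀ᵐ ω ∂P, Tendsto (fun n => ‖∇ g (θ n ω)‖) atTop (𝓝 0) := by
  have hadagrad : StochasticAdaGradNorm P ℱ α₀ σ₀ σ₁ S₀ g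
      (fun n => G (n + 1)) (fun n => θ (n + 1)) S :=
    { path := fun ω => ⟨hS₀.trans_le (hS_init ω), fun n => hS_rec _ n.succ_pos ω,
        fun n => hθ_rec _ n.succ_pos ω⟩
      s₀_pos := hS₀
      s₀_le := hS_init
      stronglyMeasurable_S_zero := hS_init_meas
      boundedMeasurable_θ_zero := ⟨hθ_init_meas, R, hθ_init⟩
      stronglyMeasurable_G := fun n => hG_meas _ n.succ_pos
      memLp_G := fun n => (memLp_two_iff_integrable_sq_norm
        ((hG_meas _ n.succ_pos).mono (ℱ.le _)).aestronglyMeasurable).2 (hG_sq_int _ n.succ_pos)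
      condExp_G := fun n => hG_unbiased _ n.succ_pos
      condExp_norm_G_sq_le := fun n => hG_var _ n.succ_pos }
  filter_upwards [hadagrad.ae_tendsto_norm_gradient hα₀ hσ₀ hσ₁ hg_diff hg_nonneg hg_smooth hδt
    hflat hg_sard hδ₀ (hG_sharp.mono fun ω hω n => hω _ n.succ_pos)] with ω hω
  exact (tendsto_add_atTop_iff_nat 1).1 hω

/-- Theorem 5.2 (Almost sure convergence of AdaGrad-Norm):
`lim_{n→∞} ‖∇g(θ_n)‖ = 0` almost surely. -/
theorem adagrad_norm_almost_sure_convergence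
    {d : ℕ} {Ω : Type*} {m0 : MeasurableSpace Ω} (P : Measure Ω) [IsProbabilityMeasure P]
    (ℱ : Filtration ℕ m0)
    (g : EuclideanSpace ℝ (Fin d) → ℝ)
    (L σ₀ σ₁ α₀ S₀ δt δ₀ δ₁ : ℝ)
    (hL : 0 < L) (hσ₀ : 0 ≤ σ₀) (hσ₁ : 0 ≤ σ₁) (hα₀ : 0 < α₀) (hS₀ : 0 < S₀)
    (hδ₀ : 0 < δ₀) (hδ₁ : 0 < δ₁)
    (hg_diff : ContDiff ℝ 1 g)
    (hg_nonneg : ∀ x, 0 ≤ g x)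
    (hg_smooth : ∀ x y, ‖gradient g x - gradient g y‖ ≤ L * ‖x - y‖)
    (hδt : 0 < δt)
    (hflat : ∀ᶠ x in Bornology.cobounded (EuclideanSpace ℝ (Fin d)),
      δt < ‖gradient g x‖)
    (hg_coercive : Tendsto g (Bornology.cobounded (EuclideanSpace ℝ (Fin d))) atTop)
    (hg_sard : interior (closure {y : ℝ |
      ∃ x : EuclideanSpace ℝ (Fin d), gradient g x = 0 ∧ g x = y}) = ∅)
    (θ₁ : EuclideanSpace ℝ (Fin d))
    (G θ : ℕ → Ω → EuclideanSpace ℝ (Fin d))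
    (S : ℕ → Ω → ℝ)
    (hG_meas : ∀ n, 1 ≤ n → StronglyMeasurable[ℱ n] (G n))
    (hG_int : ∀ n, 1 ≤ n → Integrable (G n) P)
    (hG_sq_int : ∀ n, 1 ≤ n → Integrable (fun ω => ‖G n ω‖ ^ 2) P)
    (hθ_adapted : ∀ n, 1 ≤ n → StronglyMeasurable[ℱ (n - 1)] (θ n))
    (hθ_init : ∀ ω, θ 1 ω = θ₁)
    (hS_init : ∀ ω, S 0 ω = S₀)
    (hS_rec : ∀ n, 1 ≤ n → ∀ ω, S n ω = S (n - 1) ω + ‖G n ω‖ ^ 2)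
    (hθ_rec : ∀ n, 1 ≤ n → ∀ ω,
      θ (n + 1) ω = θ n ω - (α₀ / Real.sqrt (S n ω)) • G n ω)
    (hG_unbiased : ∀ n, 1 ≤ n →
      P[G n | ℱ (n - 1)] =ᵐ[P] fun ω => gradient g (θ n ω))
    (hG_var : ∀ n, 1 ≤ n → ∀ᵐ ω ∂P,
      (P[fun ω => ‖G n ω‖ ^ 2 | ℱ (n - 1)]) ω ≤ σ₀ * ‖gradient g (θ n ω)‖ ^ 2 + σ₁)
    (hG_sharp : ∀ᵐ ω ∂P, ∀ n, 1 ≤ n →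
      ‖gradient g (θ n ω)‖ ≤ δ₀ → ‖G n ω‖ ≤ δ₁) :
    ∀ᵐ ω ∂P, Tendsto (fun n => ‖gradient g (θ n ω)‖) atTop (𝓝 0) := by
  have hlip : LipschitzWith ⟨L, hL.le⟩ (∇ g) :=
    .of_dist_le_mul fun x y => by simp only [dist_eq_norm]; exact hg_smooth x y
  exact adagrad_norm_almost_sure_convergence_general P ℱ g ⟨L, hL.le⟩ σ₀ σ₁ α₀ S₀ ‖θ₁‖ δt δ₀ δ₁
    hσ₀ hσ₁ hα₀ hS₀ hδ₀ (hg_diff.differentiable one_ne_zero) hg_nonneg hlip hδt hflat hg_sard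
    G θ S hG_meas hG_sq_int (hθ_adapted 1 le_rfl) (fun ω => (congrArg norm (hθ_init ω)).le)
    (funext hS_init ▸ stronglyMeasurable_const) (fun ω => (hS_init ω).ge) hS_rec hθ_rec
    hG_unbiased hG_var hG_sharp
end
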